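/- arXiv:1904.03533 — 6 statements merged into one kernel-verified Lean document; each statement's English description precedes it below -/
import Mathlib

section
/- (Marcus–Spielman–Srivastava, weak-Ramanujan biregular graphs) For all integers k₁, k₂ ≥ 3 and every N there exists a finite connected bipartite (k₁,k₂)-biregular graph X with more than N vertices such that every eigenvalue λ of the adjacency matrix of X satisfies |λ| = √(k₁k₂) or |λ| ≤ √(k₁−1) + √(k₂−1). -/
open Matrix
open scoped Classical

section BorderedDeterminant

variable {V K : Type*} [Fintype V] [DecidableEq V] [CommRing K]

theorem Matrix.det_updateRow_eq_sum (A : Matrix V V K) (v : V) (r : V → K) :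
    (A.updateRow v r).det = ∑ j, A.adjugate j v * r j := by
  rw [← cramer_transpose_apply, cramer_eq_adjugate_mulVec, ← adjugate_transpose]
  rfl

theorem Matrix.det_updateCol_eq_sum (A : Matrix V V K) (v : V) (c : V → K) :
    (A.updateCol v c).det = ∑ i, A.adjugate v i * c i := by
  rw [← cramer_apply, cramer_eq_adjugate_mulVec]
  rfl

theorem Matrix.det_updateCol_single_of_row (A : Matrix V V K) (w : V)
    (h : A w = Pi.single w 1) : (A.updateCol w (Pi.single w 1)).det = A.det := by
  rw [det_updateCol_eq_sum]
  simp only [Pi.single_apply, mul_ite, mul_one, mul_zero, Finset.sum_ite_eq', Finset.mem_univ,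
    if_true]
  rw [adjugate_apply, ← h, updateRow_eq_self]

theorem Matrix.adjugate_updateRow_single (N : Matrix V V K) {v : V} (hN : N v = Pi.single v 1)
    {w : V} (u : V) (hw : w ≠ v) (hu : u ≠ v) :
    (N.updateRow v (Pi.single w 1)).adjugate v u = - N.adjugate w u := by
  rw [adjugate_apply, adjugate_apply]
  have h := det_permute (Equiv.swap u v) (N.updateRow u (Pi.single w 1))
  rw [Equiv.Perm.sign_swap hu] at h
  have e : (N.updateRow u (Pi.single w 1)).submatrix (Equiv.swap u v) id =
      (N.updateRow v (Pi.single w 1)).updateRow u (Pi.single v 1) := by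
    ext i j
    rcases eq_or_ne i u with rfl | hi
    · simp [updateRow_apply, hN, hu.symm]
    · rcases eq_or_ne i v with rfl | hi'
      · simp [updateRow_apply, hi]
      · simp [updateRow_apply, hi, hi', Equiv.swap_apply_of_ne_of_ne hi hi']
  rw [e] at h
  simpa using h

/-- Expansion of a symmetrically bordered determinant along its border. -/
theorem Matrix.det_bordered (N M : Matrix V V K) {v : V} (hN : N v = Pi.single v 1)
    (x : K) (b : V → K) (hb : b v = 0) (hvv : M v v = x) (hrow : ∀ j, j ≠ v → M v j = - b j)
    (hcol : ∀ i, i ≠ v → M i v = - b i)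
    (hM : ∀ i j, i ≠ v → j ≠ v → M i j = N i j) :
    M.det = x * N.det - ∑ w, ∑ u, b w * b u * N.adjugate w u := by
  have key : ∀ w, (M.updateRow v (Pi.single w 1)).det =
      if w = v then N.det else ∑ u, b u * N.adjugate w u := by
    intro w
    have e : M.updateRow v (Pi.single w 1) =
        (N.updateRow v (Pi.single w 1)).updateCol v
          (fun i => if i = v then Pi.single (M := fun _ => K) w 1 v else - b i) := by
      ext i j
      rcases eq_or_ne i v with rfl | hi
      · rcases eq_or_ne j i with rfl | hj
        · simp
        · simp [hj]
      · rcases eq_or_ne j v with rfl | hj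
        · simp [hi, hcol]
        · simp [hi, hj, hM]
    rw [e, det_updateCol_eq_sum]
    split_ifs with hw
    · subst hw
      rw [Finset.sum_eq_single w]
      · rw [← hN, updateRow_eq_self, adjugate_apply, ← hN, updateRow_eq_self]; simp [hN]
      · intro i _ hi
        have : (N.updateRow i (N w)).det = 0 := det_updateRow_eq_zero hi.symm
        rw [← hN, updateRow_eq_self, adjugate_apply, ← hN, this, zero_mul]
      · simp
    · refine Finset.sum_congr rfl fun u _ => ?_
      rcases eq_or_ne u v with rfl | hu
      · simp [hb, Ne.symm hw]
      · rw [adjugate_updateRow_single N hN u hw hu]; simp [hu]; ring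
  have h1 : M.det = ∑ j, (M.updateRow v (Pi.single j 1)).det * M v j := by
    conv_lhs => rw [← M.updateRow_eq_self v]
    rw [det_updateRow_eq_sum]
    simp only [adjugate_apply]
  rw [h1]
  simp only [key]
  have h2 : ∀ j, (if j = v then N.det else ∑ u, b u * N.adjugate j u) * M v j =
      (if j = v then x * N.det else 0) - ∑ u, b j * b u * N.adjugate j u := by
    intro j
    split_ifs with hj
    · subst hj; simp [hb, hvv, mul_comm]
    · rw [hrow j hj, Finset.sum_mul, zero_sub, ← Finset.sum_neg_distrib]
      exact Finset.sum_congr rfl fun u _ => by ring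
  simp only [h2, Finset.sum_sub_distrib, Finset.sum_ite_eq', Finset.mem_univ, if_true]

end BorderedDeterminant

section SignedMatrices

/-- The sign attached to a Boolean. -/
def boolSign (b : Bool) : ℝ := if b then 1 else -1

theorem boolSign_not (b : Bool) : boolSign (!b) = - boolSign b := by
  cases b <;> simp [boolSign]

theorem boolSign_mul_self (b : Bool) : boolSign b * boolSign b = 1 := by
  cases b <;> simp [boolSign]

variable {V : Type*} [Fintype V] [DecidableEq V]

/-- The adjacency matrix of `G` signed by `s`. -/
noncomputable def signedAdj (G : SimpleGraph V) (s : Sym2 V → Bool) : Matrix V V ℝ :=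
  of fun i j => if G.Adj i j then boolSign (s s(i, j)) else 0

/-- The matrix `x - A_s`, with the vertices outside `S` decoupled from the others. -/
noncomputable def signedMinor (G : SimpleGraph V) (x : ℝ) (S : Finset V) (s : Sym2 V → Bool) :
    Matrix V V ℝ :=
  of fun i j => if i ∈ S ∧ j ∈ S then (if i = j then x else - signedAdj G s i j)
    else if i = j then 1 else 0

/-- The sum over all signings of the characteristic polynomial of the signed adjacency matrix on
`S`, evaluated at `x`: a positive multiple of the matching polynomial of the induced subgraph. -/
noncomputable def signedDetSum (G : SimpleGraph V) (x : ℝ) (S : Finset V) : ℝ :=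
  ∑ s : Sym2 V → Bool, (signedMinor G x S s).det

variable (G : SimpleGraph V) (x : ℝ)

omit [Fintype V] in
theorem signedMinor_row_of_notMem {S : Finset V} {v : V} (hv : v ∉ S) (s : Sym2 V → Bool) :
    signedMinor G x S s v = Pi.single v 1 := by
  ext j
  simp [signedMinor, hv, Pi.single_apply, eq_comm]

theorem signedDetSum_empty_pos : 0 < signedDetSum G x ∅ := by
  have : ∀ s, signedMinor G x ∅ s = 1 := by
    intro s; ext i j; simp [signedMinor, Matrix.one_apply]
  simp [signedDetSum, this]

omit [Fintype V] in
theorem signedMinor_congr {S : Finset V} {s t : Sym2 V → Bool}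
    (h : ∀ i ∈ S, ∀ j ∈ S, s s(i, j) = t s(i, j)) : signedMinor G x S s = signedMinor G x S t := by
  ext i j
  simp only [signedMinor, signedAdj, of_apply]
  by_cases hi : i ∈ S
  · by_cases hj : j ∈ S
    · simp [h i hi j hj]
    · simp [hj]
  · simp [hi]

theorem signedMinor_adjugate_self (S : Finset V) (s : Sym2 V → Bool) (w : V) :
    (signedMinor G x S s).adjugate w w = (signedMinor G x (S.erase w) s).det := by
  rw [adjugate_apply, ← det_updateCol_single_of_row _ w (by simp)]
  congr 1
  ext i j
  rcases eq_or_ne i w with rfl | hi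
  · rcases eq_or_ne j i with rfl | hj
    · simp [signedMinor]
    · simp [signedMinor, hj, Ne.symm hj]
  · rcases eq_or_ne j w with rfl | hj
    · simp [signedMinor, hi]
    · simp [signedMinor, hi, hj]

theorem sum_signed_cross_eq_zero {S : Finset V} {v u w : V} (hv : v ∉ S) (huw : u ≠ w) :
    ∑ s : Sym2 V → Bool,
      boolSign (s s(v, w)) * boolSign (s s(v, u)) * (signedMinor G x S s).adjugate w u = 0 := by
  let flip : (Sym2 V → Bool) → (Sym2 V → Bool) := fun s => Function.update s s(v, w) (!s s(v, w))
  have hflip : Function.Involutive flip := by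
    intro s
    ext e
    rcases eq_or_ne e s(v, w) with rfl | he
    · simp [flip]
    · simp [flip, he]
  let φ : (Sym2 V → Bool) ≃ (Sym2 V → Bool) := hflip.toPerm
  have h := Equiv.sum_comp φ (fun s : Sym2 V → Bool =>
    boolSign (s s(v, w)) * boolSign (s s(v, u)) * (signedMinor G x S s).adjugate w u)
  have hne : s(v, u) ≠ s(v, w) := by
    intro h; exact huw (Sym2.congr_right.1 h)
  have h' : ∀ s, boolSign (φ s s(v, w)) * boolSign (φ s s(v, u)) *
      (signedMinor G x S (φ s)).adjugate w u =
      - (boolSign (s s(v, w)) * boolSign (s s(v, u)) * (signedMinor G x S s).adjugate w u) := by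
    intro s
    have e1 : φ s s(v, w) = !s s(v, w) := by simp [φ, flip]
    have e2 : φ s s(v, u) = s s(v, u) := by simp [φ, flip, hne]
    have e3 : signedMinor G x S (φ s) = signedMinor G x S s := by
      refine signedMinor_congr G x fun i hi j hj => ?_
      have : s(i, j) ≠ s(v, w) := by
        intro h
        have : v ∈ s(i, j) := by rw [h]; simp
        rcases Sym2.mem_iff.1 this with rfl | rfl <;> exact hv ‹_›
      simp [φ, flip, this]
    rw [e1, e2, e3, boolSign_not]; ring
  simp only [h', Finset.sum_neg_distrib] at h
  linarith

/-- The vertex recursion of the matching polynomial. -/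
theorem signedDetSum_recursion {S : Finset V} {v : V} (hv : v ∈ S) :
    signedDetSum G x S = x * signedDetSum G x (S.erase v) -
      ∑ w ∈ (S.erase v).filter (G.Adj v), signedDetSum G x ((S.erase v).erase w) := by
  set T := S.erase v with hT
  have hvT : v ∉ T := by simp [hT]
  let b : (Sym2 V → Bool) → V → ℝ := fun s w => if w ∈ T then signedAdj G s v w else 0
  have hdet : ∀ s, (signedMinor G x S s).det = x * (signedMinor G x T s).det -
      ∑ w, ∑ u, b s w * b s u * (signedMinor G x T s).adjugate w u := by
    intro s
    refine det_bordered _ _ (signedMinor_row_of_notMem G x hvT s) x (b s) ?_ ?_ ?_ ?_ ?_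
    · simp [b, hvT]
    · simp [signedMinor, hv]
    · intro j hj
      by_cases hjS : j ∈ S <;> simp [signedMinor, hv, b, hT, hj, Ne.symm hj, hjS]
    · intro i hi
      by_cases hiS : i ∈ S <;> simp [signedMinor, hv, b, hT, hi, hiS, signedAdj, G.adj_comm v i,
        Sym2.eq_swap (a := v) (b := i)]
    · intro i j hi hj
      simp [signedMinor, hT, hi, hj]
  have hcross : ∀ w u, ∑ s, b s w * b s u * (signedMinor G x T s).adjugate w u =
      if u = w then (if w ∈ T.filter (G.Adj v) then signedDetSum G x (T.erase w) else 0)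
      else 0 := by
    intro w u
    split_ifs with huw hw
    · subst huw
      obtain ⟨hw1, hw2⟩ := Finset.mem_filter.1 hw
      refine Finset.sum_congr rfl fun s _ => ?_
      rw [signedMinor_adjugate_self]
      simp [b, hw1, signedAdj, hw2, boolSign_mul_self]
    · subst huw
      refine Finset.sum_eq_zero fun s _ => ?_
      have : b s u = 0 := by
        simp only [Finset.mem_filter, not_and] at hw
        simp only [b, signedAdj, of_apply]
        split_ifs with h1 h2
        · exact absurd h2 (hw h1)
        · rfl
        · rfl
      simp [this]
    · have hb : ∀ s t, b s t = (if t ∈ T ∧ G.Adj v t then 1 else 0) * boolSign (s s(v, t)) := by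
        intro s t
        simp only [b, signedAdj, of_apply, ite_and]
        split_ifs <;> simp
      have := sum_signed_cross_eq_zero G x hvT huw
      calc _ = ((if w ∈ T ∧ G.Adj v w then 1 else 0) * (if u ∈ T ∧ G.Adj v u then 1 else 0)) *
          ∑ s : Sym2 V → Bool, boolSign (s s(v, w)) * boolSign (s s(v, u)) *
            (signedMinor G x T s).adjugate w u := by
            rw [Finset.mul_sum]
            refine Finset.sum_congr rfl fun s _ => ?_
            rw [hb, hb]; ring
        _ = 0 := by rw [this, mul_zero]
  have : signedDetSum G x S = x * signedDetSum G x T -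
      ∑ w, ∑ u, ∑ s, b s w * b s u * (signedMinor G x T s).adjugate w u := by
    unfold signedDetSum
    simp only [hdet, Finset.sum_sub_distrib, Finset.mul_sum]
    congr 1
    rw [Finset.sum_comm]
    exact Finset.sum_congr rfl fun w _ => Finset.sum_comm
  rw [this]
  simp only [hcross, Finset.sum_ite_eq', Finset.mem_univ, if_true, Finset.sum_ite_mem,
    Finset.univ_inter]

/-- A biregular form of the Heilmann–Lieb bound. -/
theorem signedDetSum_pos {β : V → ℝ} {ρ : ℝ} (hβ : ∀ v, 0 < β v)
    (hadj : ∀ v w, G.Adj v w → β v + β w = ρ) (hprod : ∀ v, 1 < β v * (ρ - β v))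
    (hdeg : ∀ v, ((Finset.univ.filter (G.Adj v)).card : ℝ) = β v ^ 2 + 1)
    (hx : ρ ≤ x) (S : Finset V) :
    0 < signedDetSum G x S ∧ ∀ v ∈ S, (∃ w, G.Adj v w ∧ w ∉ S) →
      (ρ - β v) * signedDetSum G x (S.erase v) ≤ signedDetSum G x S := by
  induction S using Finset.strongInduction with
  | H S ih =>
    have bound : ∀ v ∈ S, ((x - ((((S.erase v).filter (G.Adj v)).card : ℝ)) / β v) *
        signedDetSum G x (S.erase v) ≤ signedDetSum G x S) := by
      intro v hv
      have hβv : 0 < β v := hβ v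
      rw [signedDetSum_recursion G x hv]
      have : ∑ w ∈ (S.erase v).filter (G.Adj v), signedDetSum G x ((S.erase v).erase w) ≤
          ∑ w ∈ (S.erase v).filter (G.Adj v), signedDetSum G x (S.erase v) / β v := by
        refine Finset.sum_le_sum fun w hw => ?_
        obtain ⟨hw1, hw2⟩ := Finset.mem_filter.1 hw
        have := (ih _ (Finset.erase_ssubset hv)).2 w hw1 ⟨v, hw2.symm, by simp⟩
        rw [le_div_iff₀ hβv]
        have h3 : ρ - β w = β v := by linarith [hadj v w hw2]
        rw [h3] at this
        linarith
      rw [Finset.sum_const, nsmul_eq_mul] at this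
      have e : (x - ((((S.erase v).filter (G.Adj v)).card : ℝ)) / β v) *
        signedDetSum G x (S.erase v) = x * signedDetSum G x (S.erase v) -
          (((S.erase v).filter (G.Adj v)).card : ℝ) * (signedDetSum G x (S.erase v) / β v) := by
        ring
      rw [e]
      linarith
    constructor
    · rcases S.eq_empty_or_nonempty with rfl | ⟨v, hv⟩
      · exact signedDetSum_empty_pos G x
      · have hβv : 0 < β v := hβ v
        refine lt_of_lt_of_le (mul_pos ?_ (ih _ (Finset.erase_ssubset hv)).1) (bound v hv)
        have hc : (((S.erase v).filter (G.Adj v)).card : ℝ) ≤ β v ^ 2 + 1 := by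
          rw [← hdeg v]
          exact_mod_cast Finset.card_le_card (Finset.filter_subset_filter _ (Finset.subset_univ _))
        rw [sub_pos, div_lt_iff₀ hβv]
        nlinarith [hprod v]
    · rintro v hv ⟨w, hw, hwS⟩
      have hβv : 0 < β v := hβ v
      refine le_trans (mul_le_mul_of_nonneg_right ?_ (ih _ (Finset.erase_ssubset hv)).1.le)
        (bound v hv)
      have hc : (((S.erase v).filter (G.Adj v)).card : ℝ) + 1 ≤ β v ^ 2 + 1 := by
        rw [← hdeg v]
        have : ((S.erase v).filter (G.Adj v)).card < (Finset.univ.filter (G.Adj v)).card := by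
          refine Finset.card_lt_card ⟨Finset.filter_subset_filter _ (Finset.subset_univ _), ?_⟩
          intro h
          have := h (Finset.mem_filter.2 ⟨Finset.mem_univ w, hw⟩)
          exact hwS (Finset.mem_of_mem_erase (Finset.mem_filter.1 this).1)
        exact_mod_cast this
      have : (((S.erase v).filter (G.Adj v)).card : ℝ) / β v ≤ β v := by
        rw [div_le_iff₀ hβv]; nlinarith
      linarith

end SignedMatrices

section RankOneAverages

open Polynomial

variable {V ι : Type*} [Fintype V] [DecidableEq V]

theorem Matrix.det_sub_smul_vecMulVec {K : Type*} [CommRing K] (M : Matrix V V K) (u v : V → K)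
    (t : K) : (M - t • vecMulVec u v).det =
      (1 - t) * M.det + t * (M - vecMulVec u v).det := by
  have h : ∀ a : V → K, (M - vecMulVec a v).det =
      (fromBlocks (1 : Matrix Unit Unit K) (replicateRow Unit v) (replicateCol Unit a) M).det := by
    intro a
    rw [det_fromBlocks_one₁₁, ← vecMulVec_eq]
  let B := fromBlocks (1 : Matrix Unit Unit K) (replicateRow Unit v) (replicateCol Unit 0) M
  have hB : ∀ a : V → K,
      fromBlocks (1 : Matrix Unit Unit K) (replicateRow Unit v) (replicateCol Unit a) M =
      B.updateCol (Sum.inl ()) (Sum.elim 1 a) := by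
    intro a
    ext i j
    rcases i with i | i <;> rcases j with j | j <;> simp [B]
  have e : (Sum.elim 1 (t • u) : Unit ⊕ V → K) =
      (1 - t) • (Sum.elim 1 0 : Unit ⊕ V → K) + t • (Sum.elim 1 u : Unit ⊕ V → K) := by
    ext (i | i) <;> simp
  rw [← smul_vecMulVec, h, hB, e, det_updateCol_add, det_updateCol_smul, det_updateCol_smul,
    ← hB, ← hB, ← h, ← h, zero_vecMulVec, sub_zero]

/-- The square of a real vector, as a complex rank one matrix. -/
noncomputable def complexSq (p : V → ℝ) : Matrix V V ℂ := (vecMulVec p p).map Complex.ofReal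

omit [Fintype V] [DecidableEq V] in
theorem complexSq_eq (p : V → ℝ) :
    complexSq p = vecMulVec (fun i => (p i : ℂ)) (fun i => (p i : ℂ)) := by
  ext i j; simp [complexSq, vecMulVec_apply]

/-- The average of `det (M - ∑ w w ᵀ)` over independent uniform choices `w ∈ {w i ±}`. -/
noncomputable def avgDet (w : ι → Bool → V → ℝ) : List ι → Matrix V V ℂ → ℂ
  | [], M => M.det
  | i :: l, M => (avgDet w l (M - complexSq (w i true)) +
      avgDet w l (M - complexSq (w i false))) / 2

/-- The average of the characteristic polynomials of `A + ∑ w w ᵀ` over independent uniform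
choices `w ∈ {w i ±}`. -/
noncomputable def avgCharpoly (w : ι → Bool → V → ℝ) : List ι → Matrix V V ℝ → ℝ[X]
  | [], A => A.charpoly
  | i :: l, A => C (1 / 2) * (avgCharpoly w l (A + vecMulVec (w i true) (w i true)) +
      avgCharpoly w l (A + vecMulVec (w i false) (w i false)))

variable (w : ι → Bool → V → ℝ)

theorem aeval_avgCharpoly (l : List ι) (A : Matrix V V ℝ) (z : ℂ) :
    aeval z (avgCharpoly w l A) = avgDet w l (scalar V z - A.map Complex.ofReal) := by
  induction l generalizing A with
  | nil =>
    rw [avgCharpoly, avgDet, ← eval_charpoly]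
    have : (A.map Complex.ofReal).charpoly = A.charpoly.map Complex.ofRealHom :=
      Matrix.charpoly_map A Complex.ofRealHom
    rw [this, eval_map, aeval_def]
    rfl
  | cons i l ih =>
    have e : ∀ p : V → ℝ, scalar V z - A.map Complex.ofReal - complexSq p =
        scalar V z - (A + vecMulVec p p).map Complex.ofReal := by
      intro p
      ext a b; simp [complexSq]; ring
    rw [avgCharpoly, avgDet, e, e, ← ih, ← ih]
    simp only [map_mul, map_add, aeval_C]
    norm_num
    ring

theorem avgCharpoly_monic (l : List ι) (A : Matrix V V ℝ) :
    (avgCharpoly w l A).natDegree = Fintype.card V ∧ (avgCharpoly w l A).Monic := by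
  induction l generalizing A with
  | nil => exact ⟨A.charpoly_natDegree_eq_dim, A.charpoly_monic⟩
  | cons i l ih =>
    rw [avgCharpoly]
    obtain ⟨h1, h2⟩ := ih (A + vecMulVec (w i true) (w i true))
    obtain ⟨h3, h4⟩ := ih (A + vecMulVec (w i false) (w i false))
    set p := avgCharpoly w l (A + vecMulVec (w i true) (w i true))
    set q := avgCharpoly w l (A + vecMulVec (w i false) (w i false))
    have hc : (C (1 / 2) * (p + q)).coeff (Fintype.card V) = 1 := by
      have e1 : p.coeff (Fintype.card V) = 1 := by rw [← h1]; exact h2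
      have e2 : q.coeff (Fintype.card V) = 1 := by rw [← h3]; exact h4
      rw [coeff_C_mul, coeff_add, e1, e2]; norm_num
    have hd : (C (1 / 2) * (p + q)).natDegree ≤ Fintype.card V :=
      (natDegree_C_mul_le _ _).trans (natDegree_add_le_of_degree_le h1.le h3.le)
    exact ⟨le_antisymm hd (le_natDegree_of_ne_zero (by rw [hc]; norm_num)),
      monic_of_natDegree_le_of_coeff_eq_one _ hd hc⟩

theorem avgDet_sub_smul (l : List ι) (M : Matrix V V ℂ) (p : V → ℝ) (t : ℂ) :
    avgDet w l (M - t • complexSq p) =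
      (1 - t) * avgDet w l M + t * avgDet w l (M - complexSq p) := by
  induction l generalizing M with
  | nil =>
    rw [avgDet, complexSq_eq, det_sub_smul_vecMulVec]
    rfl
  | cons i l ih =>
    simp only [avgDet]
    rw [sub_right_comm, ih, sub_right_comm M (t • _), ih, sub_right_comm M (complexSq p),
      sub_right_comm M (complexSq p)]
    ring

/-- The imaginary part of the quadratic form of `M` is positive definite. -/
def ImPosDef (M : Matrix V V ℂ) : Prop :=
  ∀ x : V → ℂ, x ≠ 0 → 0 < (star x ⬝ᵥ M *ᵥ x).im

omit [DecidableEq V] in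
theorem ImPosDef.sub_smul {M : Matrix V V ℂ} (hM : ImPosDef M) (p : V → ℝ) {t : ℂ}
    (ht : t.im ≤ 0) : ImPosDef (M - t • complexSq p) := by
  intro x hx
  have h := hM x hx
  have e : star x ⬝ᵥ (complexSq p *ᵥ x) =
      ((Complex.normSq ((fun i => (p i : ℂ)) ⬝ᵥ x) : ℝ) : ℂ) := by
    rw [complexSq_eq, vecMulVec_mulVec, dotProduct_smul, Complex.normSq_eq_conj_mul_self]
    have : star x ⬝ᵥ (fun i => (p i : ℂ)) =
        (starRingEnd ℂ) ((fun i => (p i : ℂ)) ⬝ᵥ x) := by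
      simp [dotProduct, map_sum, mul_comm]
    rw [this]
    simp
  rw [sub_mulVec, dotProduct_sub, smul_mulVec, dotProduct_smul, e, Complex.sub_im, smul_eq_mul,
    Complex.mul_im, Complex.ofReal_re, Complex.ofReal_im]
  nlinarith [Complex.normSq_nonneg ((fun i => (p i : ℂ)) ⬝ᵥ x)]

omit [DecidableEq V] in
theorem ImPosDef.sub {M : Matrix V V ℂ} (hM : ImPosDef M) (p : V → ℝ) :
    ImPosDef (M - complexSq p) := by
  have := hM.sub_smul p (t := 1) (by simp)
  rwa [one_smul] at this

theorem imPosDef_scalar_sub {A : Matrix V V ℝ} (hA : A.IsSymm) {z : ℂ} (hz : 0 < z.im) :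
    ImPosDef (scalar V z - A.map Complex.ofReal) := by
  intro x hx
  have h1 : (star x ⬝ᵥ (A.map Complex.ofReal) *ᵥ x).im = 0 := by
    have hH : (A.map Complex.ofReal).IsHermitian := by
      ext i j
      simp [hA.apply i j]
    exact hH.im_star_dotProduct_mulVec_self x
  have h2 : star x ⬝ᵥ (scalar V z) *ᵥ x = z * ((∑ i, Complex.normSq (x i) : ℝ) : ℂ) := by
    rw [scalar_apply, ← smul_one_eq_diagonal, smul_mulVec, one_mulVec, dotProduct_smul,
      smul_eq_mul]
    congr 1
    simp [dotProduct, Complex.normSq_eq_conj_mul_self]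
  have h3 : 0 < ∑ i, Complex.normSq (x i) := by
    obtain ⟨i, hi⟩ := Function.ne_iff.1 hx
    exact Finset.sum_pos' (fun _ _ => Complex.normSq_nonneg _)
      ⟨i, Finset.mem_univ _, Complex.normSq_pos.2 hi⟩
  rw [sub_mulVec, dotProduct_sub, Complex.sub_im, h1, h2, Complex.mul_im, Complex.ofReal_re,
    Complex.ofReal_im]
  nlinarith

theorem avgDet_div_eq_zero_or_im_neg {l : List ι}
    (hl : ∀ M : Matrix V V ℂ, ImPosDef M → avgDet w l M ≠ 0) {M : Matrix V V ℂ}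
    (hM : ImPosDef M) (p : V → ℝ) :
    (avgDet w l M - avgDet w l (M - complexSq p)) / avgDet w l M = 0 ∨
      ((avgDet w l M - avgDet w l (M - complexSq p)) / avgDet w l M).im < 0 := by
  by_contra! h
  set F := avgDet w l M
  set h' := (F - avgDet w l (M - complexSq p)) / F with hh
  have hF : F ≠ 0 := hl M hM
  obtain ⟨h0, h⟩ := h
  have ht : (h'⁻¹).im ≤ 0 := by
    rw [Complex.inv_im]
    exact div_nonpos_of_nonpos_of_nonneg (by linarith) (Complex.normSq_nonneg _)
  refine hl _ (hM.sub_smul p ht) ?_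
  rw [avgDet_sub_smul]
  have e : avgDet w l (M - complexSq p) = F - h' * F := by
    rw [hh]; field_simp; ring
  rw [e]
  field_simp
  ring

theorem avgDet_ne_zero (l : List ι) (M : Matrix V V ℂ) (hM : ImPosDef M) : avgDet w l M ≠ 0 := by
  induction l generalizing M with
  | nil =>
    intro h
    obtain ⟨x, hx, hx0⟩ := exists_mulVec_eq_zero_iff.2 h
    have := hM x hx
    simp [hx0] at this
  | cons i l ih =>
    intro h
    have hF := ih M hM
    have h1 := avgDet_div_eq_zero_or_im_neg w ih hM (w i true)
    have h2 := avgDet_div_eq_zero_or_im_neg w ih hM (w i false)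
    have hsum : (avgDet w l M - avgDet w l (M - complexSq (w i true))) / avgDet w l M +
        (avgDet w l M - avgDet w l (M - complexSq (w i false))) / avgDet w l M = 2 := by
      simp only [avgDet] at h
      have h' : avgDet w l (M - complexSq (w i false)) =
          - avgDet w l (M - complexSq (w i true)) := by
        linear_combination 2 * h
      rw [h']; field_simp; ring
    have him := congrArg Complex.im hsum
    have hre := congrArg Complex.re hsum
    simp only [Complex.add_im, Complex.add_re] at him hre
    norm_num at him hre
    rcases h1 with h1 | h1 <;> rcases h2 with h2 | h2
    · rw [h1, h2] at hre; norm_num at hre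
    · rw [h1] at him; simp at him; linarith
    · rw [h2] at him; simp at him; linarith
    · linarith

theorem avgDet_im_div_nonpos (l : List ι) {M : Matrix V V ℂ}
    (hM : ImPosDef M) (p : V → ℝ) :
    ((avgDet w l M - avgDet w l (M - complexSq p)) / avgDet w l M).im ≤ 0 :=
  (avgDet_div_eq_zero_or_im_neg w (avgDet_ne_zero w l) hM p).elim (fun h => by simp [h]) le_of_lt

end RankOneAverages

section Interlacing

open Polynomial

/-- If `G / F` maps the upper half-plane to the closed lower half-plane, then `G / F` is
nonincreasing on the real axis. -/
theorem Polynomial.wronskian_nonpos_of_im_nonpos {F G : ℝ[X]}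
    (h : ∀ z : ℂ, 0 < z.im → (aeval z G / aeval z F).im ≤ 0) (x : ℝ) :
    G.derivative.eval x * F.eval x - G.eval x * F.derivative.eval x ≤ 0 := by
  have hφ : ∀ ε : ℝ, 0 < ε →
      (aeval (x + ε * Complex.I : ℂ) G * star (aeval (x + ε * Complex.I : ℂ) F)).im ≤ 0 := by
    intro ε hε
    have := h (x + ε * Complex.I) (by simpa using hε)
    rw [Complex.div_im] at this
    set g := aeval (x + ε * Complex.I : ℂ) G
    set f := aeval (x + ε * Complex.I : ℂ) F
    rcases eq_or_ne f 0 with hf | hf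
    · simp [hf]
    · rw [← sub_div, div_le_iff₀ (Complex.normSq_pos.2 hf)] at this
      simp only [Complex.star_def, Complex.mul_im, Complex.conj_re, Complex.conj_im]
      linarith
  have hline : HasDerivAt (fun ε : ℝ => (x + ε * Complex.I : ℂ)) Complex.I 0 := by
    have := ((Complex.ofRealCLM.hasDerivAt (x := (0 : ℝ))).mul_const Complex.I).const_add (x : ℂ)
    simpa using this
  have hpoly : ∀ P : ℝ[X], HasDerivAt (fun ε : ℝ => aeval (x + ε * Complex.I : ℂ) P)
      (Complex.I * (P.derivative.eval x : ℝ)) 0 := by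
    intro P
    have h1 : HasDerivAt (fun z : ℂ => aeval z P) (aeval ((x : ℂ) + (0 : ℝ) * Complex.I)
        P.derivative) ((x : ℂ) + (0 : ℝ) * Complex.I) := P.hasDerivAt_aeval _
    have h2 := h1.scomp (0 : ℝ) hline
    have h3 : aeval ((x : ℂ) + (0 : ℝ) * Complex.I) P.derivative =
        ((P.derivative.eval x : ℝ) : ℂ) := by
      simp only [Complex.ofReal_zero, zero_mul, add_zero]
      exact aeval_algebraMap_apply_eq_algebraMap_eval x P.derivative
    rw [h3] at h2
    exact h2
  have hG := hpoly G
  have hF := (hpoly F).star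
  have hGF := hG.mul hF
  have him := Complex.imCLM.hasFDerivAt.comp_hasDerivAt (0 : ℝ) hGF
  have ev : ∀ P : ℝ[X], aeval ((x : ℂ) + (0 : ℝ) * Complex.I) P = ((P.eval x : ℝ) : ℂ) := by
    intro P
    simp only [Complex.ofReal_zero, zero_mul, add_zero]
    exact aeval_algebraMap_apply_eq_algebraMap_eval x P
  rw [ev, ev] at him
  have hd : Complex.imCLM (Complex.I * ((G.derivative.eval x : ℝ) : ℂ) * star ((F.eval x : ℝ) : ℂ)
      + ((G.eval x : ℝ) : ℂ) * star (Complex.I * ((F.derivative.eval x : ℝ) : ℂ))) =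
      G.derivative.eval x * F.eval x - G.eval x * F.derivative.eval x := by
    simp
    ring
  rw [hd] at him
  have h0 : (aeval ((x : ℂ) + (0 : ℝ) * Complex.I) G *
      star (aeval ((x : ℂ) + (0 : ℝ) * Complex.I) F)).im = 0 := by
    rw [ev, ev]; simp
  refine le_of_tendsto him.tendsto_slope_zero_right ?_
  filter_upwards [self_mem_nhdsWithin] with ε hε
  have hε' : 0 < ε := hε
  have h1 := hφ ε hε'
  simp only [Function.comp_apply, zero_add, Complex.imCLM_apply, smul_eq_mul, Pi.mul_apply]
  erw [h0]
  rw [sub_zero]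
  exact mul_nonpos_of_nonneg_of_nonpos (inv_nonneg.2 hε'.le) h1

theorem Polynomial.div_antitoneOn_of_wronskian_nonpos {F G : ℝ[X]} {r : ℝ}
    (h : ∀ x, G.derivative.eval x * F.eval x - G.eval x * F.derivative.eval x ≤ 0)
    (hF : ∀ x > r, F.eval x ≠ 0) :
    AntitoneOn (fun x => G.eval x / F.eval x) (Set.Ioi r) := by
  have hd : ∀ x ∈ Set.Ioi r, HasDerivAt (fun x => G.eval x / F.eval x)
      ((G.derivative.eval x * F.eval x - G.eval x * F.derivative.eval x) / F.eval x ^ 2) x :=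
    fun x hx => (G.hasDerivAt x).div (F.hasDerivAt x) (hF x hx)
  refine antitoneOn_of_deriv_nonpos (convex_Ioi r)
    (fun x hx => (hd x hx).continuousAt.continuousWithinAt) ?_ ?_
  · rw [interior_Ioi]
    exact fun x hx => (hd x hx).differentiableAt.differentiableWithinAt
  · rw [interior_Ioi]
    intro x hx
    rw [(hd x hx).deriv]
    exact div_nonpos_of_nonpos_of_nonneg (h x) (sq_nonneg _)

theorem Polynomial.Monic.eval_pos_of_forall_ne_zero {F : ℝ[X]} (hF : F.Monic) {r : ℝ}
    (h : ∀ x > r, F.eval x ≠ 0) : ∀ x > r, 0 < F.eval x := by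
  intro x hx
  by_contra! hneg
  have hneg' : F.eval x < 0 := lt_of_le_of_ne hneg (h x hx)
  rcases Nat.eq_zero_or_pos F.natDegree with hd | hd
  · rw [hF.natDegree_eq_zero.1 hd] at hneg; simp at hneg; linarith
  · have ht : Filter.Tendsto (fun x => F.eval x) Filter.atTop Filter.atTop :=
      F.tendsto_atTop_of_leadingCoeff_nonneg (natDegree_pos_iff_degree_pos.1 hd)
        (by rw [hF.leadingCoeff]; norm_num)
    obtain ⟨y, hy1, hy2⟩ := ((ht.eventually_ge_atTop 0).and
      (Filter.eventually_ge_atTop x)).exists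
    obtain ⟨c, hc, hc0⟩ := intermediate_value_Icc hy2 F.continuous.continuousOn
      ⟨hneg, hy1⟩
    exact h c (lt_of_lt_of_le hx hc.1) hc0

theorem Polynomial.eval_nonneg_of_im_nonpos {F G : ℝ[X]} (hF : F.Monic) (hdeg : G.degree < F.degree)
    (h : ∀ z : ℂ, 0 < z.im → (aeval z G / aeval z F).im ≤ 0) {r : ℝ}
    (hr : ∀ x > r, F.eval x ≠ 0) : ∀ x ≥ r, 0 ≤ G.eval x := by
  have hpos : ∀ x > r, 0 ≤ G.eval x := by
    intro x hx
    have hanti := div_antitoneOn_of_wronskian_nonpos (wronskian_nonpos_of_im_nonpos h) hr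
    have ht := div_tendsto_atTop_zero_of_degree_lt G F hdeg
    have : 0 ≤ G.eval x / F.eval x := by
      refine le_of_tendsto ht ?_
      filter_upwards [Filter.eventually_ge_atTop x] with y hy
      exact hanti hx (lt_of_lt_of_le hx hy) hy
    have hFx := hF.eval_pos_of_forall_ne_zero hr x hx
    have := mul_nonneg this hFx.le
    rwa [div_mul_cancel₀ _ hFx.ne'] at this
  intro x hx
  rcases eq_or_lt_of_le hx with rfl | hx
  · refine ge_of_tendsto (G.continuous.continuousAt.tendsto.mono_left
      (nhdsWithin_le_nhds (s := Set.Ioi r))) ?_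
    filter_upwards [self_mem_nhdsWithin] with y hy using hpos y hy
  · exact hpos x hx

/-- If the average of two polynomials with a common interlacing is positive on a ray, then so is
one of the two. -/
theorem Polynomial.pos_or_pos_of_average_pos {F P Q : ℝ[X]} (hF : F.Monic)
    (hP : (F - P).degree < F.degree) (hQ : (F - Q).degree < F.degree)
    (hPF : ∀ z : ℂ, 0 < z.im → (aeval z (F - P) / aeval z F).im ≤ 0)
    (hQF : ∀ z : ℂ, 0 < z.im → (aeval z (F - Q) / aeval z F).im ≤ 0) {r : ℝ}
    (h : ∀ x > r, 0 < P.eval x + Q.eval x) :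
    (∀ x > r, 0 < P.eval x) ∨ (∀ x > r, 0 < Q.eval x) := by
  have hne : ∀ x > r, F.eval x ≠ 0 := by
    by_contra! hex
    obtain ⟨y, hy, hy0⟩ := hex
    have hmem : y ∈ F.roots.toFinset := by simp [hF.ne_zero, hy0]
    obtain ⟨m, hm, hmax⟩ := F.roots.toFinset.exists_max_image id ⟨y, hmem⟩
    have hm0 : F.eval m = 0 := by simpa [hF.ne_zero] using hm
    have hmr : r < m := lt_of_lt_of_le hy (hmax y hmem)
    have hne : ∀ x > m, F.eval x ≠ 0 := by
      intro x hx hx0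
      exact absurd (hmax x (by simp [hF.ne_zero, hx0])) (not_le.2 hx)
    have h1 := eval_nonneg_of_im_nonpos hF hP hPF hne m le_rfl
    have h2 := eval_nonneg_of_im_nonpos hF hQ hQF hne m le_rfl
    have h3 := h m hmr
    simp only [eval_sub, hm0] at h1 h2
    linarith
  by_contra! hcon
  obtain ⟨⟨a, ha, ha0⟩, b, hb, hb0⟩ := hcon
  have aux : ∀ {R : ℝ[X]} {c d : ℝ},
      (∀ z : ℂ, 0 < z.im → (aeval z (F - R) / aeval z F).im ≤ 0) → c > r → c ≤ d →
      R.eval d ≤ 0 → R.eval c ≤ 0 := by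
    intro R c d hR hc hcd hd
    have hanti := div_antitoneOn_of_wronskian_nonpos (wronskian_nonpos_of_im_nonpos hR) hne
    have hFc := hF.eval_pos_of_forall_ne_zero hne c hc
    have hFd := hF.eval_pos_of_forall_ne_zero hne d (lt_of_lt_of_le hc hcd)
    have := hanti hc (lt_of_lt_of_le hc hcd) hcd
    simp only [eval_sub] at this
    have h1 : 1 ≤ (F.eval d - R.eval d) / F.eval d := by
      rw [le_div_iff₀ hFd]; linarith
    have h2 := h1.trans this
    rw [le_div_iff₀ hFc] at h2
    linarith
  have hc : min a b > r := lt_min ha hb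
  have h1 := aux hPF hc (min_le_left a b) ha0
  have h2 := aux hQF hc (min_le_right a b) hb0
  linarith [h _ hc]

variable {V ι : Type*} [Fintype V] [DecidableEq V] (w : ι → Bool → V → ℝ)

theorem avgCharpoly_sub_degree_lt [Nonempty V] (l : List ι) (A B : Matrix V V ℝ) :
    (avgCharpoly w l A - avgCharpoly w l B).degree < (avgCharpoly w l A).degree := by
  obtain ⟨h1, h2⟩ := avgCharpoly_monic w l A
  obtain ⟨h3, h4⟩ := avgCharpoly_monic w l B
  refine degree_sub_lt_left ?_ h2.ne_zero (by rw [h2.leadingCoeff, h4.leadingCoeff])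
  rw [degree_eq_natDegree h2.ne_zero, degree_eq_natDegree h4.ne_zero, h1, h3]

theorem avgCharpoly_im_div_nonpos (l : List ι) {A : Matrix V V ℝ} (hA : A.IsSymm) (p : V → ℝ)
    {z : ℂ} (hz : 0 < z.im) :
    (aeval z (avgCharpoly w l A - avgCharpoly w l (A + vecMulVec p p)) /
      aeval z (avgCharpoly w l A)).im ≤ 0 := by
  have e : scalar V z - (A + vecMulVec p p).map Complex.ofReal =
      scalar V z - A.map Complex.ofReal - complexSq p := by
    ext a b; simp [complexSq]; ring
  rw [map_sub, aeval_avgCharpoly, aeval_avgCharpoly, e]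
  exact avgDet_im_div_nonpos w l (imPosDef_scalar_sub hA hz) p

theorem exists_charpoly_pos_of_avgCharpoly_pos [Nonempty V] {l : List ι} (hl : l.Nodup)
    {A : Matrix V V ℝ} (hA : A.IsSymm) {r : ℝ} (h : ∀ x > r, 0 < (avgCharpoly w l A).eval x) :
    ∃ s : ι → Bool, ∀ x > r,
      0 < (A + (l.map fun i => vecMulVec (w i (s i)) (w i (s i))).sum).charpoly.eval x := by
  induction l generalizing A with
  | nil => exact ⟨fun _ => true, by simpa [avgCharpoly] using h⟩
  | cons i l ih =>
    obtain ⟨hi, hl⟩ := List.nodup_cons.1 hl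
    have hsymm : ∀ p : V → ℝ, (A + vecMulVec p p).IsSymm := fun p =>
      hA.add (by ext a b; simp [vecMulVec_apply, mul_comm])
    have key : ∃ b, ∀ x > r,
        0 < (avgCharpoly w l (A + vecMulVec (w i b) (w i b))).eval x := by
      rcases pos_or_pos_of_average_pos (avgCharpoly_monic w l A).2
        (avgCharpoly_sub_degree_lt w l _ _) (avgCharpoly_sub_degree_lt w l _ _)
        (fun z hz => avgCharpoly_im_div_nonpos w l hA (w i true) hz)
        (fun z hz => avgCharpoly_im_div_nonpos w l hA (w i false) hz)
        (r := r) (fun x hx => by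
          have := h x hx
          simp only [avgCharpoly, eval_mul, eval_C, eval_add] at this
          linarith) with h | h
      · exact ⟨_, h⟩
      · exact ⟨_, h⟩
    obtain ⟨b, hb⟩ := key
    obtain ⟨s, hs⟩ := ih hl (hsymm _) hb
    refine ⟨Function.update s i b, fun x hx => ?_⟩
    have e : (l.map fun j => vecMulVec (w j (Function.update s i b j))
        (w j (Function.update s i b j))) = l.map fun j => vecMulVec (w j (s j)) (w j (s j)) := by
      refine List.map_congr_left fun j hj => ?_
      rw [Function.update_of_ne (by rintro rfl; exact hi hj)]
    rw [List.map_cons, List.sum_cons, e, Function.update_self, ← add_assoc]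
    exact hs x hx

theorem sum_charpoly_eval_eq [Fintype ι] [DecidableEq ι] {l : List ι} (hl : l.Nodup)
    (A : Matrix V V ℝ) (x : ℝ) :
    ∑ s : ι → Bool,
      (A + (l.map fun i => vecMulVec (w i (s i)) (w i (s i))).sum).charpoly.eval x =
      Fintype.card (ι → Bool) * (avgCharpoly w l A).eval x := by
  induction l generalizing A with
  | nil => simp [avgCharpoly]
  | cons i l ih =>
    obtain ⟨hi, hl⟩ := List.nodup_cons.1 hl
    let g : Bool → (ι → Bool) → ℝ := fun b s => (A + vecMulVec (w i b) (w i b) +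
      (l.map fun i => vecMulVec (w i (s i)) (w i (s i))).sum).charpoly.eval x
    have hinv : Function.Involutive (fun s : ι → Bool => Function.update s i (!s i)) := by
      intro s; simp
    have hg : ∀ (b : Bool) (s : ι → Bool) c, g b (Function.update s i c) = g b s := by
      intro b s c
      have e : (l.map fun j => vecMulVec (w j (Function.update s i c j))
        (w j (Function.update s i c j))) = l.map fun j => vecMulVec (w j (s j)) (w j (s j)) := by
        refine List.map_congr_left fun j hj => ?_
        rw [Function.update_of_ne (by rintro rfl; exact hi hj)]
      simp only [g, e]
    have h1 : ∑ s, g (s i) s = ∑ s, g (!s i) s := by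
      rw [← Equiv.sum_comp hinv.toPerm]
      refine Finset.sum_congr rfl fun s _ => ?_
      change g (Function.update s i (!s i) i) (Function.update s i (!s i)) = _
      rw [hg, Function.update_self]
    have h2 : ∑ s, g (s i) s + ∑ s, g (!s i) s = ∑ s, g true s + ∑ s, g false s := by
      rw [← Finset.sum_add_distrib, ← Finset.sum_add_distrib]
      refine Finset.sum_congr rfl fun s _ => ?_
      cases s i <;> simp [add_comm]
    have h3 : ∑ s : ι → Bool, (A + ((i :: l).map fun i =>
        vecMulVec (w i (s i)) (w i (s i))).sum).charpoly.eval x = ∑ s, g (s i) s := by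
      simp only [g, List.map_cons, List.sum_cons, add_assoc]
    have h4 : ∀ b, ∑ s, g b s = Fintype.card (ι → Bool) *
      (avgCharpoly w l (A + vecMulVec (w i b) (w i b))).eval x := fun b => ih hl _
    rw [h3, avgCharpoly, eval_mul, eval_C, eval_add]
    rw [← h1, h4, h4] at h2
    linarith

end Interlacing

section GoodSigning

variable {V : Type*} [Fintype V] [DecidableEq V] (G : SimpleGraph V)

/-- The vector `e_u ± e_v` attached to an edge `s(u, v)`, and zero for non-edges. -/
noncomputable def edgeVec (e : Sym2 V) (b : Bool) (i : V) : ℝ :=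
  if e ∈ G.edgeSet then
    (if i = e.out.1 then 1 else 0) + boolSign b * (if i = e.out.2 then 1 else 0)
  else 0

omit [Fintype V] in
theorem edgeVec_mul_self (e : Sym2 V) (b : Bool) (i : V) :
    edgeVec G e b i * edgeVec G e b i = edgeVec G e true i * edgeVec G e true i := by
  unfold edgeVec
  by_cases he : e ∈ G.edgeSet
  · have hne : e.out.1 ≠ e.out.2 := by
      have : s(e.out.1, e.out.2) ∈ G.edgeSet := by
        rw [show s(e.out.1, e.out.2) = e from Quot.out_eq e]; exact he
      exact G.ne_of_adj this
    simp only [he, if_true]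
    by_cases h1 : i = e.out.1
    · have h2 : i ≠ e.out.2 := h1 ▸ hne
      simp [h1, hne]
    · by_cases h2 : i = e.out.2
      · simp [h2, hne.symm, boolSign_mul_self]
      · simp [h1, h2]
  · simp [he]

omit [Fintype V] in
theorem edgeVec_mul_of_ne (s : Sym2 V → Bool) (e : Sym2 V) {i j : V} (hij : i ≠ j) :
    edgeVec G e (s e) i * edgeVec G e (s e) j = if e = s(i, j) then signedAdj G s i j else 0 := by
  have hout : s(e.out.1, e.out.2) = e := Quot.out_eq e
  split_ifs with he
  · by_cases hadj : G.Adj i j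
    · have hmem : e ∈ G.edgeSet := by rw [he]; exact hadj
      simp only [edgeVec, hmem, if_true, signedAdj, of_apply, hadj, ← he]
      rw [he, Sym2.eq_iff, ← he] at hout
      rcases hout with ⟨h1, h2⟩ | ⟨h1, h2⟩ <;> simp [h1, h2, hij, hij.symm]
    · have hmem : e ∉ G.edgeSet := by rw [he]; exact hadj
      simp [edgeVec, hmem, signedAdj, hadj]
  · by_cases hmem : e ∈ G.edgeSet
    · simp only [edgeVec, hmem, if_true]
      have h1 : i = e.out.1 → j ≠ e.out.2 := fun h h' => he (by rw [h, h', hout])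
      have h2 : i = e.out.2 → j ≠ e.out.1 := fun h h' => he (by rw [h, h', Sym2.eq_swap, hout])
      by_cases hi : i = e.out.1
      · have hj : j ≠ e.out.1 := fun hj => hij (hi.trans hj.symm)
        simp [hj, h1 hi]
      · by_cases hi' : i = e.out.2
        · have hj : j ≠ e.out.2 := fun hj => hij (hi'.trans hj.symm)
          simp [hj, h2 hi']
        · simp [hi, hi']
    · simp [edgeVec, hmem]

theorem signedAdj_eq_add_sum (s : Sym2 V → Bool) :
    signedAdj G s = diagonal (fun i => - ∑ e, edgeVec G e true i * edgeVec G e true i) +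
      ((Finset.univ : Finset (Sym2 V)).toList.map fun e =>
        vecMulVec (edgeVec G e (s e)) (edgeVec G e (s e))).sum := by
  rw [Finset.sum_map_toList]
  ext i j
  rw [Matrix.add_apply, Matrix.sum_apply]
  simp only [vecMulVec_apply]
  rcases eq_or_ne i j with rfl | hij
  · simp [edgeVec_mul_self, signedAdj]
  · simp [edgeVec_mul_of_ne G s _ hij, hij]

theorem signedDetSum_univ (x : ℝ) :
    signedDetSum G x Finset.univ = ∑ s : Sym2 V → Bool, (signedAdj G s).charpoly.eval x := by
  refine Finset.sum_congr rfl fun s _ => ?_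
  rw [eval_charpoly]
  congr 1
  ext i j
  rcases eq_or_ne i j with rfl | hij
  · simp [signedMinor, signedAdj]
  · simp [signedMinor, hij]

theorem exists_signing_charpoly_pos [Nonempty V] {β : V → ℝ} {ρ : ℝ} (hβ : ∀ v, 0 < β v)
    (hadj : ∀ v w, G.Adj v w → β v + β w = ρ) (hprod : ∀ v, 1 < β v * (ρ - β v))
    (hdeg : ∀ v, ((Finset.univ.filter (G.Adj v)).card : ℝ) = β v ^ 2 + 1) :
    ∃ s : Sym2 V → Bool, ∀ x > ρ, 0 < (signedAdj G s).charpoly.eval x := by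
  simp only [signedAdj_eq_add_sum]
  refine exists_charpoly_pos_of_avgCharpoly_pos (edgeVec G) (Finset.nodup_toList _)
    (isSymm_diagonal _) fun x hx => ?_
  have h := (signedDetSum_pos G x hβ hadj hprod hdeg hx.le Finset.univ).1
  rw [signedDetSum_univ] at h
  simp only [signedAdj_eq_add_sum] at h
  rw [sum_charpoly_eval_eq _ (Finset.nodup_toList _)] at h
  exact pos_of_mul_pos_right h (Nat.cast_nonneg _)

theorem abs_eigenvalue_le_of_charpoly_pos {L : Set V} (hL : ∀ u v, G.Adj u v → (u ∈ L ↔ v ∉ L))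
    {s : Sym2 V → Bool} {ρ : ℝ} (hs : ∀ x > ρ, 0 < (signedAdj G s).charpoly.eval x)
    {lam : ℝ} {y : V → ℝ} (hy : y ≠ 0) (h : signedAdj G s *ᵥ y = lam • y) : |lam| ≤ ρ := by
  have aux : ∀ {lam : ℝ} {y : V → ℝ}, y ≠ 0 → signedAdj G s *ᵥ y = lam • y → lam ≤ ρ := by
    intro lam y hy h
    by_contra! hlt
    have := hs lam hlt
    rw [eval_charpoly, exists_mulVec_eq_zero_iff.1 ⟨y, hy, ?_⟩] at this
    · exact lt_irrefl _ this
    · rw [sub_mulVec, h, scalar_apply, ← smul_one_eq_diagonal, smul_mulVec, one_mulVec, sub_self]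
  refine abs_le'.2 ⟨aux hy h, aux (y := fun v => (if v ∈ L then 1 else -1) * y v) ?_ ?_⟩
  · intro h0
    apply hy
    ext v
    have := congrFun h0 v
    split_ifs at this <;> simpa using this
  · ext u
    have hu := congrFun h u
    simp only [mulVec, dotProduct, Pi.smul_apply, smul_eq_mul] at hu ⊢
    have : ∀ v, signedAdj G s u v * ((if v ∈ L then 1 else -1) * y v) =
        (if u ∈ L then -1 else 1) * (signedAdj G s u v * y v) := by
      intro v
      by_cases hadj : G.Adj u v
      · have := hL u v hadj
        by_cases hv : v ∈ L
        · have hu : u ∉ L := fun h => (this.1 h) hv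
          simp [hv, hu]
        · have hu : u ∈ L := this.2 hv
          simp [hv, hu]
      · simp [signedAdj, hadj]
    simp only [this, ← Finset.mul_sum, hu]
    split_ifs <;> ring

end GoodSigning

section TwoLift

variable {V : Type*}

/-- The 2-lift of `G` with respect to the signing `s`. -/
def twoLift (G : SimpleGraph V) (s : Sym2 V → Bool) : SimpleGraph (V × Bool) where
  Adj p q := G.Adj p.1 q.1 ∧ (q.2 = if s s(p.1, q.1) then p.2 else !p.2)
  symm := ⟨by
    rintro ⟨u, i⟩ ⟨v, j⟩ ⟨h, hj⟩
    refine ⟨h.symm, ?_⟩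
    have e : s(v, u) = s(u, v) := Sym2.eq_swap
    simp only [e]
    revert hj
    cases s s(u, v) <;> cases i <;> cases j <;> simp⟩
  loopless := ⟨fun p h => G.loopless.irrefl _ h.1⟩

variable [Fintype V]

theorem sum_twoLift (G : SimpleGraph V) (s : Sym2 V → Bool) (f : V × Bool → ℝ) (u : V) (i : Bool) :
    ∑ q, (if (twoLift G s).Adj (u, i) q then f q else 0) =
      ∑ v, if G.Adj u v then f (v, if s s(u, v) then i else !i) else 0 := by
  rw [Fintype.sum_prod_type]
  refine Finset.sum_congr rfl fun v _ => ?_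
  simp only [twoLift, Fintype.sum_bool]
  by_cases h : G.Adj u v <;> cases s s(u, v) <;> cases i <;> simp [h]

/-- A `(k₁, k₂)`-biregular bipartite graph with left side `L`, all of whose adjacency eigenvectors
with eigenvalue larger than `ρ` in absolute value are constant on both sides. -/
structure IsSpectralBiregular (G : SimpleGraph V) (L : Set V) (k₁ k₂ : ℕ) (ρ : ℝ) : Prop where
  bipartite : ∀ u v, G.Adj u v → (u ∈ L ↔ v ∉ L)
  sum_adj : ∀ u, ∑ v, (if G.Adj u v then (1 : ℝ) else 0) = if u ∈ L then (k₁ : ℝ) else k₂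
  eigen : ∀ (lam : ℝ) (x : V → ℝ),
    (∀ u, ∑ v, (if G.Adj u v then x v else 0) = lam * x u) →
      |lam| ≤ ρ ∨ ∀ u v, (u ∈ L ↔ v ∈ L) → x u = x v

theorem IsSpectralBiregular.exists_twoLift [Nonempty V] {G : SimpleGraph V} {L : Set V}
    {k₁ k₂ : ℕ} (h₁ : 3 ≤ k₁) (h₂ : 3 ≤ k₂)
    (h : IsSpectralBiregular G L k₁ k₂ (√((k₁ : ℝ) - 1) + √((k₂ : ℝ) - 1))) :
    ∃ s, IsSpectralBiregular (twoLift G s) (Prod.fst ⁻¹' L) k₁ k₂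
      (√((k₁ : ℝ) - 1) + √((k₂ : ℝ) - 1)) := by
  have h₁' : (3 : ℝ) ≤ k₁ := by exact_mod_cast h₁
  have h₂' : (3 : ℝ) ≤ k₂ := by exact_mod_cast h₂
  set a := √((k₁ : ℝ) - 1) with ha
  set b := √((k₂ : ℝ) - 1) with hb
  have ha1 : 1 < a := by rw [ha, Real.lt_sqrt (by norm_num)]; linarith
  have hb1 : 1 < b := by rw [hb, Real.lt_sqrt (by norm_num)]; linarith
  have ha2 : a ^ 2 = k₁ - 1 := Real.sq_sqrt (by linarith)
  have hb2 : b ^ 2 = k₂ - 1 := Real.sq_sqrt (by linarith)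
  obtain ⟨s, hs⟩ := exists_signing_charpoly_pos G (β := fun v => if v ∈ L then a else b)
    (ρ := a + b) (fun v => by split_ifs <;> linarith)
    (fun v w hvw => by
      have := h.bipartite v w hvw
      by_cases hw : w ∈ L
      · have hv : v ∉ L := fun hv => this.1 hv hw
        simp [hw, hv, add_comm]
      · simp [hw, this.2 hw])
    (fun v => by split_ifs <;> nlinarith)
    (fun v => by
      have := h.sum_adj v
      rw [Finset.sum_boole] at this
      rw [this]
      split_ifs <;> linarith)
  refine ⟨s, fun p q hpq => h.bipartite _ _ hpq.1, ?_, ?_⟩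
  · rintro ⟨u, i⟩
    rw [sum_twoLift G s (fun _ => 1)]
    exact h.sum_adj u
  · intro lam x hx
    by_cases hlam : |lam| ≤ a + b
    · exact Or.inl hlam
    right
    have hx' : ∀ u i, (∑ v, if G.Adj u v then x (v, if s s(u, v) then i else !i) else 0) =
        lam * x (u, i) := fun u i => by rw [← sum_twoLift]; exact hx _
    have hodd : (fun v => x (v, true) - x (v, false)) = 0 := by
      by_contra hne
      refine hlam (abs_eigenvalue_le_of_charpoly_pos G h.bipartite hs hne ?_)
      ext u
      simp only [mulVec, dotProduct, Pi.smul_apply, smul_eq_mul]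
      rw [mul_sub, ← hx' u true, ← hx' u false, ← Finset.sum_sub_distrib]
      refine Finset.sum_congr rfl fun v _ => ?_
      simp only [signedAdj, of_apply, boolSign]
      by_cases hadj : G.Adj u v <;> cases s s(u, v) <;> simp [hadj]
    have hodd' : ∀ v i, x (v, i) = x (v, true) := by
      rintro v (_ | _)
      · have := congrFun hodd v
        simp only [Pi.zero_apply] at this
        linarith
      · rfl
    have heven := (h.eigen lam (fun v => x (v, true)) fun u => by
      rw [← hx' u true]
      simp only [hodd' _ (if _ then _ else _)]).resolve_left hlam
    rintro ⟨u, i⟩ ⟨v, j⟩ huv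
    rw [hodd' u i, hodd' v j]
    exact heven u v huv

theorem isSpectralBiregular_completeBipartite (k₁ k₂ : ℕ) {ρ : ℝ} (hρ : 0 ≤ ρ) :
    IsSpectralBiregular (completeBipartiteGraph (Fin k₂) (Fin k₁)) (Set.range Sum.inl)
      k₁ k₂ ρ := by
  refine ⟨?_, ?_, ?_⟩
  · rintro (u | u) (v | v) <;> simp
  · rintro (u | u) <;> rw [Fintype.sum_sum_type] <;> simp
  · intro lam x hx
    rcases eq_or_ne lam 0 with rfl | hlam
    · left; simpa using hρ
    right
    intro u v huv
    refine mul_left_cancel₀ hlam ?_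
    rw [← hx u, ← hx v]
    rcases u with u | u <;> rcases v with v | v <;> simp at huv ⊢

theorem exists_isSpectralBiregular {k₁ k₂ : ℕ} (h₁ : 3 ≤ k₁) (h₂ : 3 ≤ k₂) (N : ℕ) :
    ∃ (V : Type) (_ : Fintype V) (G : SimpleGraph V) (L : Set V), N < Fintype.card V ∧
      IsSpectralBiregular G L k₁ k₂ (√((k₁ : ℝ) - 1) + √((k₂ : ℝ) - 1)) := by
  induction N with
  | zero =>
    refine ⟨_, _, _, _, ?_, isSpectralBiregular_completeBipartite k₁ k₂ (by positivity)⟩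
    simp; omega
  | succ N ih =>
    obtain ⟨V, _, G, L, hN, h⟩ := ih
    have : Nonempty V := Fintype.card_pos_iff.1 (by omega)
    obtain ⟨s, hs⟩ := h.exists_twoLift h₁ h₂
    refine ⟨_, _, _, _, ?_, hs⟩
    simp; omega

end TwoLift

section Transfer

variable {V W : Type*} [Fintype V] [Fintype W] {G : SimpleGraph V} {L : Set V} {k₁ k₂ : ℕ} {ρ : ℝ}

theorem IsSpectralBiregular.map_equiv (h : IsSpectralBiregular G L k₁ k₂ ρ) (e : W ≃ V) :
    IsSpectralBiregular (G.comap e) (e ⁻¹' L) k₁ k₂ ρ := by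
  refine ⟨fun u v huv => h.bipartite _ _ huv, fun u => ?_, fun lam x hx => ?_⟩
  · rw [← e.symm.sum_comp]
    simpa using h.sum_adj (e u)
  · refine (h.eigen lam (x ∘ e.symm) fun u => ?_).imp_right fun hc u v huv => ?_
    · have := hx (e.symm u)
      rw [← e.symm.sum_comp] at this
      simpa using this
    · simpa using hc (e u) (e v) huv

theorem IsSpectralBiregular.abs_eq_sqrt (h : IsSpectralBiregular G L k₁ k₂ ρ) (hk₁ : 0 < k₁)
    (hk₂ : 0 < k₂) {lam : ℝ} {x : V → ℝ} (hx0 : x ≠ 0)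
    (hx : ∀ u, ∑ v, (if G.Adj u v then x v else 0) = lam * x u) (hlam : ¬ |lam| ≤ ρ) :
    |lam| = √((k₁ : ℝ) * k₂) := by
  have hc := (h.eigen lam x hx).resolve_left hlam
  have key : ∀ u v, G.Adj u v → (if u ∈ L then (k₁ : ℝ) else k₂) * x v = lam * x u := by
    intro u v huv
    rw [← hx u, ← h.sum_adj u, Finset.sum_mul]
    refine Finset.sum_congr rfl fun w _ => ?_
    split_ifs with hw
    · rw [one_mul]
      refine hc v w ?_
      have h1 := h.bipartite u v huv
      have h2 := h.bipartite u w hw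
      tauto
    · rw [zero_mul]
  obtain ⟨u, hu⟩ := Function.ne_iff.1 hx0
  have hex : ∃ v, G.Adj u v := by
    by_contra! hno
    have := h.sum_adj u
    simp only [hno, if_false, Finset.sum_const_zero] at this
    have h1 : (0 : ℝ) < k₁ := by exact_mod_cast hk₁
    have h2 : (0 : ℝ) < k₂ := by exact_mod_cast hk₂
    split_ifs at this <;> linarith
  obtain ⟨v, hv⟩ := hex
  have h1 := key u v hv
  have h2 := key v u hv.symm
  have hb := h.bipartite u v hv
  have h3 : lam ^ 2 = k₁ * k₂ := by
    refine mul_right_cancel₀ hu ?_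
    by_cases hvL : v ∈ L
    · have huL : u ∉ L := fun h => hb.1 h hvL
      simp only [hvL, huL, if_true, if_false] at h1 h2
      linear_combination (-lam) * h1 - (k₂ : ℝ) * h2
    · have huL := hb.2 hvL
      simp only [hvL, huL, if_true, if_false] at h1 h2
      linear_combination (-lam) * h1 - (k₁ : ℝ) * h2
  rw [← h3, Real.sqrt_sq_eq_abs]

theorem IsSpectralBiregular.connected [Nonempty V] (h : IsSpectralBiregular G L k₁ k₂ ρ)
    (hk₁ : 0 < k₁) (hk₂ : 0 < k₂) (hρ : ρ < √((k₁ : ℝ) * k₂)) : G.Connected := by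
  have h1 : (0 : ℝ) < k₁ := by exact_mod_cast hk₁
  have h2 : (0 : ℝ) < k₂ := by exact_mod_cast hk₂
  have hs1 : (0 : ℝ) < √k₁ := Real.sqrt_pos.2 h1
  have hs2 : (0 : ℝ) < √k₂ := Real.sqrt_pos.2 h2
  have hq1 : √(k₁ : ℝ) * √k₁ = k₁ := Real.mul_self_sqrt h1.le
  have hq2 : √(k₂ : ℝ) * √k₂ = k₂ := Real.mul_self_sqrt h2.le
  have hnbr : ∀ u, ∃ v, G.Adj u v := by
    intro u
    by_contra! hno
    have := h.sum_adj u
    simp only [hno, if_false, Finset.sum_const_zero] at this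
    split_ifs at this <;> linarith
  have side : ∀ u v, (u ∈ L ↔ v ∈ L) → G.Reachable u v := by
    intro u v huv
    let x : V → ℝ := fun w => if G.Reachable u w then (if w ∈ L then √k₁ else √k₂) else 0
    have hx : ∀ w, ∑ z, (if G.Adj w z then x z else 0) = √((k₁ : ℝ) * k₂) * x w := by
      intro w
      have hc : ∀ z, (if G.Adj w z then x z else 0) = (if G.Adj w z then (1 : ℝ) else 0) *
          (if G.Reachable u w then (if w ∈ L then √k₂ else √k₁) else 0) := by
        intro z
        split_ifs with hz hr hw hr
        · have hzL := (h.bipartite w z hz).1 hw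
          simp [x, hr.trans hz.reachable, hzL]
        · have hzL : z ∈ L := by
            by_contra hzL
            exact hw ((h.bipartite w z hz).2 hzL)
          simp [x, hr.trans hz.reachable, hzL]
        · have : ¬ G.Reachable u z := fun hz' => hr (hz'.trans hz.symm.reachable)
          simp [x, this]
        all_goals simp
      simp only [hc, ← Finset.sum_mul, h.sum_adj, x, Real.sqrt_mul h1.le]
      split_ifs <;> first
        | linear_combination (-√(k₂ : ℝ)) * hq1
        | linear_combination (-√(k₁ : ℝ)) * hq2
        | simp
    have hcst := (h.eigen _ x hx).resolve_left
      (by rw [abs_of_nonneg (Real.sqrt_nonneg _)]; exact not_le.2 hρ) u v huv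
    by_contra hnr
    simp only [x, hnr, if_false, SimpleGraph.Reachable.refl, if_true] at hcst
    split_ifs at hcst <;> linarith
  refine ⟨fun u v => ?_⟩
  by_cases huv : u ∈ L ↔ v ∈ L
  · exact side u v huv
  · obtain ⟨w, hw⟩ := hnbr u
    have := h.bipartite u w hw
    exact hw.reachable.trans (side w v (by tauto))

theorem IsSpectralBiregular.degree_eq (h : IsSpectralBiregular G L k₁ k₂ ρ) (u : V)
    [Fintype (G.neighborSet u)] : G.degree u = if u ∈ L then k₁ else k₂ := by
  have h1 := h.sum_adj u
  rw [Finset.sum_boole] at h1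
  have h2 : G.degree u = (Finset.univ.filter (G.Adj u)).card := by
    rw [← SimpleGraph.card_neighborFinset_eq_degree]
    congr 1
    ext v
    simp
  rw [h2]
  split_ifs at h1 ⊢ <;> exact_mod_cast h1

end Transfer

theorem sqrt_sub_one_add_sqrt_sub_one_lt {a b : ℝ} (ha : 3 ≤ a) (hb : 3 ≤ b) :
    √(a - 1) + √(b - 1) < √(a * b) := by
  have h1 : 1 < √(a - 1) := by rw [Real.lt_sqrt (by norm_num)]; linarith
  have h2 : 1 < √(b - 1) := by rw [Real.lt_sqrt (by norm_num)]; linarith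
  have e1 : √(a - 1) ^ 2 = a - 1 := Real.sq_sqrt (by linarith)
  have e2 : √(b - 1) ^ 2 = b - 1 := Real.sq_sqrt (by linarith)
  refine Real.lt_sqrt_of_sq_lt ?_
  have e : a * b = (√(a - 1) ^ 2 + 1) * (√(b - 1) ^ 2 + 1) := by rw [e1, e2]; ring
  have h3 : 0 < √(a - 1) * √(b - 1) - 1 := by nlinarith
  rw [e]
  nlinarith [mul_pos h3 h3]

/-- **Marcus–Spielman–Srivastava (weak-Ramanujan biregular graphs)**: for all `k₁, k₂ ≥ 3`
there exist infinitely many finite connected bipartite `(k₁,k₂)`-biregular graphs all of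
whose adjacency eigenvalues `λ` satisfy `|λ| = √(k₁k₂)` or `|λ| ≤ √(k₁−1) + √(k₂−1)`. -/
theorem exists_weak_ramanujan_biregular (k₁ k₂ : ℕ) (h₁ : 3 ≤ k₁) (h₂ : 3 ≤ k₂) (N : ℕ) :
    ∃ (n : ℕ) (G : SimpleGraph (Fin n)) (L : Set (Fin n)),
      n > N ∧ G.Connected ∧
      (∀ u v : Fin n, G.Adj u v → (u ∈ L ↔ v ∉ L)) ∧
      (∀ v ∈ L, G.degree v = k₁) ∧
      (∀ v ∉ L, G.degree v = k₂) ∧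
      ∀ lam : ℝ, (∃ x : Fin n → ℝ, x ≠ 0 ∧ G.adjMatrix ℝ *ᵥ x = lam • x) →
        |lam| = Real.sqrt ((k₁ : ℝ) * (k₂ : ℝ)) ∨
        |lam| ≤ Real.sqrt ((k₁ : ℝ) - 1) + Real.sqrt ((k₂ : ℝ) - 1) := by
  have h₁' : (3 : ℝ) ≤ k₁ := by exact_mod_cast h₁
  have h₂' : (3 : ℝ) ≤ k₂ := by exact_mod_cast h₂
  obtain ⟨V, _, G₀, L₀, hN, h₀⟩ := exists_isSpectralBiregular h₁ h₂ N
  have h := h₀.map_equiv (Fintype.equivFin V).symm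
  have : Nonempty (Fin (Fintype.card V)) := ⟨⟨N, hN⟩⟩
  refine ⟨Fintype.card V, _, _, hN, h.connected (by omega) (by omega)
    (sqrt_sub_one_add_sqrt_sub_one_lt h₁' h₂'), h.bipartite, fun v hv => ?_, fun v hv => ?_, ?_⟩
  · rw [h.degree_eq, if_pos hv]
  · rw [h.degree_eq, if_neg hv]
  · rintro lam ⟨x, hx0, hx⟩
    by_cases hlam : |lam| ≤ √((k₁ : ℝ) - 1) + √((k₂ : ℝ) - 1)
    · exact Or.inr hlam
    · refine Or.inl (h.abs_eq_sqrt (by omega) (by omega) hx0 (fun u => ?_) hlam)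
      have := congrFun hx u
      simp only [mulVec, dotProduct, SimpleGraph.adjMatrix_apply, ite_mul, one_mul, zero_mul,
        Pi.smul_apply, smul_eq_mul] at this
      convert this
end

section
/- (Lubetzky–Peres, SRW cutoff, upper bound) For every integer k ≥ 3 and all ε, δ > 0 there exists N such that: for every finite connected non-bipartite k-regular Ramanujan graph X on n ≥ N vertices, every vertex v, and every integer t ≥ (1+ε)·(k/(k−2))·log_{k−1} n, the simple random walk distribution P_v^t = (A/k)^t δ_v satisfies ‖P_v^t − u‖_TV ≤ δ, where u is the uniform distribution on the vertices. -/
open Matrix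

section Analysis

/-- Solutions of the Chebyshev recursion with parameter in `[-1, 1]` grow at most linearly. -/
theorem abs_le_of_chebyshev_recursion {y : ℝ} (hy : |y| ≤ 1) {b : ℕ → ℝ}
    (hb : ∀ j, b (j + 2) = 2 * y * b (j + 1) - b j) {M : ℝ} (h0 : |b 0| ≤ M)
    (h1 : |b 1| ≤ 2 * M) (j : ℕ) : |b j| ≤ (3 * j + 1) * M := by
  have hM : 0 ≤ M := (abs_nonneg _).trans h0
  have hy2 : y ^ 2 ≤ 1 := (sq_le_one_iff_abs_le_one y).2 hy
  have hinv : ∀ j, b (j + 1) ^ 2 - 2 * y * b j * b (j + 1) + b j ^ 2 ≤ (3 * M) ^ 2 := by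
    intro j
    induction j with
    | zero =>
      have hprod : -(y * (b 0 * b 1)) ≤ M * (2 * M) := by
        calc -(y * (b 0 * b 1)) ≤ |y * (b 0 * b 1)| := neg_le_abs _
          _ = |y| * (|b 0| * |b 1|) := by rw [abs_mul, abs_mul]
          _ ≤ 1 * (M * (2 * M)) := by gcongr
          _ = M * (2 * M) := one_mul _
      have h0' : b 0 ^ 2 ≤ M ^ 2 := sq_le_sq' (abs_le.1 h0).1 (abs_le.1 h0).2
      have h1' : b 1 ^ 2 ≤ (2 * M) ^ 2 := sq_le_sq' (abs_le.1 h1).1 (abs_le.1 h1).2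
      simp only [zero_add]
      nlinarith
    | succ j ih => rw [show j + 1 + 1 = j + 2 from rfl, hb j]; nlinarith
  have hstep : ∀ j, |b (j + 1)| ≤ |b j| + 3 * M := by
    intro j
    have hsq : (b (j + 1) - y * b j) ^ 2 ≤ (3 * M) ^ 2 := by
      nlinarith [hinv j, mul_nonneg (sub_nonneg.2 hy2) (sq_nonneg (b j))]
    have habs : |b (j + 1) - y * b j| ≤ 3 * M := abs_le_of_sq_le_sq hsq (by positivity)
    calc |b (j + 1)| = |y * b j + (b (j + 1) - y * b j)| := by ring_nf
      _ ≤ |y * b j| + |b (j + 1) - y * b j| := abs_add_le _ _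
      _ ≤ 1 * |b j| + 3 * M := by rw [abs_mul]; gcongr
      _ = |b j| + 3 * M := by rw [one_mul]
  induction j with
  | zero => simpa using h0
  | succ j ih => push_cast; linarith [hstep j]

/-- The scalar recursion of normalized non-backtracking polynomials at a Ramanujan eigenvalue
decays like `j * q ^ (-j / 2)`. -/
theorem abs_le_of_nonbacktracking_recursion {q lam : ℝ} (hq : 0 < q)
    (hlam : |lam| ≤ 2 * √q) {c : ℕ → ℝ} (h1 : (q + 1) * c 1 = lam * c 0)
    (hc : ∀ j, lam * c (j + 1) = q * c (j + 2) + c j) (j : ℕ) :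
    |c j| ≤ (3 * j + 1) * (√q)⁻¹ ^ j * |c 0| := by
  have hr : 0 < √q := Real.sqrt_pos.2 hq
  have hrr : √q * √q = q := Real.mul_self_sqrt hq.le
  have hy : |lam / (2 * √q)| ≤ 1 := by
    rw [abs_div, abs_of_pos (by positivity : 0 < 2 * √q)]
    exact div_le_one_of_le₀ hlam (by positivity)
  have key := abs_le_of_chebyshev_recursion hy (b := fun j => √q ^ j * c j) (M := |c 0|)
    (fun j => by
      have h2 : q * c (j + 2) = lam * c (j + 1) - c j := by linarith [hc j]
      have h3 : √q ^ (j + 2) * c (j + 2) = √q ^ j * (q * c (j + 2)) := by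
        rw [pow_add, pow_two, hrr]; ring
      simp only [h3, h2]
      field_simp
      ring) (by simp) (by
      have h2 : c 1 = lam * c 0 / (q + 1) := by field_simp; linarith
      simp only [pow_one, h2, abs_mul, abs_div, abs_of_pos hr]
      rw [abs_of_pos (by positivity : 0 < q + 1), ← mul_div_assoc, div_le_iff₀ (by positivity)]
      have : √q * |lam| ≤ 2 * (q + 1) := by nlinarith
      nlinarith [abs_nonneg (c 0)]) j
  rw [abs_mul, abs_of_pos (pow_pos hr j)] at key
  rw [inv_pow]
  field_simp
  linarith

/-- The Laplace transform of a biased step with drift `(k - 2) / k` decays at any exponential rate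
below the drift, for a suitably small parameter. -/
theorem exists_exp_step_le {k c : ℝ} (hk : 2 < k) (hc : c < 1) :
    ∃ s : ℝ, 0 < s ∧ ((k - 1) * Real.exp (-s) + Real.exp s) / k ≤
      Real.exp (-(c * ((k - 2) / k) * s)) := by
  have hα : 0 < (k - 2) / k := div_pos (by linarith) (by linarith)
  set α := (k - 2) / k with hαdef
  have hs0 : 0 < min 1 ((1 - c) * α) := lt_min one_pos (mul_pos (by linarith) hα)
  refine ⟨min 1 ((1 - c) * α), hs0, ?_⟩
  set s := min 1 ((1 - c) * α)
  have hs1 : s ≤ 1 := min_le_left _ _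
  have hs2 : s ≤ (1 - c) * α := min_le_right _ _
  have e1 := (abs_le.1 (Real.abs_exp_sub_one_sub_id_le (x := s) (by rwa [abs_of_pos hs0]))).2
  have e2 := (abs_le.1 (Real.abs_exp_sub_one_sub_id_le (x := -s)
    (by rwa [abs_neg, abs_of_pos hs0]))).2
  have e3 := Real.add_one_le_exp (-(c * α * s))
  have hαk : α * k = k - 2 := by rw [hαdef]; field_simp
  have hbound : ((k - 1) * Real.exp (-s) + Real.exp s) / k ≤ 1 - α * s + s ^ 2 := by
    rw [div_le_iff₀ (by linarith)]
    have : (k - 1) * Real.exp (-s) ≤ (k - 1) * (1 - s + s ^ 2) := by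
      apply mul_le_mul_of_nonneg_left _ (by linarith)
      nlinarith
    have h4 : (1 - α * s + s ^ 2) * k = k - (k - 2) * s + s ^ 2 * k := by rw [← hαk]; ring
    rw [h4]
    nlinarith
  nlinarith

end Analysis

section Matrices

variable {V : Type*} [Fintype V] [DecidableEq V]

/-- A Hermitian real matrix has an orthogonal diagonalization: an eigenbasis, written with the dot
product, for which Parseval's identity holds. -/
theorem Matrix.IsHermitian.exists_eigenvectors {A : Matrix V V ℝ} (hA : A.IsHermitian) :
    ∃ (e : V → V → ℝ) (lam : V → ℝ), (∀ i, e i ≠ 0) ∧ (∀ i, A *ᵥ e i = lam i • e i) ∧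
      ∀ d : V → ℝ, ∑ i, (e i ⬝ᵥ d) ^ 2 = ∑ x, d x ^ 2 := by
  refine ⟨fun i => ⇑(hA.eigenvectorBasis i), hA.eigenvalues, fun i h => ?_,
    fun i => hA.mulVec_eigenvectorBasis i, fun d => ?_⟩
  · have h1 := hA.eigenvectorBasis.orthonormal.1 i
    have h2 : hA.eigenvectorBasis i = 0 := by
      ext x; exact congrFun h x
    simp [h2] at h1
  · have h := hA.eigenvectorBasis.sum_sq_norm_inner_right (WithLp.toLp 2 d)
    rw [EuclideanSpace.norm_sq_eq] at h
    simpa [PiLp.inner_apply, dotProduct, mul_comm] using h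

theorem sum_abs_add_smul_le {V : Type*} [Fintype V] (a b : ℝ) (ha : 0 ≤ a) (hb : 0 ≤ b)
    (f g : V → ℝ) :
    ∑ x, |(a • f + b • g) x| ≤ a * ∑ x, |f x| + b * ∑ x, |g x| := by
  rw [Finset.mul_sum, Finset.mul_sum, ← Finset.sum_add_distrib]
  refine Finset.sum_le_sum fun x _ => (abs_add_le _ _).trans_eq ?_
  simp [abs_mul, abs_of_nonneg ha, abs_of_nonneg hb]

/-- If `T` acts on the sequence `d` as the biased reflected step on `ℕ`, then an `ℓ¹` bound of the
form `η + C * a ^ i` on `d i` propagates along the powers of `T`. -/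
theorem sum_abs_pow_mulVec_le {T : Matrix V V ℝ} {d : ℕ → V → ℝ} {k a η C : ℝ} (hk : 1 < k)
    (ha0 : 0 < a) (ha1 : a ≤ 1) (hC : 0 ≤ C) (h0 : T *ᵥ d 0 = d 1)
    (hd : ∀ j, T *ᵥ d (j + 1) = ((k - 1) / k) • d (j + 2) + k⁻¹ • d j)
    (hbd : ∀ j, ∑ x, |d j x| ≤ η + C * a ^ j) (t j : ℕ) :
    ∑ x, |(T ^ t *ᵥ d j) x| ≤ η + C * a ^ j * (((k - 1) * a + a⁻¹) / k) ^ t := by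
  have hk0 : 0 < k := by linarith
  have hk1 : 0 < k - 1 := by linarith
  set ρ := ((k - 1) * a + a⁻¹) / k with hρ
  have hρ0 : 0 < ρ := by positivity
  have haρ : a ≤ ρ := by
    rw [hρ, le_div_iff₀ hk0]
    have : a ≤ a⁻¹ := ha1.trans ((one_le_inv₀ ha0).2 ha1)
    linarith
  induction t generalizing j with
  | zero => simpa using hbd j
  | succ t ih =>
    rw [pow_succ, ← mulVec_mulVec]
    cases j with
    | zero =>
      rw [h0]
      refine (ih 1).trans ?_
      have : a * ρ ^ t ≤ ρ * ρ ^ t := by gcongr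
      rw [pow_one, pow_zero, mul_one, pow_succ]
      nlinarith
    | succ j =>
      rw [hd, mulVec_add, mulVec_smul, mulVec_smul]
      refine (sum_abs_add_smul_le _ _ (by positivity) (by positivity) _ _).trans ?_
      calc (k - 1) / k * ∑ x, |(T ^ t *ᵥ d (j + 2)) x| + k⁻¹ * ∑ x, |(T ^ t *ᵥ d j) x|
          ≤ (k - 1) / k * (η + C * a ^ (j + 2) * ρ ^ t) + k⁻¹ * (η + C * a ^ j * ρ ^ t) := by
            gcongr
            · exact ih _
            · exact ih _
        _ = η + C * a ^ (j + 1) * ρ ^ (t + 1) := by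
            rw [pow_succ ρ t]
            nth_rewrite 4 [hρ]
            field_simp
            ring

end Matrices

namespace SimpleGraph

variable {V : Type*} [Fintype V] {G : SimpleGraph V} [DecidableRel G.Adj] {k : ℕ}

theorem IsRegularOfDegree.sum_adjMatrix (hG : G.IsRegularOfDegree k) (x : V) :
    ∑ y, G.adjMatrix ℝ x y = k := by
  have h := G.adjMatrix_mulVec_const_apply (α := ℝ) (a := 1) (v := x)
  rw [hG x] at h
  simpa [mulVec, dotProduct] using h

theorem IsRegularOfDegree.sum_mulVec (hG : G.IsRegularOfDegree k) (f : V → ℝ) :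
    ∑ x, (G.adjMatrix ℝ *ᵥ f) x = k * ∑ x, f x := by
  simp only [mulVec, dotProduct]
  rw [Finset.sum_comm, Finset.mul_sum]
  refine Finset.sum_congr rfl fun y _ => ?_
  rw [← Finset.sum_mul, ← hG.sum_adjMatrix y]
  congr 1
  exact Finset.sum_congr rfl fun x _ => by simp [adj_comm]

/-- An eigenvector for the extreme eigenvalue `σ * k`, with `σ = ± 1`, is multiplied by `σ` along
every edge. -/
theorem IsRegularOfDegree.eq_mul_of_adj (hG : G.IsRegularOfDegree k) {σ : ℝ} (hσ : σ ^ 2 = 1)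
    {f : V → ℝ} (hf : G.adjMatrix ℝ *ᵥ f = (σ * k) • f) {x y : V} (hxy : G.Adj x y) :
    f x = σ * f y := by
  have hsum : ∑ x, ∑ y, G.adjMatrix ℝ x y * (f x - σ * f y) ^ 2 = 0 := by
    have e1 : ∑ x, ∑ y, G.adjMatrix ℝ x y * f x ^ 2 = k * ∑ x, f x ^ 2 := by
      rw [Finset.mul_sum]
      exact Finset.sum_congr rfl fun x _ => by rw [← Finset.sum_mul, hG.sum_adjMatrix]
    have e2 : ∑ x, ∑ y, G.adjMatrix ℝ x y * f y ^ 2 = k * ∑ x, f x ^ 2 :=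
      hG.sum_mulVec fun x => f x ^ 2
    have e3 : ∑ x, ∑ y, G.adjMatrix ℝ x y * (f x * f y) = σ * k * ∑ x, f x ^ 2 := by
      rw [Finset.mul_sum]
      refine Finset.sum_congr rfl fun x _ => ?_
      have h := congrFun hf x
      simp only [mulVec, dotProduct, Pi.smul_apply, smul_eq_mul] at h
      calc ∑ y, G.adjMatrix ℝ x y * (f x * f y) = f x * ∑ y, G.adjMatrix ℝ x y * f y := by
            rw [Finset.mul_sum]
            exact Finset.sum_congr rfl fun y _ => by ring
        _ = σ * k * f x ^ 2 := by rw [h]; ring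
    calc ∑ x, ∑ y, G.adjMatrix ℝ x y * (f x - σ * f y) ^ 2
        = ∑ x, ∑ y, G.adjMatrix ℝ x y * f x ^ 2
          + σ ^ 2 * ∑ x, ∑ y, G.adjMatrix ℝ x y * f y ^ 2
          - 2 * σ * ∑ x, ∑ y, G.adjMatrix ℝ x y * (f x * f y) := by
          simp only [Finset.mul_sum, ← Finset.sum_add_distrib, ← Finset.sum_sub_distrib]
          exact Finset.sum_congr rfl fun x _ => Finset.sum_congr rfl fun y _ => by ring
      _ = 2 * (1 - σ ^ 2) * (k * ∑ x, f x ^ 2) + (σ ^ 2 - 1) * (k * ∑ x, f x ^ 2) := by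
          rw [e1, e2, e3]; ring
      _ = 0 := by rw [hσ]; ring
  have hnn : ∀ x y, 0 ≤ G.adjMatrix ℝ x y * (f x - σ * f y) ^ 2 := fun x y => by
    rw [adjMatrix_apply]; positivity
  have h1 := (Finset.sum_eq_zero_iff_of_nonneg
    fun x _ => Finset.sum_nonneg fun y _ => hnn x y).1 hsum x (Finset.mem_univ x)
  have h2 := (Finset.sum_eq_zero_iff_of_nonneg fun y _ => hnn x y).1 h1 y (Finset.mem_univ y)
  rw [adjMatrix_apply, if_pos hxy, one_mul] at h2
  linarith [pow_eq_zero_iff (two_ne_zero) |>.1 h2]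

theorem Connected.forall_of_forall_adj {V : Type*} {G : SimpleGraph V} (hG : G.Connected)
    {p : V → Prop} (h : ∀ x y, G.Adj x y → p x → p y) {x : V} (hx : p x) (y : V) : p y := by
  obtain ⟨w⟩ := hG.preconnected x y
  induction w with
  | nil => exact hx
  | cons hadj _ ih => exact ih (h _ _ hadj hx)

theorem IsRegularOfDegree.eq_of_mulVec_eq (hG : G.IsRegularOfDegree k) (hc : G.Connected)
    {f : V → ℝ} (hf : G.adjMatrix ℝ *ᵥ f = (k : ℝ) • f) (x y : V) : f y = f x :=
  hc.forall_of_forall_adj (p := fun y => f y = f x)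
    (fun a b hab ha => by
      have := hG.eq_mul_of_adj (σ := 1) (by norm_num) (by rwa [one_mul]) hab
      linarith) rfl y

theorem IsRegularOfDegree.colorable_two_of_mulVec_eq_neg (hG : G.IsRegularOfDegree k)
    (hc : G.Connected) {f : V → ℝ} (hf0 : f ≠ 0) (hf : G.adjMatrix ℝ *ᵥ f = (-(k : ℝ)) • f) :
    G.Colorable 2 := by
  have hadj : ∀ x y, G.Adj x y → f x = -f y := fun x y hxy => by
    have := hG.eq_mul_of_adj (σ := -1) (by norm_num) (by rwa [neg_one_mul]) hxy
    linarith
  obtain ⟨z, hz⟩ := Function.ne_iff.1 hf0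
  have hne : ∀ x, f x ≠ 0 := hc.forall_of_forall_adj (p := fun y => f y ≠ 0)
    (fun a b hab ha hb => ha (by rw [hadj a b hab, hb, neg_zero])) hz
  let C : G.Coloring Bool := Coloring.mk (fun x => decide (0 < f x)) (by
    intro x y hxy heq
    have h := hadj x y hxy
    have hiff : 0 < f x ↔ 0 < f y := decide_eq_decide.1 heq
    rcases lt_or_gt_of_ne (hne y) with hy | hy
    · exact absurd (hiff.1 (by linarith)) (by linarith)
    · exact absurd (hiff.2 hy) (by linarith))
  simpa using C.colorable

variable [DecidableEq V] (G)

/-- The number of non-backtracking walks of length `j + 1` from `v` whose last step goes from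
`x` to `y`. -/
def nonbacktrackingFlow (v : V) : ℕ → V → V → ℝ
  | 0 => fun x y => G.adjMatrix ℝ x y * if x = v then 1 else 0
  | j + 1 => fun x y => G.adjMatrix ℝ x y *
      (∑ z, nonbacktrackingFlow v j z x - nonbacktrackingFlow v j y x)

/-- The distribution of the endpoint of a uniform non-backtracking walk of length `j` from `v` in a
`k`-regular graph. -/
noncomputable def nonbacktrackingDist (k : ℝ) (v : V) : ℕ → V → ℝ
  | 0 => fun w => if w = v then 1 else 0
  | j + 1 => fun y => (k * (k - 1) ^ j)⁻¹ * ∑ x, G.nonbacktrackingFlow v j x y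

theorem nonbacktrackingFlow_nonneg (v : V) (j : ℕ) (x y : V) :
    0 ≤ G.nonbacktrackingFlow v j x y := by
  induction j generalizing x y with
  | zero =>
    simp only [nonbacktrackingFlow, adjMatrix_apply]
    positivity
  | succ j ih =>
    simp only [nonbacktrackingFlow]
    refine mul_nonneg (by rw [adjMatrix_apply]; positivity) (sub_nonneg.2 ?_)
    exact Finset.single_le_sum (f := fun z => G.nonbacktrackingFlow v j z x)
      (fun z _ => ih z x) (Finset.mem_univ y)

theorem adjMatrix_mul_nonbacktrackingFlow (v : V) (j : ℕ) (x y : V) :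
    G.adjMatrix ℝ x y * G.nonbacktrackingFlow v j x y = G.nonbacktrackingFlow v j x y := by
  cases j <;> simp only [nonbacktrackingFlow, adjMatrix_apply] <;> split_ifs <;> simp

theorem nonbacktrackingDist_nonneg {k : ℝ} (hk : 1 ≤ k) (v : V) (j : ℕ) (x : V) :
    0 ≤ G.nonbacktrackingDist k v j x := by
  cases j with
  | zero => simp only [nonbacktrackingDist]; positivity
  | succ j =>
    have : 0 ≤ k - 1 := by linarith
    exact mul_nonneg (by positivity)
      (Finset.sum_nonneg fun z _ => G.nonbacktrackingFlow_nonneg v j z x)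

variable {G}

theorem IsRegularOfDegree.sum_nonbacktrackingFlow_zero (hG : G.IsRegularOfDegree k) (v y : V) :
    ∑ x, G.nonbacktrackingFlow v 0 y x = k * if y = v then 1 else 0 := by
  simp only [nonbacktrackingFlow]
  rw [← Finset.sum_mul, hG.sum_adjMatrix]

theorem IsRegularOfDegree.sum_nonbacktrackingFlow_succ (hG : G.IsRegularOfDegree k) (v : V)
    (j : ℕ) (y : V) :
    ∑ x, G.nonbacktrackingFlow v (j + 1) y x =
      (k - 1) * ∑ x, G.nonbacktrackingFlow v j x y := by
  have h : ∀ x, G.nonbacktrackingFlow v (j + 1) y x = G.adjMatrix ℝ y x *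
      (∑ z, G.nonbacktrackingFlow v j z y) - G.nonbacktrackingFlow v j x y := fun x => by
    rw [← G.adjMatrix_mul_nonbacktrackingFlow v j x y]
    simp only [nonbacktrackingFlow, adjMatrix_apply, adj_comm]
    ring
  simp only [h]
  rw [Finset.sum_sub_distrib, ← Finset.sum_mul, hG.sum_adjMatrix]
  ring

theorem sum_nonbacktrackingFlow_succ' (v : V) (j : ℕ) (y : V) :
    ∑ x, G.nonbacktrackingFlow v (j + 1) x y =
      ∑ x, G.adjMatrix ℝ y x * ∑ z, G.nonbacktrackingFlow v j z x -
        ∑ x, G.nonbacktrackingFlow v j y x := by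
  rw [← Finset.sum_sub_distrib]
  refine Finset.sum_congr rfl fun x _ => ?_
  rw [← G.adjMatrix_mul_nonbacktrackingFlow v j y x]
  simp only [nonbacktrackingFlow, adjMatrix_apply, adj_comm]
  ring

theorem mulVec_nonbacktrackingDist_zero (hk : k ≠ 0) (v : V) :
    G.adjMatrix ℝ *ᵥ G.nonbacktrackingDist k v 0 = (k : ℝ) • G.nonbacktrackingDist k v 1 := by
  have : (k : ℝ) ≠ 0 := by exact_mod_cast hk
  ext y
  simp only [mulVec, dotProduct, nonbacktrackingDist, nonbacktrackingFlow, Pi.smul_apply,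
    smul_eq_mul, pow_zero, mul_one]
  rw [mul_inv_cancel_left₀ this]
  simp [adj_comm]

theorem IsRegularOfDegree.mulVec_nonbacktrackingDist_succ (hG : G.IsRegularOfDegree k)
    (hk : 2 ≤ k) (v : V) (j : ℕ) :
    G.adjMatrix ℝ *ᵥ G.nonbacktrackingDist k v (j + 1) =
      ((k : ℝ) - 1) • G.nonbacktrackingDist k v (j + 2) + G.nonbacktrackingDist k v j := by
  have hk' : (2 : ℝ) ≤ k := by exact_mod_cast hk
  have hk0 : (k : ℝ) ≠ 0 := by linarith
  have hk1 : (k : ℝ) - 1 ≠ 0 := by linarith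
  ext y
  have hl : (G.adjMatrix ℝ *ᵥ G.nonbacktrackingDist k v (j + 1)) y =
      ((k : ℝ) * (k - 1) ^ j)⁻¹ *
        ∑ x, G.adjMatrix ℝ y x * ∑ z, G.nonbacktrackingFlow v j z x := by
    simp only [mulVec, dotProduct, nonbacktrackingDist, Finset.mul_sum]
    refine Finset.sum_congr rfl fun x _ => Finset.sum_congr rfl fun z _ => by ring
  have hflow := sum_nonbacktrackingFlow_succ' (G := G) v j y
  rw [hl, Pi.add_apply, Pi.smul_apply, smul_eq_mul]
  cases j with
  | zero =>
    rw [hG.sum_nonbacktrackingFlow_zero] at hflow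
    simp only [nonbacktrackingDist]
    rw [hflow]
    field_simp
    ring
  | succ j =>
    rw [hG.sum_nonbacktrackingFlow_succ] at hflow
    simp only [nonbacktrackingDist]
    rw [hflow]
    field_simp
    ring

theorem IsRegularOfDegree.sum_nonbacktrackingDist (hG : G.IsRegularOfDegree k)
    (hk : 2 ≤ k) (v : V) (j : ℕ) : ∑ x, G.nonbacktrackingDist k v j x = 1 := by
  have hk' : (2 : ℝ) ≤ k := by exact_mod_cast hk
  have h0 : ∑ x, G.nonbacktrackingDist k v 0 x = 1 := by simp [nonbacktrackingDist]
  induction j using Nat.twoStepInduction with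
  | zero => exact h0
  | one =>
    have h := hG.sum_mulVec (G.nonbacktrackingDist k v 0)
    rw [mulVec_nonbacktrackingDist_zero (by omega), h0] at h
    simp only [Pi.smul_apply, smul_eq_mul, ← Finset.mul_sum] at h
    exact mul_left_cancel₀ (by linarith) h
  | more j ih1 ih2 =>
    have h := hG.sum_mulVec (G.nonbacktrackingDist k v (j + 1))
    rw [hG.mulVec_nonbacktrackingDist_succ hk, ih2] at h
    simp only [Pi.add_apply, Pi.smul_apply, smul_eq_mul, Finset.sum_add_distrib,
      ← Finset.mul_sum, ih1] at h
    exact mul_left_cancel₀ (a := (k : ℝ) - 1) (by linarith) (by linarith)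

/-- On a non-bipartite Ramanujan graph, the non-backtracking walk of length `j` is close to uniform
in `ℓ¹` once `(k - 1) ^ j` is much larger than the number of vertices. -/
theorem IsRegularOfDegree.sum_abs_nonbacktrackingDist_sub_le (hG : G.IsRegularOfDegree k)
    (hk : 2 ≤ k) (hc : G.Connected) (hcol : ¬ G.Colorable 2)
    (hR : ∀ lam : ℝ, (∃ x : V → ℝ, x ≠ 0 ∧ G.adjMatrix ℝ *ᵥ x = lam • x) →
      |lam| = (k : ℝ) ∨ |lam| ≤ 2 * √((k : ℝ) - 1)) (v : V) (j : ℕ) :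
    ∑ x, |G.nonbacktrackingDist k v j x - 1 / (Fintype.card V : ℝ)| ≤
      √(Fintype.card V) * ((3 * j + 1) * (√((k : ℝ) - 1))⁻¹ ^ j) := by
  have hk' : (2 : ℝ) ≤ k := by exact_mod_cast hk
  have hn : (0 : ℝ) < Fintype.card V := by exact_mod_cast Fintype.card_pos_iff.2 ⟨v⟩
  have hherm : (G.adjMatrix ℝ).IsHermitian := by
    rw [Matrix.IsHermitian, conjTranspose_eq_transpose_of_trivial]; exact G.isSymm_adjMatrix
  obtain ⟨e, lam, he0, he, hpars⟩ := hherm.exists_eigenvectors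
  let u : V → ℝ := fun _ => 1 / (Fintype.card V : ℝ)
  let d : ℕ → V → ℝ := fun j => G.nonbacktrackingDist k v j - u
  have hu : G.adjMatrix ℝ *ᵥ u = (k : ℝ) • u := by
    ext x
    simp only [mulVec, dotProduct, u, ← Finset.sum_mul, hG.sum_adjMatrix, Pi.smul_apply,
      smul_eq_mul]
  have hd1 : G.adjMatrix ℝ *ᵥ d 0 = (k : ℝ) • d 1 := by
    simp only [d]
    rw [mulVec_sub, hu, mulVec_nonbacktrackingDist_zero (by omega), smul_sub]
  have hd2 : ∀ j, G.adjMatrix ℝ *ᵥ d (j + 1) = ((k : ℝ) - 1) • d (j + 2) + d j := by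
    intro j
    simp only [d]
    rw [mulVec_sub, hu, hG.mulVec_nonbacktrackingDist_succ hk]
    module
  have hsum : ∀ j, ∑ x, d j x = 0 := by
    intro j
    simp only [d, Pi.sub_apply, Finset.sum_sub_distrib, hG.sum_nonbacktrackingDist hk, u]
    simp [hn.ne']
  have hdot : ∀ i f, e i ⬝ᵥ (G.adjMatrix ℝ *ᵥ f) = lam i * (e i ⬝ᵥ f) := by
    intro i f
    rw [dotProduct_mulVec, ← mulVec_transpose, G.transpose_adjMatrix, he, smul_dotProduct,
      smul_eq_mul]
  have hcoef : ∀ i, |e i ⬝ᵥ d j| ≤ (3 * j + 1) * (√((k : ℝ) - 1))⁻¹ ^ j * |e i ⬝ᵥ d 0| := by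
    intro i
    rcases hR (lam i) ⟨e i, he0 i, he i⟩ with h | h
    · have hlam : lam i = k := by
        rcases (abs_eq (by positivity)).1 h with h | h
        · exact h
        · exact absurd (hG.colorable_two_of_mulVec_eq_neg hc (he0 i) (h ▸ he i)) hcol
      have hconst := hG.eq_of_mulVec_eq hc (hlam ▸ he i) v
      have hz : e i ⬝ᵥ d j = 0 := by
        simp only [dotProduct, hconst, ← Finset.mul_sum, hsum, mul_zero]
      rw [hz, abs_zero]
      positivity
    · refine abs_le_of_nonbacktracking_recursion (c := fun j => e i ⬝ᵥ d j)
        (by linarith) h ?_ (fun j => ?_) j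
      · have := hdot i (d 0)
        rw [hd1, dotProduct_smul, smul_eq_mul] at this
        linarith
      · have := hdot i (d (j + 1))
        rw [hd2, dotProduct_add, dotProduct_smul, smul_eq_mul] at this
        linarith
  have hd0 : ∑ x, d 0 x ^ 2 ≤ 1 := by
    have h1 : ∀ x, d 0 x ^ 2 = G.nonbacktrackingDist k v 0 x
        - 1 / (Fintype.card V : ℝ) * G.nonbacktrackingDist k v 0 x
        - 1 / (Fintype.card V : ℝ) * d 0 x := by
      intro x
      simp only [d, u, nonbacktrackingDist, Pi.sub_apply]
      split_ifs <;> ring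
    simp only [h1, Finset.sum_sub_distrib, ← Finset.mul_sum, hsum,
      hG.sum_nonbacktrackingDist hk]
    have : 0 ≤ 1 / (Fintype.card V : ℝ) := by positivity
    linarith
  set B := (3 * j + 1) * (√((k : ℝ) - 1))⁻¹ ^ j
  have hB : 0 ≤ B := by positivity
  have hl2 : ∑ x, d j x ^ 2 ≤ B ^ 2 := by
    rw [← hpars]
    calc ∑ i, (e i ⬝ᵥ d j) ^ 2 ≤ ∑ i, B ^ 2 * (e i ⬝ᵥ d 0) ^ 2 := by
          refine Finset.sum_le_sum fun i _ => ?_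
          rw [← mul_pow]
          refine sq_le_sq.2 ?_
          rw [abs_mul, abs_of_nonneg hB]
          exact hcoef i
      _ = B ^ 2 * ∑ x, d 0 x ^ 2 := by rw [← Finset.mul_sum, hpars]
      _ ≤ B ^ 2 * 1 := by gcongr
      _ = B ^ 2 := mul_one _
  refine abs_le_of_sq_le_sq' ?_ (by positivity) |>.2
  calc (∑ x, |d j x|) ^ 2 ≤ Fintype.card V * ∑ x, |d j x| ^ 2 := by
        simpa using sq_sum_le_card_mul_sum_sq (s := Finset.univ) (f := fun x => |d j x|)
    _ = Fintype.card V * ∑ x, d j x ^ 2 := by simp only [sq_abs]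
    _ ≤ Fintype.card V * B ^ 2 := by gcongr
    _ = (√(Fintype.card V) * B) ^ 2 := by rw [mul_pow (√_), Real.sq_sqrt hn.le]

/-- `ℓ¹` bound on the simple random walk, given an `ℓ¹` bound on the non-backtracking walks of
length at least `m`. -/
theorem IsRegularOfDegree.sum_abs_pow_sub_le (hG : G.IsRegularOfDegree k) (hk : 2 ≤ k) (v : V)
    {m : ℕ} {η s : ℝ} (hη : 0 ≤ η) (hs : 0 ≤ s)
    (hm : ∀ j, m ≤ j →
      ∑ x, |G.nonbacktrackingDist k v j x - 1 / (Fintype.card V : ℝ)| ≤ η) (t : ℕ) :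
    ∑ x, |((((k : ℝ)⁻¹ • G.adjMatrix ℝ) ^ t) *ᵥ (fun w : V => if w = v then 1 else 0)) x
        - 1 / (Fintype.card V : ℝ)| ≤
      η + 2 * Real.exp (s * m) *
        ((((k : ℝ) - 1) * Real.exp (-s) + Real.exp s) / k) ^ t := by
  have hk' : (2 : ℝ) ≤ k := by exact_mod_cast hk
  have hk0 : (k : ℝ) ≠ 0 := by linarith
  have hn : (0 : ℝ) < Fintype.card V := by exact_mod_cast Fintype.card_pos_iff.2 ⟨v⟩
  let u : V → ℝ := fun _ => 1 / (Fintype.card V : ℝ)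
  let d : ℕ → V → ℝ := fun j => G.nonbacktrackingDist k v j - u
  set T := (k : ℝ)⁻¹ • G.adjMatrix ℝ with hT
  have hu : T *ᵥ u = u := by
    ext x
    rw [hT, smul_mulVec]
    simp only [mulVec, dotProduct, u, ← Finset.sum_mul, hG.sum_adjMatrix, Pi.smul_apply,
      smul_eq_mul]
    field_simp
  have hut : T ^ t *ᵥ u = u := by
    induction t with
    | zero => simp
    | succ t ih => rw [pow_succ, ← mulVec_mulVec, hu, ih]
  have h0 : T *ᵥ d 0 = d 1 := by
    simp only [d]
    rw [mulVec_sub, hu, hT, smul_mulVec, mulVec_nonbacktrackingDist_zero (by omega), smul_smul,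
      inv_mul_cancel₀ hk0, one_smul]
  have hd : ∀ j, T *ᵥ d (j + 1) = (((k : ℝ) - 1) / k) • d (j + 2) + (k : ℝ)⁻¹ • d j := by
    intro j
    simp only [d]
    rw [mulVec_sub, hu, hT, smul_mulVec, hG.mulVec_nonbacktrackingDist_succ hk]
    ext x
    simp only [Pi.sub_apply, Pi.add_apply, Pi.smul_apply, smul_eq_mul]
    field_simp
    ring
  have htwo : ∀ j, ∑ x, |d j x| ≤ 2 := by
    intro j
    calc ∑ x, |d j x| ≤ ∑ x, (G.nonbacktrackingDist k v j x + u x) := by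
          refine Finset.sum_le_sum fun x _ => (abs_sub _ _).trans_eq ?_
          rw [abs_of_nonneg (G.nonbacktrackingDist_nonneg (by linarith) v j x),
            abs_of_nonneg (show 0 ≤ u x by positivity)]
      _ = 2 := by
          rw [Finset.sum_add_distrib, hG.sum_nonbacktrackingDist hk]
          simp [u, hn.ne']
          norm_num
  have hbd : ∀ j, ∑ x, |d j x| ≤ η + 2 * Real.exp (s * m) * Real.exp (-s) ^ j := by
    intro j
    rcases le_total m j with h | h
    · have := hm j h
      have h2 : 0 ≤ 2 * Real.exp (s * m) * Real.exp (-s) ^ j := by positivity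
      simp only [d, u, Pi.sub_apply]
      linarith
    · have h2 : 1 ≤ Real.exp (s * m) * Real.exp (-s) ^ j := by
        rw [← Real.exp_nat_mul, ← Real.exp_add]
        refine Real.one_le_exp ?_
        have : (j : ℝ) ≤ m := by exact_mod_cast h
        nlinarith
      linarith [htwo j]
  have key := sum_abs_pow_mulVec_le (T := T) (d := d) (by linarith : (1 : ℝ) < k)
    (Real.exp_pos (-s)) (Real.exp_le_one_iff.2 (by linarith)) (by positivity) h0 hd hbd t 0
  rw [← Real.exp_neg, neg_neg, pow_zero, mul_one] at key
  simp only [d] at key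
  rw [mulVec_sub, hut] at key
  exact key

end SimpleGraph

/-- If `n ≤ q ^ (j / (1 + ε / 2))` then `√n * j * q ^ (-j / 2)` is small for `j`
large. -/
theorem exists_forall_sqrt_mul_le {q ε δ : ℝ} (hq : 1 < q) (hε : 0 < ε) (hδ : 0 < δ) :
    ∃ J : ℕ, ∀ (n : ℝ) (j : ℕ), 0 < n → J ≤ j →
      (1 + ε / 2) * (Real.log n / Real.log q) ≤ j →
      √n * ((3 * j + 1) * (√q)⁻¹ ^ j) ≤ δ := by
  have hlq : 0 < Real.log q := Real.log_pos hq
  set κ := ε / (4 + 2 * ε) * Real.log q with hκ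
  have hκ0 : 0 < κ := by positivity
  have hr1 : Real.exp (-κ) < 1 := Real.exp_lt_one_iff.2 (by linarith)
  have ht1 := tendsto_self_mul_const_pow_of_lt_one (Real.exp_pos (-κ)).le hr1
  have ht2 := tendsto_pow_atTop_nhds_zero_of_lt_one (Real.exp_pos (-κ)).le hr1
  have ht : Filter.Tendsto (fun j : ℕ => (3 * (j : ℝ) + 1) * Real.exp (-κ) ^ j) Filter.atTop
      (nhds 0) := by
    have := (ht1.const_mul 3).add ht2
    rw [mul_zero, add_zero] at this
    refine this.congr fun j => by ring
  obtain ⟨J, hJ⟩ := Filter.eventually_atTop.1 (ht.eventually_le_const hδ)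
  refine ⟨J, fun n j hn hj hnj => le_trans ?_ (hJ j hj)⟩
  have hsn : √n = Real.exp (Real.log n / 2) := by
    rw [← Real.log_sqrt hn.le, Real.exp_log (Real.sqrt_pos.2 hn)]
  have hsq : (√q)⁻¹ ^ j = Real.exp (-(j * (Real.log q / 2))) := by
    rw [← Real.log_sqrt (by linarith), Real.exp_neg, Real.exp_nat_mul,
      Real.exp_log (Real.sqrt_pos.2 (by linarith)), inv_pow]
  have hexp : √n * (√q)⁻¹ ^ j ≤ Real.exp (-κ) ^ j := by
    rw [hsn, hsq, ← Real.exp_add, ← Real.exp_nat_mul]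
    refine Real.exp_le_exp.2 ?_
    have h1 : (1 + ε / 2) * Real.log n ≤ j * Real.log q := by
      have := mul_le_mul_of_nonneg_right hnj hlq.le
      rwa [mul_assoc, div_mul_cancel₀ _ hlq.ne'] at this
    have h2 : Real.log n ≤ j * Real.log q / (1 + ε / 2) := by
      rw [le_div_iff₀ (by positivity)]; linarith
    have h3 : j * Real.log q / (1 + ε / 2) / 2 - j * (Real.log q / 2) = j * -κ := by
      rw [hκ]; field_simp; ring
    linarith
  calc √n * ((3 * j + 1) * (√q)⁻¹ ^ j) = (3 * j + 1) * (√n * (√q)⁻¹ ^ j) := by ring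
    _ ≤ (3 * j + 1) * Real.exp (-κ) ^ j := by gcongr

/-- **Lubetzky–Peres (SRW cutoff, upper bound)**: for every `k ≥ 3` and `ε, δ > 0` there
is `N` such that on every finite connected non-bipartite `k`-regular Ramanujan graph on
`n ≥ N` vertices, for every starting vertex and every time
`t ≥ (1+ε)·(k/(k−2))·log_{k−1} n`, the simple random walk distribution is within total
variation distance `δ` of the uniform distribution. -/
theorem srw_cutoff_upper (k : ℕ) (hk : 3 ≤ k) (ε δ : ℝ) (hε : 0 < ε) (hδ : 0 < δ) :
    ∃ N : ℕ, ∀ (V : Type) [Fintype V] [DecidableEq V]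
      (G : SimpleGraph V) [DecidableRel G.Adj],
      G.Connected → ¬ G.Colorable 2 → G.IsRegularOfDegree k →
      (∀ lam : ℝ, (∃ x : V → ℝ, x ≠ 0 ∧ G.adjMatrix ℝ *ᵥ x = lam • x) →
        |lam| = (k : ℝ) ∨ |lam| ≤ 2 * Real.sqrt ((k : ℝ) - 1)) →
      Fintype.card V ≥ N →
      ∀ (v : V) (t : ℕ),
        (t : ℝ) ≥ (1 + ε) * ((k : ℝ) / ((k : ℝ) - 2)) *
          (Real.log (Fintype.card V) / Real.log ((k : ℝ) - 1)) →
        (1 / 2) * ∑ x : V,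
            |((((k : ℝ)⁻¹ • G.adjMatrix ℝ) ^ t) *ᵥ (fun w : V => if w = v then 1 else 0)) x
              - 1 / (Fintype.card V : ℝ)| ≤ δ := by
  have hk' : (3 : ℝ) ≤ k := by exact_mod_cast hk
  have hlq : 0 < Real.log ((k : ℝ) - 1) := Real.log_pos (by linarith)
  obtain ⟨J, hJ⟩ := exists_forall_sqrt_mul_le (q := (k : ℝ) - 1) (by linarith) hε hδ
  obtain ⟨s, hs, hstep⟩ := exists_exp_step_le (k := k) (c := (1 + 3 / 4 * ε) / (1 + ε))
    (by linarith) (by rw [div_lt_one (by positivity)]; linarith)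
  have hL : Filter.Tendsto (fun n : ℕ => Real.log n / Real.log ((k : ℝ) - 1)) Filter.atTop
      Filter.atTop :=
    (Real.tendsto_log_atTop.comp tendsto_natCast_atTop_atTop).atTop_div_const hlq
  obtain ⟨N, hN⟩ := Filter.eventually_atTop.1 ((hL.eventually_ge_atTop (J : ℝ)).and
    (hL.eventually_ge_atTop ((s - Real.log (δ / 2)) / (s * ε / 4))))
  refine ⟨N, fun V _ _ G _ hconn hcol hreg hR hcard v t ht => ?_⟩
  obtain ⟨hN1, hN2⟩ := hN _ hcard
  set L := Real.log (Fintype.card V) / Real.log ((k : ℝ) - 1) with hLdef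
  have hL0 : 0 ≤ L := (Nat.cast_nonneg J).trans hN1
  have hn : (0 : ℝ) < Fintype.card V := by exact_mod_cast Fintype.card_pos_iff.2 ⟨v⟩
  set m := ⌈(1 + ε / 2) * L⌉₊
  have hm : m ≤ (1 + ε / 2) * L + 1 := (Nat.ceil_lt_add_one (by positivity)).le
  have hbound := hreg.sum_abs_pow_sub_le (by omega) v (m := m) hδ.le hs.le (fun j hj => by
    have hj' : (1 + ε / 2) * L ≤ j := (Nat.le_ceil _).trans (by exact_mod_cast hj)
    refine (hreg.sum_abs_nonbacktrackingDist_sub_le (by omega) hconn hcol hR v j).trans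
      (hJ _ j hn ?_ hj')
    have : (J : ℝ) ≤ j := by nlinarith
    exact_mod_cast this) t
  have hpow : Real.exp (s * m) * ((((k : ℝ) - 1) * Real.exp (-s) + Real.exp s) / k) ^ t
      ≤ δ / 2 := by
    calc Real.exp (s * m) * ((((k : ℝ) - 1) * Real.exp (-s) + Real.exp s) / k) ^ t
        ≤ Real.exp (s * m) *
          Real.exp (-((1 + 3 / 4 * ε) / (1 + ε) * (((k : ℝ) - 2) / k) * s)) ^ t := by
          have : 0 ≤ (k : ℝ) - 1 := by linarith
          gcongr
      _ = Real.exp (s * m - t * ((1 + 3 / 4 * ε) / (1 + ε) * (((k : ℝ) - 2) / k) * s)) := by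
          rw [← Real.exp_nat_mul, ← Real.exp_add]; ring_nf
      _ ≤ Real.exp (Real.log (δ / 2)) := by
          refine Real.exp_le_exp.2 ?_
          have hk2 : 0 < (k : ℝ) - 2 := by linarith
          have h1 : (1 + 3 / 4 * ε) * L * s ≤
              t * ((1 + 3 / 4 * ε) / (1 + ε) * (((k : ℝ) - 2) / k) * s) := by
            calc (1 + 3 / 4 * ε) * L * s = (1 + ε) * ((k : ℝ) / ((k : ℝ) - 2)) * L *
                  ((1 + 3 / 4 * ε) / (1 + ε) * (((k : ℝ) - 2) / k) * s) := by field_simp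
              _ ≤ _ := by gcongr
          have h2 : s * m ≤ s * ((1 + ε / 2) * L + 1) := by gcongr
          have h3 : s - Real.log (δ / 2) ≤ L * (s * ε / 4) :=
            (div_le_iff₀ (by positivity)).1 hN2
          linarith
      _ = δ / 2 := Real.exp_log (by positivity)
  linarith
end

section
/- (Lubetzky–Peres, SRW cutoff, lower bound) For every integer k ≥ 3 and all ε, δ > 0 there exists N such that: for every finite connected non-bipartite k-regular Ramanujan graph X on n ≥ N vertices, every vertex v, and every integer t ≤ (1−ε)·(k/(k−2))·log_{k−1} n, the simple random walk distribution P_v^t = (A/k)^t δ_v satisfies ‖P_v^t − u‖_TV ≥ 1 − δ, where u is the uniform distribution on the vertices. -/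
open Matrix

namespace SimpleGraph

variable {V : Type*} {G : SimpleGraph V}

theorem Connected.exists_adj_dist_add_one_eq (hG : G.Connected) {v x : V} (hx : x ≠ v) :
    ∃ y, G.Adj x y ∧ G.dist v y + 1 = G.dist v x := by
  obtain ⟨w, hw⟩ := hG.exists_walk_length_eq_dist x v
  cases w with
  | nil => exact absurd rfl hx
  | @cons _ y _ h p =>
    refine ⟨y, h, ?_⟩
    have h1 : G.dist y v ≤ p.length := dist_le p
    have h2 : G.dist x v ≤ G.dist x y + G.dist y v := hG.dist_triangle
    have h3 : G.dist x y = 1 := dist_eq_one_iff_adj.2 h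
    rw [Walk.length_cons] at hw
    rw [dist_comm (u := v) (v := y), dist_comm (u := v) (v := x)]
    omega

theorem Connected.dist_le_dist_add_one (hG : G.Connected) (v : V) {x y : V} (h : G.Adj x y) :
    G.dist v y ≤ G.dist v x + 1 := by
  have h2 : G.dist v y ≤ G.dist v x + G.dist x y := hG.dist_triangle
  rwa [dist_eq_one_iff_adj.2 h] at h2

variable [Fintype V] [DecidableEq V] [DecidableRel G.Adj] {k : ℕ}

theorem sum_pow_dist_neighborFinset_le (hG : G.Connected) (hk : G.IsRegularOfDegree k)
    {θ : ℝ} (hθ : 1 ≤ θ) {v x : V} (hx : x ≠ v) :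
    ∑ y ∈ G.neighborFinset x, θ ^ G.dist v y ≤ θ ^ G.dist v x * ((k - 1) * θ + θ⁻¹) := by
  obtain ⟨p, hp, hd⟩ := hG.exists_adj_dist_add_one_eq hx
  have hpm : p ∈ G.neighborFinset x := by simpa using hp
  have h0 : (0 : ℝ) < θ := by linarith
  have hpos : 1 ≤ k := by
    have h := Finset.card_pos.2 ⟨p, hpm⟩
    rwa [card_neighborFinset_eq_degree, hk.degree_eq] at h
  rw [← Finset.add_sum_erase _ _ hpm]
  have h1 : ∑ y ∈ (G.neighborFinset x).erase p, θ ^ G.dist v y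
      ≤ ((G.neighborFinset x).erase p).card • θ ^ (G.dist v x + 1) := by
    refine Finset.sum_le_card_nsmul _ _ _ fun y hy => pow_le_pow_right₀ hθ ?_
    exact hG.dist_le_dist_add_one v (by simpa using Finset.mem_of_mem_erase hy)
  rw [Finset.card_erase_of_mem hpm, card_neighborFinset_eq_degree, hk.degree_eq, nsmul_eq_mul,
    Nat.cast_sub hpos, Nat.cast_one] at h1
  have h2 : θ ^ G.dist v p = θ ^ G.dist v x * θ⁻¹ := by
    rw [← hd, pow_succ]; field_simp
  rw [h2]
  rw [pow_succ] at h1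
  linarith

theorem card_filter_dist_eq_le (hG : G.Connected) (hk : G.IsRegularOfDegree k) (v y : V) :
    (((G.neighborFinset y).filter fun x => G.dist v y + 1 = G.dist v x).card : ℝ)
      ≤ k - 1 + if y = v then 1 else 0 := by
  have hcard : (G.neighborFinset y).card = k := by
    rw [card_neighborFinset_eq_degree, hk.degree_eq]
  split_ifs with h
  · have := Finset.card_filter_le (G.neighborFinset y) fun x => G.dist v y + 1 = G.dist v x
    rw [hcard] at this
    simpa using this
  · obtain ⟨p, hp, hd⟩ := hG.exists_adj_dist_add_one_eq h
    have hlt : ((G.neighborFinset y).filter fun x => G.dist v y + 1 = G.dist v x).card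
        < (G.neighborFinset y).card := by
      refine Finset.card_lt_card (Finset.filter_ssubset.2 ⟨p, by simpa using hp, ?_⟩)
      omega
    rw [hcard] at hlt
    have : (((G.neighborFinset y).filter fun x => G.dist v y + 1 = G.dist v x).card : ℝ) + 1
        ≤ k := by exact_mod_cast hlt
    linarith

theorem sum_pow_dist_le (hG : G.Connected) (hk : G.IsRegularOfDegree k)
    {z : ℝ} (hz : 0 < z) (hkz : (k - 1) * z < 1) (v : V) :
    ∑ x, z ^ G.dist v x ≤ (1 + z) / (1 - (k - 1) * z) := by
  have key : ∀ x, z ^ G.dist v x ≤ (if x = v then 1 else 0) +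
      ∑ y ∈ G.neighborFinset x,
        if G.dist v y + 1 = G.dist v x then z * z ^ G.dist v y else 0 := by
    intro x
    have hnn : ∀ y ∈ G.neighborFinset x,
        0 ≤ if G.dist v y + 1 = G.dist v x then z * z ^ G.dist v y else 0 := by
      intro y _
      split_ifs <;> positivity
    by_cases h : x = v
    · subst h
      simp
    · obtain ⟨p, hp, hd⟩ := hG.exists_adj_dist_add_one_eq h
      have := Finset.single_le_sum hnn (show p ∈ G.neighborFinset x by simpa using hp)
      rw [if_pos hd] at this
      rw [if_neg h, zero_add]
      refine le_trans (le_of_eq ?_) this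
      rw [← hd, pow_succ']
  have swap : ∑ x, ∑ y ∈ G.neighborFinset x,
        (if G.dist v y + 1 = G.dist v x then z * z ^ G.dist v y else 0)
      = ∑ y, (((G.neighborFinset y).filter fun x => G.dist v y + 1 = G.dist v x).card : ℝ)
          * (z * z ^ G.dist v y) := by
    rw [Finset.sum_comm' (t' := Finset.univ) (s' := fun y => G.neighborFinset y)
      (by intro x y; simp [G.adj_comm])]
    refine Finset.sum_congr rfl fun y _ => ?_
    rw [← Finset.sum_filter, Finset.sum_const, nsmul_eq_mul]
  have h1 := Finset.sum_le_sum fun x (_ : x ∈ Finset.univ) => key x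
  rw [Finset.sum_add_distrib, swap] at h1
  have h2 : ∑ y, (((G.neighborFinset y).filter fun x => G.dist v y + 1 = G.dist v x).card : ℝ)
          * (z * z ^ G.dist v y) ≤
      ∑ y, ((k - 1 : ℝ) * z * z ^ G.dist v y + if y = v then z else 0) := by
    refine Finset.sum_le_sum fun y _ => ?_
    have h3 := mul_le_mul_of_nonneg_right (card_filter_dist_eq_le hG hk v y)
      (show 0 ≤ z * z ^ G.dist v y by positivity)
    refine h3.trans (le_of_eq ?_)
    split_ifs with h
    · subst h; simp; ring
    · ring
  rw [Finset.sum_add_distrib, ← Finset.mul_sum] at h2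
  simp only [Finset.sum_ite_eq', Finset.mem_univ, if_true] at h1 h2
  rw [le_div_iff₀ (by linarith)]
  linarith

/-- The time `t` distribution of the simple random walk on a `k`-regular graph. -/
noncomputable def srwDist (G : SimpleGraph V) [DecidableRel G.Adj] (k : ℕ) (v : V) (t : ℕ) :
    V → ℝ :=
  (((k : ℝ)⁻¹ • G.adjMatrix ℝ) ^ t) *ᵥ (fun w : V => if w = v then 1 else 0)

theorem srwDist_succ (v : V) (t : ℕ) (x : V) :
    G.srwDist k v (t + 1) x = (k : ℝ)⁻¹ * ∑ y ∈ G.neighborFinset x, G.srwDist k v t y := by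
  rw [srwDist, pow_succ', ← Matrix.mulVec_mulVec, Matrix.smul_mulVec, Pi.smul_apply,
    adjMatrix_mulVec_apply, smul_eq_mul, srwDist]

theorem srwDist_nonneg (v : V) (t : ℕ) (x : V) : 0 ≤ G.srwDist k v t x := by
  induction t generalizing x with
  | zero =>
    simp only [srwDist, pow_zero, Matrix.one_mulVec]
    split_ifs <;> norm_num
  | succ t ih =>
    rw [srwDist_succ]
    exact mul_nonneg (by positivity) (Finset.sum_nonneg fun y _ => ih y)

theorem sum_srwDist_succ_mul (v : V) (t : ℕ) (g : V → ℝ) :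
    ∑ x, G.srwDist k v (t + 1) x * g x
      = ∑ y, G.srwDist k v t y * ((k : ℝ)⁻¹ * ∑ x ∈ G.neighborFinset y, g x) := by
  simp only [srwDist_succ, Finset.mul_sum, Finset.sum_mul]
  rw [Finset.sum_comm' (t' := Finset.univ) (s' := fun y => G.neighborFinset y)
      (by intro x y; simp [G.adj_comm])]
  refine Finset.sum_congr rfl fun y _ => Finset.sum_congr rfl fun x _ => ?_
  ring

theorem sum_srwDist (hk : G.IsRegularOfDegree k) (hk0 : k ≠ 0) (v : V) (t : ℕ) :
    ∑ x, G.srwDist k v t x = 1 := by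
  induction t with
  | zero => simp [srwDist]
  | succ t ih =>
    have h := sum_srwDist_succ_mul (G := G) (k := k) v t fun _ => 1
    have hk0' : (k : ℝ) ≠ 0 := by exact_mod_cast hk0
    simpa [hk.degree_eq, hk0', ih] using h

theorem sum_srwDist_mul_le {g : V → ℝ} {ρ : ℝ} (hρ : 0 ≤ ρ)
    (hg : ∀ x, (k : ℝ)⁻¹ * ∑ y ∈ G.neighborFinset x, g y ≤ ρ * g x) (v : V) (t : ℕ) :
    ∑ x, G.srwDist k v t x * g x ≤ ρ ^ t * g v := by
  induction t with
  | zero => simp [srwDist]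
  | succ t ih =>
    rw [sum_srwDist_succ_mul]
    calc _ ≤ ∑ y, G.srwDist k v t y * (ρ * g y) :=
          Finset.sum_le_sum fun y _ => mul_le_mul_of_nonneg_left (hg y) (srwDist_nonneg v t y)
      _ = ρ * ∑ y, G.srwDist k v t y * g y := by
          rw [Finset.mul_sum]; exact Finset.sum_congr rfl fun y _ => by ring
      _ ≤ ρ * (ρ ^ t * g v) := mul_le_mul_of_nonneg_left ih hρ
      _ = _ := by ring

theorem sum_srwDist_mul_pow_dist_le (hG : G.Connected) (hk : G.IsRegularOfDegree k)
    (hk0 : 0 < k) {θ ρ : ℝ} (hθ : 1 ≤ θ) (hρ : 1 < ρ) (hρθ : ρ * k = (k - 1) * θ + θ⁻¹)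
    (v : V) (t : ℕ) :
    ∑ x, G.srwDist k v t x * θ ^ G.dist v x ≤ ρ ^ t * (1 + θ / (ρ - 1)) := by
  have hk0' : (0 : ℝ) < k := by exact_mod_cast hk0
  have hb : 0 ≤ θ / (ρ - 1) := div_nonneg (by linarith) (by linarith)
  have hb' : (ρ - 1) * (θ / (ρ - 1)) = θ := mul_div_cancel₀ _ (by linarith)
  have h := sum_srwDist_mul_le (G := G) (k := k) (g := fun x => θ ^ G.dist v x + θ / (ρ - 1))
    (ρ := ρ) (by linarith) (fun x => by
      have hsum : ∑ y ∈ G.neighborFinset x, (θ ^ G.dist v y + θ / (ρ - 1))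
          = ∑ y ∈ G.neighborFinset x, θ ^ G.dist v y + k * (θ / (ρ - 1)) := by
        rw [Finset.sum_add_distrib, Finset.sum_const, card_neighborFinset_eq_degree,
          hk.degree_eq, nsmul_eq_mul]
      rw [hsum, inv_mul_le_iff₀ hk0']
      by_cases hx : x = v
      · subst hx
        have h1 : ∑ y ∈ G.neighborFinset x, θ ^ G.dist x y ≤ k * θ := by
          have h2 : ∑ y ∈ G.neighborFinset x, θ ^ G.dist x y
              ≤ (G.neighborFinset x).card • θ := by
            refine Finset.sum_le_card_nsmul _ _ _ fun y hy => ?_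
            rw [dist_eq_one_iff_adj.2 (by simpa using hy), pow_one]
          rwa [card_neighborFinset_eq_degree, hk.degree_eq, nsmul_eq_mul] at h2
        rw [dist_self, pow_zero]
        have : k * θ + k * (θ / (ρ - 1)) ≤ k * (ρ * (1 + θ / (ρ - 1))) := by
          rw [← mul_add]
          refine mul_le_mul_of_nonneg_left ?_ hk0'.le
          linarith
        linarith
      · have h1 := sum_pow_dist_neighborFinset_le hG hk hθ hx
        rw [← hρθ] at h1
        have h2 : (k : ℝ) * (θ / (ρ - 1)) ≤ k * (ρ * (θ / (ρ - 1))) := by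
          refine mul_le_mul_of_nonneg_left ?_ hk0'.le
          linarith
        linarith) v t
  refine le_trans (Finset.sum_le_sum fun x _ =>
    mul_le_mul_of_nonneg_left ?_ (srwDist_nonneg v t x)) (h.trans (le_of_eq ?_))
  · linarith
  · simp

theorem sum_srwDist_lt_dist_le (hG : G.Connected) (hk : G.IsRegularOfDegree k)
    (hk0 : 0 < k) {θ ρ : ℝ} (hθ : 1 ≤ θ) (hρ : 1 < ρ) (hρθ : ρ * k = (k - 1) * θ + θ⁻¹)
    (v : V) (t : ℕ) (R : ℝ) :
    ∑ x with ¬ (G.dist v x : ℝ) ≤ R, G.srwDist k v t x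
      ≤ (1 + θ / (ρ - 1)) * Real.exp (t * Real.log ρ - R * Real.log θ) := by
  have h := sum_srwDist_mul_pow_dist_le hG hk hk0 hθ hρ hρθ v t
  have hθ0 : 0 < θ := by linarith
  have h1 : ∑ x with ¬ (G.dist v x : ℝ) ≤ R, G.srwDist k v t x * Real.exp (R * Real.log θ)
      ≤ ∑ x, G.srwDist k v t x * θ ^ G.dist v x := by
    refine le_trans (Finset.sum_le_sum fun x hx => ?_) (Finset.sum_le_sum_of_subset_of_nonneg
      (Finset.subset_univ _) fun x _ _ => mul_nonneg (srwDist_nonneg v t x) (by positivity))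
    refine mul_le_mul_of_nonneg_left ?_ (srwDist_nonneg v t x)
    rw [← Real.exp_log (pow_pos hθ0 _), Real.log_pow, Real.exp_le_exp]
    exact mul_le_mul_of_nonneg_right (le_of_not_ge (Finset.mem_filter.1 hx).2)
      (Real.log_nonneg hθ)
  rw [← Finset.sum_mul] at h1
  rw [Real.exp_sub, ← Real.log_pow, Real.exp_log (by positivity), ← mul_div_assoc,
    le_div_iff₀ (Real.exp_pos _)]
  linarith

theorem card_dist_le_le (hG : G.Connected) (hk : G.IsRegularOfDegree k)
    {z : ℝ} (hz : 0 < z) (hz1 : z ≤ 1) (hkz : (k - 1) * z < 1) (v : V) (R : ℝ) :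
    ((Finset.univ.filter fun x => (G.dist v x : ℝ) ≤ R).card : ℝ)
      ≤ (1 + z) / (1 - (k - 1) * z) * Real.exp (-(R * Real.log z)) := by
  have h := sum_pow_dist_le hG hk hz hkz v
  have h1 : ∑ x with (G.dist v x : ℝ) ≤ R, Real.exp (R * Real.log z)
      ≤ ∑ x, z ^ G.dist v x := by
    refine le_trans (Finset.sum_le_sum fun x hx => ?_) (Finset.sum_le_sum_of_subset_of_nonneg
      (Finset.subset_univ _) fun x _ _ => by positivity)
    rw [← Real.exp_log (pow_pos hz _), Real.log_pow, Real.exp_le_exp]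
    exact mul_le_mul_of_nonpos_right (Finset.mem_filter.1 hx).2 (Real.log_nonpos hz.le hz1)
  rw [Finset.sum_const, nsmul_eq_mul] at h1
  rw [Real.exp_neg, ← div_eq_mul_inv, le_div_iff₀ (Real.exp_pos _)]
  exact h1.trans h

end SimpleGraph

theorem Finset.sum_filter_le_half_sum_abs {ι : Type*} [Fintype ι] (s : ι → Prop)
    [DecidablePred s] (a : ι → ℝ) (ha : ∑ x, a x = 0) :
    ∑ x with s x, a x ≤ 1 / 2 * ∑ x, |a x| := by
  have h1 := Finset.sum_filter_add_sum_filter_not Finset.univ s a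
  have h2 := Finset.sum_filter_add_sum_filter_not Finset.univ s fun x => |a x|
  have h3 : ∑ x with s x, a x ≤ ∑ x with s x, |a x| :=
    Finset.sum_le_sum fun x _ => le_abs_self _
  have h4 : ∑ x with ¬ s x, -a x ≤ ∑ x with ¬ s x, |a x| :=
    Finset.sum_le_sum fun x _ => neg_le_abs _
  rw [Finset.sum_neg_distrib] at h4
  linarith

/-- The exponent governing the escape probability of the walk from the ball of radius
`(1 - ε / 2) L` by time `(1 - ε) (k / (k - 2)) L`. -/
theorem srw_escape_exponent_le {k ε θ ρ L t : ℝ} (hk : 3 ≤ k) (hε : 0 < ε) (hε2 : ε ≤ 1 / 2)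
    (hθ : θ = 1 + ε / 8) (hρ : ρ - 1 = (θ - 1) / θ * (((k - 1) * θ - 1) / k)) (hρ1 : 1 < ρ)
    (hL : 0 ≤ L) (ht0 : 0 ≤ t) (ht : t ≤ (1 - ε) * (k / (k - 2)) * L) :
    t * Real.log ρ - (1 - ε / 2) * L * Real.log θ ≤ -((θ - 1) / θ * (ε / 4) * L) := by
  have hθ0 : 0 < θ := by linarith
  have hs : 0 ≤ (θ - 1) / θ := div_nonneg (by linarith) hθ0.le
  have hlogθ : (θ - 1) / θ ≤ Real.log θ := by
    have := Real.one_sub_inv_le_log_of_pos hθ0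
    rwa [sub_div, div_self hθ0.ne', one_div]
  have hlogρ : Real.log ρ ≤ (θ - 1) / θ * (((k - 1) * θ - 1) / k) :=
    (Real.log_le_sub_one_of_pos (by linarith)).trans hρ.le
  have h1 : t * Real.log ρ ≤ (1 - ε) * (k / (k - 2)) * L *
      ((θ - 1) / θ * (((k - 1) * θ - 1) / k)) :=
    mul_le_mul ht hlogρ (Real.log_nonneg hρ1.le) (ht0.trans ht)
  have h2 : (1 - ε / 2) * L * ((θ - 1) / θ) ≤ (1 - ε / 2) * L * Real.log θ :=
    mul_le_mul_of_nonneg_left hlogθ (mul_nonneg (by linarith) hL)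
  have h3 : (1 - ε) * (k / (k - 2)) * L * ((θ - 1) / θ * (((k - 1) * θ - 1) / k))
      = (θ - 1) / θ * L * ((1 - ε) * (((k - 1) * θ - 1) / (k - 2))) := by
    have : k - 2 ≠ 0 := by linarith
    have : k ≠ 0 := by linarith
    field_simp
  have h4 : (1 - ε) * (((k - 1) * θ - 1) / (k - 2)) ≤ 1 - 3 * ε / 4 := by
    have h5 : ((k - 1) * θ - 1) / (k - 2) ≤ 1 + ε / 4 := by
      rw [div_le_iff₀ (by linarith), hθ]
      linarith [mul_nonneg hε.le (sub_nonneg.2 hk)]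
    have h6 := mul_le_mul_of_nonneg_left h5 (show 0 ≤ 1 - ε by linarith)
    linarith [sq_nonneg ε]
  have h6 := mul_le_mul_of_nonneg_left h4 (mul_nonneg hs hL)
  rw [h3] at h1
  linarith

/-- **Lubetzky–Peres (SRW cutoff, lower bound)**: for every `k ≥ 3` and `ε, δ > 0` there
is `N` such that on every finite connected non-bipartite `k`-regular Ramanujan graph on
`n ≥ N` vertices, for every starting vertex and every time
`t ≤ (1−ε)·(k/(k−2))·log_{k−1} n`, the simple random walk distribution is at total
variation distance at least `1 − δ` from the uniform distribution. -/
theorem srw_cutoff_lower (k : ℕ) (hk : 3 ≤ k) (ε δ : ℝ) (hε : 0 < ε) (hδ : 0 < δ) :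
    ∃ N : ℕ, ∀ (V : Type) [Fintype V] [DecidableEq V]
      (G : SimpleGraph V) [DecidableRel G.Adj],
      G.Connected → ¬ G.Colorable 2 → G.IsRegularOfDegree k →
      (∀ lam : ℝ, (∃ x : V → ℝ, x ≠ 0 ∧ G.adjMatrix ℝ *ᵥ x = lam • x) →
        |lam| = (k : ℝ) ∨ |lam| ≤ 2 * Real.sqrt ((k : ℝ) - 1)) →
      Fintype.card V ≥ N →
      ∀ (v : V) (t : ℕ),
        (t : ℝ) ≤ (1 - ε) * ((k : ℝ) / ((k : ℝ) - 2)) *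
          (Real.log (Fintype.card V) / Real.log ((k : ℝ) - 1)) →
        1 - δ ≤ (1 / 2) * ∑ x : V,
            |((((k : ℝ)⁻¹ • G.adjMatrix ℝ) ^ t) *ᵥ (fun w : V => if w = v then 1 else 0)) x
              - 1 / (Fintype.card V : ℝ)| := by
  wlog hε2 : ε ≤ 1 / 2 generalizing ε
  · obtain ⟨N, hN⟩ := this (1 / 2) (by norm_num) le_rfl
    refine ⟨N, fun V _ _ G _ h1 h2 h3 h4 h5 v t ht => hN V G h1 h2 h3 h4 h5 v t (ht.trans ?_)⟩
    have hk' : (3 : ℝ) ≤ k := by exact_mod_cast hk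
    rw [mul_assoc, mul_assoc]
    refine mul_le_mul_of_nonneg_right (by linarith) (mul_nonneg ?_ ?_)
    · exact div_nonneg (by linarith) (by linarith)
    · exact div_nonneg (Real.log_natCast_nonneg _) (Real.log_nonneg (by linarith))
  have hk' : (3 : ℝ) ≤ k := by exact_mod_cast hk
  set q : ℝ := (k : ℝ) - 1 with hq
  have hq2 : 2 ≤ q := by linarith
  have hlq : 0 < Real.log q := Real.log_pos (by linarith)
  set θ : ℝ := 1 + ε / 8 with hθ
  have hθ0 : 0 < θ := by positivity
  set ρ : ℝ := (q * θ + θ⁻¹) / k with hρ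
  have hρθ : ρ * k = q * θ + θ⁻¹ := div_mul_cancel₀ _ (by linarith)
  have hρ1 : ρ - 1 = (θ - 1) / θ * ((q * θ - 1) / k) := by
    rw [hρ, hq]; field_simp; ring
  have hρgt : 1 < ρ := by
    have : 0 < (θ - 1) / θ * ((q * θ - 1) / k) := by
      have h1 : 0 < θ - 1 := by linarith
      have h2 : 0 < q * θ - 1 := by nlinarith
      positivity
    linarith
  set z : ℝ := Real.exp (-((1 + ε / 4) * Real.log q)) with hz
  have hz0 : 0 < z := Real.exp_pos _
  have hz1 : z ≤ 1 := Real.exp_le_one_iff.2 (by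
    have : 0 ≤ (1 + ε / 4) * Real.log q := by positivity
    linarith)
  have hqz : q * z < 1 := by
    have : q * z = Real.exp (-(ε / 4 * Real.log q)) := by
      rw [hz]
      nth_rewrite 1 [← Real.exp_log (show 0 < q by linarith)]
      rw [← Real.exp_add]
      congr 1; ring
    rw [this, Real.exp_lt_one_iff]
    have : 0 < ε / 4 * Real.log q := by positivity
    linarith
  set C₁ : ℝ := 1 + θ / (ρ - 1) with hC₁
  set C₂ : ℝ := (1 + z) / (1 - q * z) with hC₂
  have hC₁0 : 0 ≤ C₁ := add_nonneg zero_le_one (div_nonneg hθ0.le (by linarith))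
  have hC₂0 : 0 ≤ C₂ := div_nonneg (by linarith) (by linarith)
  set c₁ : ℝ := (θ - 1) / θ * (ε / 4) / Real.log q with hc₁
  have hc₁0 : 0 < c₁ := by
    have h1 : 0 < θ - 1 := by linarith
    positivity
  have hlim : ∀ C c : ℝ, 0 < c → Filter.Tendsto
      (fun n : ℕ => C * Real.exp (-(c * Real.log n))) Filter.atTop (nhds 0) := by
    intro C c hc
    have h := (Real.tendsto_exp_neg_atTop_nhds_zero.comp
      ((Real.tendsto_log_atTop.comp tendsto_natCast_atTop_atTop).const_mul_atTop hc)).const_mul C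
    simpa using h
  have hsum := (hlim C₁ c₁ hc₁0).add (hlim C₂ (ε / 4) (by positivity))
  rw [add_zero] at hsum
  obtain ⟨N, hN⟩ := Filter.eventually_atTop.1 (hsum.eventually_lt_const hδ)
  refine ⟨N, fun V _ _ G _ hG _ hreg _ hcard v t ht => ?_⟩
  have hNn := hN _ hcard
  have : Nonempty V := ⟨v⟩
  set n : ℝ := (Fintype.card V : ℝ) with hn
  have hn0 : 0 < n := Nat.cast_pos.2 Fintype.card_pos
  have hln : 0 ≤ Real.log n := Real.log_natCast_nonneg _
  set R : ℝ := (1 - ε / 2) * (Real.log n / Real.log q) with hR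
  have hL : 0 ≤ Real.log n / Real.log q := by positivity
  have hescape : ∑ x with ¬ (G.dist v x : ℝ) ≤ R, G.srwDist k v t x
      ≤ C₁ * Real.exp (-(c₁ * Real.log n)) := by
    refine (SimpleGraph.sum_srwDist_lt_dist_le hG hreg (by omega) (by linarith) hρgt hρθ
      v t R).trans (mul_le_mul_of_nonneg_left (Real.exp_le_exp.2 ?_) hC₁0)
    refine (srw_escape_exponent_le hk' hε hε2 hθ hρ1 hρgt hL (Nat.cast_nonneg t) ht).trans
      (le_of_eq ?_)
    rw [hc₁]; ring
  have hball : ((Finset.univ.filter fun x => (G.dist v x : ℝ) ≤ R).card : ℝ) / n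
      ≤ C₂ * Real.exp (-(ε / 4 * Real.log n)) := by
    rw [div_le_iff₀ hn0, mul_assoc]
    nth_rewrite 2 [← Real.exp_log hn0]
    rw [← Real.exp_add]
    refine (SimpleGraph.card_dist_le_le hG hreg hz0 hz1 hqz v R).trans
      (mul_le_mul_of_nonneg_left (Real.exp_le_exp.2 ?_) hC₂0)
    rw [hz, Real.log_exp, hR]
    have : -((1 - ε / 2) * (Real.log n / Real.log q) * -((1 + ε / 4) * Real.log q))
        = (1 - ε / 2) * (1 + ε / 4) * Real.log n := by
      field_simp
    rw [this]
    nlinarith [mul_nonneg (sq_nonneg ε) hln]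
  have hmass := SimpleGraph.sum_srwDist hreg (by omega) v t
  have hzero : ∑ x, (G.srwDist k v t x - 1 / n) = 0 := by
    rw [Finset.sum_sub_distrib, hmass, Finset.sum_const, Finset.card_univ, nsmul_eq_mul, ← hn,
      mul_one_div_cancel hn0.ne', sub_self]
  have htv := Finset.sum_filter_le_half_sum_abs (fun x => (G.dist v x : ℝ) ≤ R) _ hzero
  rw [Finset.sum_sub_distrib, Finset.sum_const, nsmul_eq_mul, mul_one_div] at htv
  have hsplit := Finset.sum_filter_add_sum_filter_not Finset.univ
    (fun x => (G.dist v x : ℝ) ≤ R) (G.srwDist k v t)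
  change 1 - δ ≤ 1 / 2 * ∑ x, |G.srwDist k v t x - 1 / n|
  linarith
end

section
/- (Lubetzky–Peres, NBRW cutoff, upper bound) For every integer k ≥ 3 and all ε, δ > 0 there exists N such that: for every finite connected non-bipartite k-regular Ramanujan graph X on n ≥ N vertices, every vertex v, and every integer t ≥ (1+ε)·log_{k−1} n, the distribution P_v^t of the non-backtracking random walk of length t started at v satisfies ‖P_v^t − u‖_TV ≤ δ, where u is the uniform distribution on the vertices. -/
open Matrix

/-- A non-backtracking path of length `t` in `G` starting at `v`: a sequence of vertices
`v = w₀, w₁, …, w_t` with `wᵢ ~ wᵢ₊₁` and `wᵢ₊₂ ≠ wᵢ`. -/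
def IsNBPath {V : Type*} (G : SimpleGraph V) (t : ℕ) (v : V) (w : Fin (t + 1) → V) : Prop :=
  w 0 = v ∧
  (∀ (i : ℕ) (h : i < t), G.Adj (w ⟨i, by omega⟩) (w ⟨i + 1, by omega⟩)) ∧
  (∀ (i : ℕ) (h : i + 2 < t + 1), w ⟨i + 2, h⟩ ≠ w ⟨i, by omega⟩)

theorem isNBPath_snoc_iff {V : Type*} (G : SimpleGraph V) (t : ℕ) (v x : V)
    (w : Fin (t + 2) → V) :
    IsNBPath G (t + 2) v (Fin.snoc w x : Fin (t + 3) → V) ↔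
      IsNBPath G (t + 1) v w ∧ G.Adj (w (Fin.last _)) x ∧ x ≠ w ⟨t, by omega⟩ := by
  have hlt (i : ℕ) (h : i < t + 2) (h' : i < t + 3) :
      (Fin.snoc w x : Fin (t + 3) → V) ⟨i, h'⟩ = w ⟨i, h⟩ :=
    Fin.snoc_castSucc (α := fun _ => V) x w ⟨i, h⟩
  have hlast (h' : t + 2 < t + 3) : (Fin.snoc w x : Fin (t + 3) → V) ⟨t + 2, h'⟩ = x :=
    Fin.snoc_last (α := fun _ => V) x w
  constructor
  · rintro ⟨h0, h1, h2⟩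
    refine ⟨⟨?_, fun i h => ?_, fun i h => ?_⟩, ?_, ?_⟩
    · rw [← h0]; exact (hlt 0 (by omega) (by omega)).symm
    · have := h1 i (by omega)
      rwa [hlt i (by omega), hlt (i + 1) (by omega)] at this
    · have := h2 i (by omega)
      rwa [hlt i (by omega), hlt (i + 2) (by omega)] at this
    · have := h1 (t + 1) (by omega)
      rwa [hlt (t + 1) (by omega), hlast] at this
    · have := h2 t (by omega)
      rwa [hlt t (by omega), hlast] at this
  · rintro ⟨⟨h0, h1, h2⟩, h3, h4⟩
    refine ⟨?_, fun i h => ?_, fun i h => ?_⟩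
    · rw [← h0]; exact hlt 0 (by omega) (by omega)
    · rw [hlt i (by omega)]
      rcases Nat.lt_succ_iff_lt_or_eq.mp h with h | rfl
      · rw [hlt (i + 1) (by omega)]
        exact h1 i h
      · rw [hlast]
        exact h3
    · rw [hlt i (by omega)]
      rcases Nat.lt_succ_iff_lt_or_eq.mp h with h | h
      · rw [hlt (i + 2) h]
        exact h2 i h
      · obtain rfl : i = t := by omega
        rw [hlast]
        exact h4

section Counting

open Classical in
/-- The number of non-backtracking paths of length `t` from `v` to `x`. -/
noncomputable def nbCount {V : Type*} [Fintype V] (G : SimpleGraph V) (v : V) (t : ℕ) (x : V) : ℕ :=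
  Finset.card {w : Fin (t + 1) → V | IsNBPath G t v w ∧ w (Fin.last t) = x}

open Classical in
/-- The number of non-backtracking paths of length `t + 1` from `v` whose last step goes from
`y` to `x`. -/
noncomputable def nbEdgeCount {V : Type*} [Fintype V] (G : SimpleGraph V) (v : V) (t : ℕ)
    (y x : V) : ℕ :=
  Finset.card {w : Fin (t + 2) → V |
    (IsNBPath G (t + 1) v w ∧ w (Fin.last _) = x) ∧ w ⟨t, by omega⟩ = y}

variable {V : Type*} [Fintype V] (G : SimpleGraph V) (v : V)

theorem nbCount_zero [DecidableEq V] (x : V) : nbCount G v 0 x = if x = v then 1 else 0 := by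
  have h (w : Fin 1 → V) : (IsNBPath G 0 v w ∧ w (Fin.last 0) = x) ↔ (x = v ∧ w = fun _ => v) := by
    constructor
    · rintro ⟨⟨h0, -, -⟩, h1⟩
      refine ⟨by rw [← h0, ← h1]; rfl, funext fun i => ?_⟩
      rw [Subsingleton.elim i 0, h0]
    · rintro ⟨rfl, rfl⟩
      exact ⟨⟨rfl, fun i h => by omega, fun i h => by omega⟩, rfl⟩
  unfold nbCount
  simp only [h]
  split_ifs with hx
  · simp [hx, Finset.filter_eq']
  · simp [hx]

theorem nbCount_succ (t : ℕ) (x : V) : nbCount G v (t + 1) x = ∑ y, nbEdgeCount G v t y x := by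
  classical
  unfold nbCount nbEdgeCount
  rw [Finset.card_eq_sum_card_fiberwise (f := fun w => w ⟨t, by omega⟩) (t := Finset.univ)
    (fun _ _ => Finset.mem_coe.2 (Finset.mem_univ _))]
  simp only [Finset.filter_filter]

theorem nbEdgeCount_of_not_adj (t : ℕ) {y x : V} (h : ¬ G.Adj y x) :
    nbEdgeCount G v t y x = 0 := by
  classical
  unfold nbEdgeCount
  rw [Finset.card_eq_zero, Finset.filter_eq_empty_iff]
  rintro w - ⟨⟨⟨-, h1, -⟩, rfl⟩, rfl⟩
  exact h (h1 t (by omega))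

theorem nbEdgeCount_zero {y x : V} (h : G.Adj y x) : nbEdgeCount G v 0 y x = nbCount G v 0 y := by
  classical
  unfold nbCount nbEdgeCount
  refine Finset.card_bij' (fun w _ => Fin.init w) (fun w _ => Fin.snoc w x) ?_ ?_ ?_ ?_
  · intro w hw
    simp only [Finset.mem_filter, Finset.mem_univ, true_and] at hw ⊢
    obtain ⟨⟨⟨h0, -, -⟩, -⟩, h1⟩ := hw
    exact ⟨⟨h0, fun i h => by omega, fun i h => by omega⟩, h1⟩
  · intro w hw
    simp only [Finset.mem_filter, Finset.mem_univ, true_and] at hw ⊢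
    obtain ⟨⟨h0, -, -⟩, h1⟩ := hw
    have hs0 (h' : 0 < 2) : (Fin.snoc w x : Fin 2 → V) ⟨0, h'⟩ = w 0 :=
      Fin.snoc_castSucc (α := fun _ => V) x w 0
    have hs1 (h' : 1 < 2) : (Fin.snoc w x : Fin 2 → V) ⟨1, h'⟩ = x :=
      Fin.snoc_last (α := fun _ => V) x w
    refine ⟨⟨⟨(hs0 _).trans h0, fun i hi => ?_, fun i hi => by omega⟩, hs1 _⟩, (hs0 _).trans h1⟩
    obtain rfl : i = 0 := by omega
    rw [hs0, hs1]
    exact (show w 0 = y from h1) ▸ h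
  · intro w hw
    simp only [Finset.mem_filter, Finset.mem_univ, true_and] at hw
    rw [← hw.1.2]
    exact Fin.snoc_init_self w
  · intro w _
    exact Fin.init_snoc (α := fun _ => V) x w

theorem nbEdgeCount_succ (t : ℕ) {y x : V} (h : G.Adj y x) :
    nbEdgeCount G v (t + 1) y x + nbEdgeCount G v t x y = nbCount G v (t + 1) y := by
  classical
  unfold nbCount
  rw [← Finset.card_filter_add_card_filter_not (fun w : Fin (t + 2) → V => w ⟨t, by omega⟩ = x),
    add_comm]
  unfold nbEdgeCount
  rw [Finset.filter_filter, Finset.filter_filter]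
  congr 1
  refine Finset.card_bij' (fun w _ => Fin.init w) (fun w _ => Fin.snoc w x) ?_ ?_ ?_ ?_
  · intro w hw
    simp only [Finset.mem_filter, Finset.mem_univ, true_and] at hw ⊢
    obtain ⟨⟨h0, h1⟩, h2⟩ := hw
    rw [← Fin.snoc_init_self w, h1, isNBPath_snoc_iff] at h0
    exact ⟨⟨h0.1, h2⟩, h0.2.2.symm⟩
  · intro w hw
    simp only [Finset.mem_filter, Finset.mem_univ, true_and] at hw ⊢
    obtain ⟨⟨h0, h1⟩, h2⟩ := hw
    refine ⟨⟨(isNBPath_snoc_iff G t v x w).2 ⟨h0, h1 ▸ h, Ne.symm h2⟩,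
      Fin.snoc_last (α := fun _ => V) x w⟩, ?_⟩
    rw [← h1]
    exact Fin.snoc_castSucc (α := fun _ => V) x w (Fin.last _)
  · intro w hw
    simp only [Finset.mem_filter, Finset.mem_univ, true_and] at hw
    rw [← hw.1.2]
    exact Fin.snoc_init_self w
  · intro w _
    exact Fin.init_snoc (α := fun _ => V) x w

theorem sum_neighborFinset_nbEdgeCount [DecidableRel G.Adj] (t : ℕ) (x : V) :
    ∑ y ∈ G.neighborFinset x, nbEdgeCount G v t y x = nbCount G v (t + 1) x := by
  rw [nbCount_succ]
  refine Finset.sum_subset (Finset.subset_univ _) fun y _ hy => ?_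
  exact nbEdgeCount_of_not_adj G v t fun h => hy ((G.mem_neighborFinset _ _).2 h.symm)

theorem nbCount_one [DecidableRel G.Adj] (x : V) :
    nbCount G v 1 x = ∑ y ∈ G.neighborFinset x, nbCount G v 0 y := by
  rw [← sum_neighborFinset_nbEdgeCount]
  exact Finset.sum_congr rfl fun y hy =>
    nbEdgeCount_zero G v ((G.mem_neighborFinset _ _).1 hy).symm

theorem nbCount_add_two [DecidableRel G.Adj] (t : ℕ) (x : V) :
    nbCount G v (t + 2) x + ∑ y ∈ G.neighborFinset x, nbEdgeCount G v t x y =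
      ∑ y ∈ G.neighborFinset x, nbCount G v (t + 1) y := by
  rw [← sum_neighborFinset_nbEdgeCount, ← Finset.sum_add_distrib]
  exact Finset.sum_congr rfl fun y hy =>
    nbEdgeCount_succ G v t ((G.mem_neighborFinset _ _).1 hy).symm

variable {G} in
theorem nbCount_two [DecidableRel G.Adj] {k : ℕ} (hG : G.IsRegularOfDegree k) (x : V) :
    nbCount G v 2 x + k * nbCount G v 0 x = ∑ y ∈ G.neighborFinset x, nbCount G v 1 y := by
  rw [← nbCount_add_two, Finset.sum_congr rfl fun y hy =>
    nbEdgeCount_zero G v ((G.mem_neighborFinset _ _).1 hy), Finset.sum_const,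
    G.card_neighborFinset_eq_degree, hG x, smul_eq_mul]

variable {G} in
theorem nbCount_add_three [DecidableRel G.Adj] {q : ℕ} (hG : G.IsRegularOfDegree (q + 1))
    (t : ℕ) (x : V) :
    nbCount G v (t + 3) x + q * nbCount G v (t + 1) x =
      ∑ y ∈ G.neighborFinset x, nbCount G v (t + 2) y := by
  rw [← nbCount_add_two, add_right_inj]
  have h : ∑ y ∈ G.neighborFinset x, (nbEdgeCount G v (t + 1) x y + nbEdgeCount G v t y x) =
      (q + 1) * nbCount G v (t + 1) x := by
    rw [Finset.sum_congr rfl fun y hy =>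
      nbEdgeCount_succ G v t ((G.mem_neighborFinset _ _).1 hy), Finset.sum_const,
      G.card_neighborFinset_eq_degree, hG x, smul_eq_mul]
  rw [Finset.sum_add_distrib, sum_neighborFinset_nbEdgeCount] at h
  linarith

end Counting

theorem abs_le_of_linear_recurrence {q lam : ℝ} (hq : 1 ≤ q) (hlam : |lam| ≤ 2 * √q) (c : ℕ → ℝ)
    (h1 : c 1 = lam * c 0) (h2 : c 2 = lam * c 1 - (q + 1) * c 0)
    (h : ∀ t, c (t + 3) = lam * c (t + 2) - q * c (t + 1)) (t : ℕ) :
    |c (t + 1)| ≤ 2 * (t + 1) * √q ^ (t + 1) * |c 0| := by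
  have hq0 : 0 ≤ q := by linarith
  have hsq : √q ^ 2 = q := Real.sq_sqrt hq0
  have hs0 : 0 ≤ √q := Real.sqrt_nonneg q
  set s := √q with hs
  have hdisc : 0 ≤ q - (lam / 2) ^ 2 := by
    have := sq_le_sq' (by linarith [abs_nonneg lam]) hlam
    rw [sq_abs] at this
    nlinarith
  have hr : √(q - (lam / 2) ^ 2) ^ 2 = q - (lam / 2) ^ 2 := Real.sq_sqrt hdisc
  set r := √(q - (lam / 2) ^ 2)
  set z : ℂ := ⟨lam / 2, r⟩ with hz
  set z' : ℂ := ⟨lam / 2, -r⟩ with hz'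
  have hadd : z + z' = lam := by
    apply Complex.ext <;> simp [hz, hz']
  have hmul : z * z' = q := by
    apply Complex.ext
    · simp [hz, hz']; nlinarith
    · simp [hz, hz']; ring
  have hnz : ‖z‖ = s := by
    rw [Complex.norm_def, hs, Complex.normSq_apply]; congr 1; simp [hz]; nlinarith
  have hnz' : ‖z'‖ = s := by
    rw [Complex.norm_def, hs, Complex.normSq_apply]; congr 1; simp [hz']; nlinarith
  have hdiff (t : ℕ) : ‖(c (t + 2) : ℂ) - z * c (t + 1)‖ ≤ 2 * s ^ (t + 2) * |c 0| := by
    induction t with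
    | zero =>
      have e : (c (0 + 2) : ℂ) - z * c (0 + 1) = (z' ^ 2 - 1) * c 0 := by
        simp only [zero_add]
        rw [h2, h1]; push_cast; rw [← hadd, ← hmul]; ring
      rw [e, norm_mul, Complex.norm_real, Real.norm_eq_abs]
      refine mul_le_mul_of_nonneg_right ?_ (abs_nonneg _)
      refine (norm_sub_le _ _).trans ?_
      rw [norm_pow, hnz', norm_one]
      simp only [zero_add]
      linarith
    | succ t ih =>
      have e : (c (t + 1 + 2) : ℂ) - z * c (t + 1 + 1) =
          z' * ((c (t + 2) : ℂ) - z * c (t + 1)) := by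
        rw [show t + 1 + 2 = t + 3 by ring, h t]; push_cast; rw [← hadd, ← hmul]; ring
      rw [e, norm_mul, hnz']
      calc s * _ ≤ s * (2 * s ^ (t + 2) * |c 0|) := mul_le_mul_of_nonneg_left ih hs0
        _ = _ := by ring
  induction t with
  | zero =>
    simp only [zero_add, h1, abs_mul, pow_one, Nat.cast_zero, mul_one]
    exact mul_le_mul_of_nonneg_right hlam (abs_nonneg _)
  | succ t ih =>
    have e : (c (t + 1 + 1) : ℂ) = ((c (t + 2) : ℂ) - z * c (t + 1)) + z * c (t + 1) := by ring
    rw [← Real.norm_eq_abs, ← Complex.norm_real, e]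
    refine (norm_add_le _ _).trans ?_
    rw [norm_mul, hnz, Complex.norm_real, Real.norm_eq_abs]
    calc _ ≤ 2 * s ^ (t + 2) * |c 0| + s * (2 * (t + 1) * s ^ (t + 1) * |c 0|) :=
          add_le_add (hdiff t) (mul_le_mul_of_nonneg_left ih hs0)
      _ = _ := by push_cast; ring

theorem Matrix.IsHermitian.exists_real_eigenvectors {V : Type*} [Fintype V] [DecidableEq V]
    {A : Matrix V V ℝ} (hA : A.IsHermitian) :
    ∃ (b : V → V → ℝ) (lam : V → ℝ), (∀ i, b i ≠ 0) ∧ (∀ i, A *ᵥ b i = lam i • b i) ∧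
      ∀ f : V → ℝ, ∑ i, (b i ⬝ᵥ f) ^ 2 = ∑ x, f x ^ 2 := by
  refine ⟨fun i => hA.eigenvectorBasis i, hA.eigenvalues, fun i h => ?_,
    hA.mulVec_eigenvectorBasis, fun f => ?_⟩
  · exact hA.eigenvectorBasis.orthonormal.ne_zero i (by ext x; exact congrFun h x)
  · have h := hA.eigenvectorBasis.sum_sq_norm_inner_right (WithLp.toLp 2 f)
    rw [EuclideanSpace.norm_sq_eq] at h
    simp only [Real.norm_eq_abs, sq_abs] at h
    rw [← h]
    refine Finset.sum_congr rfl fun i _ => ?_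
    rw [EuclideanSpace.inner_eq_star_dotProduct, dotProduct_comm]
    simp

section Spectrum

variable {V : Type*} [Fintype V] {G : SimpleGraph V} [DecidableRel G.Adj]

theorem SimpleGraph.IsRegularOfDegree.sum_sum_neighborFinset {k : ℕ}
    (hG : G.IsRegularOfDegree k) (f : V → ℝ) :
    ∑ x, ∑ y ∈ G.neighborFinset x, f y = k * ∑ x, f x := by
  have h (x : V) : ∑ y ∈ G.neighborFinset x, f y = ∑ y, if G.Adj x y then f y else 0 := by
    rw [← Finset.sum_filter]
    congr 1
    ext y
    simp
  simp only [h]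
  rw [Finset.sum_comm, Finset.mul_sum]
  refine Finset.sum_congr rfl fun y _ => ?_
  rw [← hG y, G.degree_eq_sum_if_adj, Finset.sum_mul]
  refine Finset.sum_congr rfl fun x _ => ?_
  by_cases h : G.Adj x y
  · simp [h, h.symm]
  · simp [h, mt G.adj_symm h]

theorem SimpleGraph.IsRegularOfDegree.eigenvector_apply_of_adj {k : ℕ}
    (hG : G.IsRegularOfDegree k) {s : ℝ} (hs : s ^ 2 = 1) {b : V → ℝ}
    (hb : G.adjMatrix ℝ *ᵥ b = (s * k) • b) {x y : V} (hxy : G.Adj x y) : b y = s * b x := by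
  have hsum : ∑ x, ∑ y ∈ G.neighborFinset x, (b y - s * b x) ^ 2 = 0 := by
    have hx (x : V) : ∑ y ∈ G.neighborFinset x, (b y - s * b x) ^ 2 =
        ∑ y ∈ G.neighborFinset x, b y ^ 2 - k * b x ^ 2 := by
      have h := congrFun hb x
      rw [SimpleGraph.adjMatrix_mulVec_apply, Pi.smul_apply, smul_eq_mul] at h
      have e (y : V) : (b y - s * b x) ^ 2 = b y ^ 2 + (-2 * s * b x) * b y + b x ^ 2 := by
        linear_combination b x ^ 2 * hs
      simp only [e]
      rw [Finset.sum_add_distrib, Finset.sum_add_distrib, ← Finset.mul_sum, h, Finset.sum_const,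
        G.card_neighborFinset_eq_degree, hG x, nsmul_eq_mul]
      linear_combination (-2 * k * b x ^ 2) * hs
    simp only [hx]
    rw [Finset.sum_sub_distrib, hG.sum_sum_neighborFinset (fun y => b y ^ 2), ← Finset.mul_sum,
      sub_self]
  rw [Finset.sum_eq_zero_iff_of_nonneg
    fun x _ => Finset.sum_nonneg fun y _ => sq_nonneg _] at hsum
  have h := hsum x (Finset.mem_univ x)
  rw [Finset.sum_eq_zero_iff_of_nonneg fun y _ => sq_nonneg _] at h
  have h := h y ((G.mem_neighborFinset _ _).2 hxy)
  exact sub_eq_zero.1 (pow_eq_zero_iff two_ne_zero |>.1 h)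

theorem SimpleGraph.IsRegularOfDegree.eigenvector_apply_eq {k : ℕ} (hG : G.IsRegularOfDegree k)
    (hconn : G.Connected) {b : V → ℝ} (hb : G.adjMatrix ℝ *ᵥ b = (k : ℝ) • b) (x y : V) :
    b x = b y := by
  obtain ⟨p⟩ := hconn.preconnected x y
  induction p with
  | nil => rfl
  | cons h _ ih =>
    rw [← ih, hG.eigenvector_apply_of_adj (s := 1) (b := b) (by norm_num) (by rwa [one_mul]) h, one_mul]

theorem SimpleGraph.IsRegularOfDegree.colorable_two {k : ℕ} (hG : G.IsRegularOfDegree k)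
    (hconn : G.Connected) {b : V → ℝ} (hb0 : b ≠ 0)
    (hb : G.adjMatrix ℝ *ᵥ b = (-k : ℝ) • b) : G.Colorable 2 := by
  have hadj {x y : V} (h : G.Adj x y) : b y = -b x := by
    rw [hG.eigenvector_apply_of_adj (s := -1) (b := b) (by norm_num) (by rwa [neg_one_mul]) h, neg_one_mul]
  have habs (x y : V) : |b x| = |b y| := by
    obtain ⟨p⟩ := hconn.preconnected x y
    induction p with
    | nil => rfl
    | cons h _ ih => rw [← ih, hadj h, abs_neg]
  obtain ⟨x₀, hx₀⟩ := Function.ne_iff.1 hb0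
  have hne (x : V) : b x ≠ 0 := abs_ne_zero.1 (habs x₀ x ▸ abs_ne_zero.2 hx₀)
  classical
  refine ⟨SimpleGraph.Coloring.mk (fun x => if 0 < b x then (0 : Fin 2) else 1) ?_⟩
  intro x y h
  have h1 := hadj h
  rcases lt_or_gt_of_ne (hne x) with h2 | h2
  · have h3 : 0 < b y := by linarith
    simp [h2.not_gt, h3]
  · have h3 : ¬ 0 < b y := by linarith
    simp [h2, h3]

theorem sum_nbCount_succ {q : ℕ} (hG : G.IsRegularOfDegree (q + 1)) (v : V) (t : ℕ) :
    ∑ x, (nbCount G v (t + 1) x : ℝ) = (q + 1) * q ^ t := by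
  classical
  have h0 : ∑ x, (nbCount G v 0 x : ℝ) = 1 := by simp [nbCount_zero]
  have h1 : ∑ x, (nbCount G v 1 x : ℝ) = q + 1 := by
    simp only [nbCount_one, Nat.cast_sum]
    rw [hG.sum_sum_neighborFinset (fun y => (nbCount G v 0 y : ℝ)), h0]
    push_cast; ring
  have h2 : ∑ x, (nbCount G v 2 x : ℝ) = (q + 1) * q := by
    have h := hG.sum_sum_neighborFinset (fun y => (nbCount G v 1 y : ℝ))
    have e (x : V) : ∑ y ∈ G.neighborFinset x, (nbCount G v 1 y : ℝ) =
        nbCount G v 2 x + (q + 1) * nbCount G v 0 x := by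
      exact_mod_cast (nbCount_two v hG x).symm
    simp only [e] at h
    rw [Finset.sum_add_distrib, ← Finset.mul_sum, h0, h1] at h
    push_cast at h
    linarith
  have h3 (t : ℕ) : ∑ x, (nbCount G v (t + 3) x : ℝ) =
      (q + 1) * ∑ x, (nbCount G v (t + 2) x : ℝ) - q * ∑ x, (nbCount G v (t + 1) x : ℝ) := by
    have h := hG.sum_sum_neighborFinset (fun y => (nbCount G v (t + 2) y : ℝ))
    have e (x : V) : ∑ y ∈ G.neighborFinset x, (nbCount G v (t + 2) y : ℝ) =
        nbCount G v (t + 3) x + q * nbCount G v (t + 1) x := by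
      exact_mod_cast (nbCount_add_three v hG t x).symm
    simp only [e] at h
    rw [Finset.sum_add_distrib, ← Finset.mul_sum] at h
    push_cast at h
    linarith
  induction t using Nat.twoStepInduction with
  | zero => rw [h1, pow_zero, mul_one]
  | one => rw [h2, pow_one]
  | more t ih₀ ih₁ =>
    rw [h3, ih₁, ih₀]
    ring

theorem dotProduct_adjMatrix_mulVec {b : V → ℝ} {lam : ℝ} (hb : G.adjMatrix ℝ *ᵥ b = lam • b)
    (f : V → ℝ) : b ⬝ᵥ (G.adjMatrix ℝ *ᵥ f) = lam * (b ⬝ᵥ f) := by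
  rw [dotProduct_mulVec, ← mulVec_transpose, G.transpose_adjMatrix, hb, smul_dotProduct,
    smul_eq_mul]

theorem abs_dotProduct_nbCount_le {q : ℕ} (hq : 1 ≤ q) (hG : G.IsRegularOfDegree (q + 1))
    {b : V → ℝ} {lam : ℝ} (hlam : |lam| ≤ 2 * √q) (hb : G.adjMatrix ℝ *ᵥ b = lam • b) (v : V)
    (t : ℕ) : |b ⬝ᵥ fun x => (nbCount G v (t + 1) x : ℝ)| ≤
      2 * (t + 1) * √q ^ (t + 1) * |b ⬝ᵥ fun x => (nbCount G v 0 x : ℝ)| := by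
  refine abs_le_of_linear_recurrence (q := q) (by exact_mod_cast hq) hlam
    (fun t => b ⬝ᵥ fun x => (nbCount G v t x : ℝ)) ?_ ?_ (fun t => ?_) t
  · rw [← dotProduct_adjMatrix_mulVec hb]
    congr 1
    ext x
    rw [SimpleGraph.adjMatrix_mulVec_apply]
    exact_mod_cast nbCount_one G v x
  · rw [← dotProduct_adjMatrix_mulVec hb, ← smul_eq_mul (a := (q : ℝ) + 1), ← dotProduct_smul,
      ← dotProduct_sub]
    congr 1
    ext x
    rw [Pi.sub_apply, SimpleGraph.adjMatrix_mulVec_apply, Pi.smul_apply, smul_eq_mul,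
      eq_sub_iff_add_eq]
    exact_mod_cast nbCount_two v hG x
  · rw [← dotProduct_adjMatrix_mulVec hb, ← smul_eq_mul (a := (q : ℝ)), ← dotProduct_smul,
      ← dotProduct_sub]
    congr 1
    ext x
    rw [Pi.sub_apply, SimpleGraph.adjMatrix_mulVec_apply, Pi.smul_apply, smul_eq_mul,
      eq_sub_iff_add_eq]
    exact_mod_cast nbCount_add_three v hG t x

theorem sum_sq_nbCount_sub_uniform_le {q : ℕ} (hq : 1 ≤ q) (hconn : G.Connected)
    (hbip : ¬ G.Colorable 2) (hG : G.IsRegularOfDegree (q + 1))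
    (hram : ∀ lam : ℝ, (∃ x : V → ℝ, x ≠ 0 ∧ G.adjMatrix ℝ *ᵥ x = lam • x) →
      |lam| = (q + 1 : ℕ) ∨ |lam| ≤ 2 * √q) (v : V) (t : ℕ) :
    ∑ x, ((nbCount G v (t + 1) x : ℝ) / ((q + 1) * q ^ t) - 1 / Fintype.card V) ^ 2 ≤
      (2 * (t + 1) * √q ^ (t + 1) / ((q + 1) * q ^ t)) ^ 2 := by
  classical
  have hq0 : (0 : ℝ) < q := by exact_mod_cast hq
  have hK : (0 : ℝ) < (q + 1) * q ^ t := by positivity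
  have hn : (Fintype.card V : ℝ) ≠ 0 := by
    exact_mod_cast (Fintype.card_pos_iff.2 ⟨v⟩).ne'
  have hsum := sum_nbCount_succ hG v t
  set K : ℝ := (q + 1) * q ^ t
  set g : V → ℝ := fun x => (nbCount G v (t + 1) x : ℝ) / K - 1 / Fintype.card V with hg
  obtain ⟨b, lam, hb0, hb, hpars⟩ := (G.isHermitian_adjMatrix ℝ).exists_real_eigenvectors
  have hone : G.adjMatrix ℝ *ᵥ (fun _ => 1) = ((q + 1 : ℕ) : ℝ) • fun _ => 1 := by
    ext x
    simp [SimpleGraph.adjMatrix_mulVec_apply, hG x]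
  have hcoef (i : V) : (b i ⬝ᵥ g) ^ 2 ≤ (2 * (t + 1) * √q ^ (t + 1) / K) ^ 2 *
      (b i ⬝ᵥ fun x => (nbCount G v 0 x : ℝ)) ^ 2 := by
    by_cases hi : lam i = (q + 1 : ℕ)
    · have hconst (x : V) : b i x = b i v :=
        hG.eigenvector_apply_eq hconn (by rw [hb i, hi]) x v
      have : b i ⬝ᵥ g = 0 := by
        simp only [dotProduct, hconst]
        rw [← Finset.mul_sum]
        simp only [hg]
        rw [Finset.sum_sub_distrib, ← Finset.sum_div, hsum, div_self hK.ne']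
        simp [hn]
      rw [this, zero_pow two_ne_zero]
      positivity
    · have hle : |lam i| ≤ 2 * √q := by
        refine (hram (lam i) ⟨b i, hb0 i, hb i⟩).resolve_left fun h => ?_
        rcases (abs_eq (by positivity)).1 h with h | h
        · exact hi h
        · exact hbip (hG.colorable_two hconn (hb0 i) (by rw [hb i, h]))
      have horth : b i ⬝ᵥ (fun _ => (1 : ℝ)) = 0 := by
        have h := dotProduct_adjMatrix_mulVec (hb i) (fun _ => 1)
        rw [hone, dotProduct_smul, smul_eq_mul] at h
        exact (mul_eq_mul_right_iff.1 h).resolve_left (Ne.symm hi)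
      have hgi : b i ⬝ᵥ g = (b i ⬝ᵥ fun x => (nbCount G v (t + 1) x : ℝ)) / K := by
        have : g = K⁻¹ • (fun x => (nbCount G v (t + 1) x : ℝ)) -
            (1 / (Fintype.card V : ℝ)) • fun _ => (1 : ℝ) := by
          ext x
          simp [hg, div_eq_inv_mul]
        rw [this, dotProduct_sub, dotProduct_smul, dotProduct_smul, horth, smul_zero, sub_zero,
          smul_eq_mul, div_eq_inv_mul]
      rw [hgi, ← mul_pow]
      refine sq_le_sq.2 ?_
      rw [abs_mul, abs_of_nonneg (by positivity : 0 ≤ 2 * ((t : ℝ) + 1) * √q ^ (t + 1) / K)]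
      rw [abs_div, abs_of_pos hK, div_mul_eq_mul_div]
      exact div_le_div_of_nonneg_right (abs_dotProduct_nbCount_le hq hG hle (hb i) v t) hK.le
  calc ∑ x, g x ^ 2 = ∑ i, (b i ⬝ᵥ g) ^ 2 := (hpars g).symm
    _ ≤ ∑ i, (2 * (t + 1) * √q ^ (t + 1) / K) ^ 2 *
        (b i ⬝ᵥ fun x => (nbCount G v 0 x : ℝ)) ^ 2 := Finset.sum_le_sum fun i _ => hcoef i
    _ = _ := by
      rw [← Finset.mul_sum, hpars]
      simp [nbCount_zero]

theorem sum_abs_nbCount_sub_uniform_le {q : ℕ} (hq : 1 ≤ q) (hconn : G.Connected)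
    (hbip : ¬ G.Colorable 2) (hG : G.IsRegularOfDegree (q + 1))
    (hram : ∀ lam : ℝ, (∃ x : V → ℝ, x ≠ 0 ∧ G.adjMatrix ℝ *ᵥ x = lam • x) →
      |lam| = (q + 1 : ℕ) ∨ |lam| ≤ 2 * √q) (v : V) (t : ℕ) :
    ∑ x, |(nbCount G v (t + 1) x : ℝ) / ((q + 1) * q ^ t) - 1 / Fintype.card V| ≤
      √(Fintype.card V) * (2 * (t + 1) / √q ^ (t + 1)) := by
  have hq0 : (0 : ℝ) < q := by exact_mod_cast hq
  have hs : 0 < √(q : ℝ) := Real.sqrt_pos.2 hq0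
  refine abs_le_of_sq_le_sq' ?_ (by positivity) |>.2
  refine sq_sum_le_card_mul_sum_sq.trans ?_
  simp only [sq_abs]
  rw [mul_pow, Real.sq_sqrt (Nat.cast_nonneg _), Finset.card_univ]
  refine mul_le_mul_of_nonneg_left ?_ (Nat.cast_nonneg _)
  refine (sum_sq_nbCount_sub_uniform_le hq hconn hbip hG hram v t).trans ?_
  refine pow_le_pow_left₀ (by positivity) ?_ 2
  rw [div_le_div_iff₀ (by positivity) (by positivity), mul_assoc _ (√(q : ℝ) ^ (t + 1)), ← mul_pow,
    Real.mul_self_sqrt hq0.le]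
  refine mul_le_mul_of_nonneg_left ?_ (by positivity)
  rw [pow_succ']
  exact mul_le_mul_of_nonneg_right (by linarith) (by positivity)

end Spectrum

theorem sqrt_div_sqrt_pow_le {q n ε : ℝ} (hq : 1 < q) (hn : 0 < n) (hε : 0 < ε) {t : ℕ}
    (ht : (1 + ε) * (Real.log n / Real.log q) ≤ t) :
    √n / √q ^ t ≤ Real.exp (-(ε * Real.log q / (2 * (1 + ε)) * t)) := by
  have hL : 0 < Real.log q := Real.log_pos hq
  have hq0 : 0 < q := by linarith
  have hlog : Real.log n ≤ t * Real.log q / (1 + ε) := by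
    rw [le_div_iff₀ (by linarith)]
    rw [← mul_div_assoc, div_le_iff₀ hL] at ht
    linarith
  have h0 : 0 < √n / √q ^ t := div_pos (Real.sqrt_pos.2 hn) (pow_pos (Real.sqrt_pos.2 hq0) t)
  rw [← Real.log_le_iff_le_exp h0, Real.log_div (Real.sqrt_pos.2 hn).ne'
    (pow_pos (Real.sqrt_pos.2 hq0) t).ne', Real.log_pow, Real.log_sqrt hn.le, Real.log_sqrt hq0.le]
  have e : -(ε * Real.log q / (2 * (1 + ε)) * t) =
      t * Real.log q / (1 + ε) / 2 - t * (Real.log q / 2) := by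
    field_simp
    ring
  rw [e]
  linarith

theorem exists_forall_mul_exp_neg_le {c δ : ℝ} (hc : 0 < c) (hδ : 0 < δ) :
    ∃ T : ℝ, ∀ t : ℕ, T ≤ t → t * Real.exp (-(c * t)) ≤ δ := by
  have h := (Real.tendsto_pow_mul_exp_neg_atTop_nhds_zero 1).comp
    (Filter.tendsto_id.const_mul_atTop hc)
  have h := (h.eventually_le_const (mul_pos hc hδ)).exists_forall_of_atTop
  obtain ⟨T, hT⟩ := h
  refine ⟨T, fun t ht => ?_⟩
  have := hT t ht
  simp only [Function.comp_apply, id, pow_one, mul_assoc] at this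
  exact le_of_mul_le_mul_left this hc

theorem natCard_isNBPath_eq_nbCount {V : Type*} [Fintype V] (G : SimpleGraph V) (v : V) (t : ℕ)
    (x : V) :
    Nat.card {w : Fin (t + 1) → V // IsNBPath G t v w ∧ w (Fin.last t) = x} =
      nbCount G v t x := by
  classical
  rw [Nat.card_eq_fintype_card, Fintype.card_subtype, nbCount]

/-- **Lubetzky–Peres (NBRW cutoff, upper bound)**: for every `k ≥ 3` and `ε, δ > 0` there
is `N` such that on every finite connected non-bipartite `k`-regular Ramanujan graph on
`n ≥ N` vertices, for every starting vertex `v` and every time `t ≥ (1+ε)·log_{k−1} n`,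
the distribution of the length-`t` non-backtracking random walk from `v` is within total
variation distance `δ` of the uniform distribution. -/
theorem nbrw_cutoff_upper (k : ℕ) (hk : 3 ≤ k) (ε δ : ℝ) (hε : 0 < ε) (hδ : 0 < δ) :
    ∃ N : ℕ, ∀ (V : Type) [Fintype V] [DecidableEq V]
      (G : SimpleGraph V) [DecidableRel G.Adj],
      G.Connected → ¬ G.Colorable 2 → G.IsRegularOfDegree k →
      (∀ lam : ℝ, (∃ x : V → ℝ, x ≠ 0 ∧ G.adjMatrix ℝ *ᵥ x = lam • x) →
        |lam| = (k : ℝ) ∨ |lam| ≤ 2 * Real.sqrt ((k : ℝ) - 1)) →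
      Fintype.card V ≥ N →
      ∀ (v : V) (t : ℕ),
        (t : ℝ) ≥ (1 + ε) * (Real.log (Fintype.card V) / Real.log ((k : ℝ) - 1)) →
        (1 / 2) * ∑ x : V,
            |(Nat.card {w : Fin (t + 1) → V // IsNBPath G t v w ∧ w (Fin.last t) = x} : ℝ)
                / (k * (k - 1 : ℕ) ^ (t - 1))
              - 1 / (Fintype.card V : ℝ)| ≤ δ := by
  obtain ⟨q, rfl⟩ : ∃ q, k = q + 1 := ⟨k - 1, by omega⟩
  have hq : 2 ≤ q := by omega
  have hq1 : (1 : ℝ) < q := by exact_mod_cast hq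
  have hL : 0 < Real.log q := Real.log_pos hq1
  obtain ⟨T, hT⟩ := exists_forall_mul_exp_neg_le
    (c := ε * Real.log q / (2 * (1 + ε))) (by positivity) hδ
  obtain ⟨N, hN⟩ := ((((Real.tendsto_log_atTop.comp tendsto_natCast_atTop_atTop).atTop_div_const
    hL).const_mul_atTop (show 0 < 1 + ε by linarith)).eventually_ge_atTop
      (max T 1)).exists_forall_of_atTop
  refine ⟨N, fun V _ _ G _ hconn hbip hG hram hcard v t ht => ?_⟩
  have hk : ((q + 1 : ℕ) : ℝ) - 1 = q := by push_cast; ring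
  rw [hk] at ht
  simp only [hk] at hram
  have htmax : max T 1 ≤ t := (hN _ hcard).trans ht
  obtain ⟨s, rfl⟩ : ∃ s, t = s + 1 :=
    ⟨t - 1, by have : 1 ≤ t := by exact_mod_cast (le_max_right _ _).trans htmax
               omega⟩
  have hn : (0 : ℝ) < Fintype.card V := by exact_mod_cast Fintype.card_pos_iff.2 ⟨v⟩
  simp only [natCard_isNBPath_eq_nbCount, Nat.add_sub_cancel]
  have hsum := sum_abs_nbCount_sub_uniform_le (by omega) hconn hbip hG hram v s
  have hexp := sqrt_div_sqrt_pow_le hq1 hn hε ht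
  have hle := hT (s + 1) ((le_max_left _ _).trans htmax)
  push_cast at hsum hexp hle ⊢
  calc _ ≤ 1 / 2 * (√(Fintype.card V) * (2 * (s + 1) / √q ^ (s + 1))) :=
        mul_le_mul_of_nonneg_left hsum (by norm_num)
    _ = (s + 1) * (√(Fintype.card V) / √q ^ (s + 1)) := by ring
    _ ≤ _ := (mul_le_mul_of_nonneg_left hexp (by positivity)).trans hle
end

section
/- (2-normality of the non-backtracking digraph) Let X be a finite connected k-regular graph with k ≥ 3, and let B be its non-backtracking matrix, regarded as a complex matrix indexed by the directed edges of X. Then B is unitarily equivalent to a block-diagonal matrix all of whose diagonal blocks have size at most 2; that is, there exists a unitary matrix U such that U* B U is block-diagonal with blocks of size at most 2×2. -/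
theorem LinearMap.IsSymmetric.map_mem_orthogonal {H : Type*} [NormedAddCommGroup H]
    [InnerProductSpace ℂ H] {T : H →ₗ[ℂ] H} (hT : T.IsSymmetric)
    {W : Submodule ℂ H} (hW : ∀ x ∈ W, T x ∈ W) {x : H} (hx : x ∈ Wᗮ) : T x ∈ Wᗮ := by
  rw [Submodule.mem_orthogonal] at hx ⊢
  intro u hu
  rw [← hT]
  exact hx _ (hW u hu)

section TwoInvolutions

variable {H : Type*} [NormedAddCommGroup H] [InnerProductSpace ℂ H] [FiniteDimensional ℂ H]

/-- Two linear involutions of a nonzero finite-dimensional complex space have a common nonzero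
invariant subspace of dimension at most two. -/
theorem exists_invariant_finrank_le_two_of_involutions [Nontrivial H] {J R : H →ₗ[ℂ] H}
    (hJ2 : ∀ x, J (J x) = x) (hR2 : ∀ x, R (R x) = x) :
    ∃ W : Submodule ℂ H, W ≠ ⊥ ∧ Module.finrank ℂ W ≤ 2 ∧
      (∀ x ∈ W, J x ∈ W) ∧ ∀ x ∈ W, R x ∈ W := by
  classical
  obtain ⟨c, hc⟩ := Module.End.exists_eigenvalue (J ∘ₗ R + R ∘ₗ J : Module.End ℂ H)
  obtain ⟨y, hy⟩ := hc.exists_hasEigenvector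
  have hyc : J (R y) + R (J y) = c • y := hy.apply_eq_smul
  obtain ⟨x, ε, hx0, hJx, hxc⟩ : ∃ (x : H) (ε : ℂ), x ≠ 0 ∧ J x = ε • x ∧
      J (R x) + R (J x) = c • x := by
    by_cases h : y + J y = 0
    · exact ⟨y, -1, hy.2, by rw [neg_one_smul]; exact eq_neg_of_add_eq_zero_right h, hyc⟩
    · refine ⟨y + J y, 1, h, by simp [hJ2, add_comm], ?_⟩
      have h2 : J (J (R y) + R (J y)) = c • J y := by rw [hyc, map_smul]
      rw [map_add, hJ2] at h2
      simp only [map_add, hJ2, smul_add]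
      rw [← hyc, ← h2]
      abel
  have hJRx : J (R x) = c • x - ε • R x := by
    rw [← hxc, hJx, map_smul, add_sub_cancel_right]
  refine ⟨Submodule.span ℂ ({x, R x} : Finset H), ?_, ?_, ?_, ?_⟩
  · rw [Submodule.ne_bot_iff]
    exact ⟨x, Submodule.subset_span (by simp), hx0⟩
  · exact (finrank_span_finset_le_card _).trans Finset.card_le_two
  · intro z hz
    simp only [Finset.coe_insert, Finset.coe_singleton, Submodule.mem_span_pair] at hz ⊢
    obtain ⟨a, b, rfl⟩ := hz
    refine ⟨a * ε + b * c, -(b * ε), ?_⟩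
    rw [map_add, map_smul, map_smul, hJx, hJRx]
    module
  · intro z hz
    simp only [Finset.coe_insert, Finset.coe_singleton, Submodule.mem_span_pair] at hz ⊢
    obtain ⟨a, b, rfl⟩ := hz
    exact ⟨b, a, by rw [map_add, map_smul, map_smul, hR2, add_comm]⟩

/-- Two symmetric involutions of a finite-dimensional complex inner product space are
simultaneously block-diagonal, with blocks of size at most two, in some orthonormal basis. -/
theorem exists_orthonormalBasis_blocks_le_two {J R : H →ₗ[ℂ] H}
    (hJ : J.IsSymmetric) (hR : R.IsSymmetric)
    (hJ2 : ∀ x, J (J x) = x) (hR2 : ∀ x, R (R x) = x) :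
    ∃ (ι : Type) (_ : Fintype ι) (v : OrthonormalBasis ι ℂ H) (b : ι → ℕ),
      (∀ i j, b i ≠ b j → inner ℂ (v i) (J (v j)) = 0 ∧ inner ℂ (v i) (J (R (v j))) = 0) ∧
      ∀ n, ∑ i, (if b i = n then 1 else 0) ≤ 2 := by
  induction hn : Module.finrank ℂ H using Nat.strong_induction_on generalizing H with
  | _ n ih =>
  rcases subsingleton_or_nontrivial H with hH | hH
  · refine ⟨_, inferInstance, stdOrthonormalBasis ℂ H, fun _ => 0, by simp, fun n => ?_⟩
    simp [Module.finrank_zero_of_subsingleton]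
  obtain ⟨W, hW0, hW2, hJW, hRW⟩ := exists_invariant_finrank_le_two_of_involutions hJ2 hR2
  have hJW' : ∀ x ∈ Wᗮ, J x ∈ Wᗮ := fun x => hJ.map_mem_orthogonal hJW
  have hRW' : ∀ x ∈ Wᗮ, R x ∈ Wᗮ := fun x => hR.map_mem_orthogonal hRW
  have hlt : Module.finrank ℂ Wᗮ < n := by
    have h1 := W.finrank_add_finrank_orthogonal
    have h2 : Module.finrank ℂ W ≠ 0 := fun h => hW0 (Submodule.finrank_eq_zero.mp h)
    omega
  obtain ⟨ι, _, v, b, hb, hb2⟩ := ih _ hlt (hJ.restrict_invariant hJW')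
    (hR.restrict_invariant hRW') (fun x => Subtype.ext (hJ2 x)) (fun x => Subtype.ext (hR2 x)) rfl
  let w := ((stdOrthonormalBasis ℂ W).prod v).map W.orthogonalDecomposition.symm
  have hwl : ∀ i, w (Sum.inl i) = stdOrthonormalBasis ℂ W i := fun i => by simp [w]
  have hwr : ∀ i, w (Sum.inr i) = v i := fun i => by simp [w]
  refine ⟨_, inferInstance, w, Sum.elim (fun _ => 0) (fun i => b i + 1), ?_, ?_⟩
  · rintro (i | i) (j | j) hij
    · simp at hij
    · rw [hwl, hwr]
      exact ⟨Submodule.inner_right_of_mem_orthogonal (Subtype.prop _) (hJW' _ (v j).2),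
        Submodule.inner_right_of_mem_orthogonal (Subtype.prop _) (hJW' _ (hRW' _ (v j).2))⟩
    · rw [hwl, hwr]
      exact ⟨Submodule.inner_left_of_mem_orthogonal (hJW _ (Subtype.prop _)) (v i).2,
        Submodule.inner_left_of_mem_orthogonal (hJW _ (hRW _ (Subtype.prop _))) (v i).2⟩
    · rw [hwr, hwr]
      exact hb i j (by simpa using hij)
  · rintro (_ | m)
    · rw [Fintype.sum_sum_type]
      simpa using hW2
    · rw [Fintype.sum_sum_type]
      simpa using hb2 m

end TwoInvolutions

/-- A complex matrix of the form `a • (J * R) + c • J`, with `J` and `R` Hermitian involutions,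
is unitarily equivalent to a block-diagonal matrix with blocks of size at most two. -/
theorem Matrix.exists_unitary_blocks_le_two {E : Type*} [Fintype E] [DecidableEq E]
    {J R : Matrix E E ℂ} (hJ : J.IsHermitian) (hR : R.IsHermitian)
    (hJ2 : J * J = 1) (hR2 : R * R = 1) (a c : ℂ) :
    ∃ U ∈ Matrix.unitaryGroup E ℂ, ∃ b : E → E,
      (∀ e f, b e ≠ b f → (star U * (a • (J * R) + c • J) * U) e f = 0) ∧
      ∀ x, Nat.card {e // b e = x} ≤ 2 := by
  obtain ⟨ι, _, v, b, hb, hb2⟩ := exists_orthonormalBasis_blocks_le_two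
    (Matrix.isSymmetric_toEuclideanLin_iff.mpr hJ) (Matrix.isSymmetric_toEuclideanLin_iff.mpr hR)
    (fun x => by simp [Matrix.toLpLin_apply, hJ2]) (fun x => by simp [Matrix.toLpLin_apply, hR2])
  have hcard : Fintype.card ι = Fintype.card E := by
    rw [← Module.finrank_eq_card_basis v.toBasis, finrank_euclideanSpace]
  let σ : ι ≃ E := Fintype.equivOfCardEq hcard
  let w := v.reindex σ
  let U : Matrix E E ℂ := (EuclideanSpace.basisFun E ℂ).toBasis.toMatrix w
  have hU : ∀ e f, U e f = w f e := fun e f => by simp [U, Module.Basis.toMatrix_apply]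
  have key : ∀ (M : Matrix E E ℂ) e f,
      (star U * M * U) e f = inner ℂ (w e) (Matrix.toEuclideanLin M (w f)) := by
    intro M e f
    rw [Matrix.mul_assoc, EuclideanSpace.inner_eq_star_dotProduct, dotProduct_comm]
    simp [Matrix.mul_apply, Matrix.star_apply, hU, dotProduct, Matrix.toLpLin_apply,
      Matrix.mulVec]
  let β : E → E := fun e =>
    Classical.choose (⟨e, rfl⟩ : ∃ e', b (σ.symm e') = b (σ.symm e))
  have hβ : ∀ e, b (σ.symm (β e)) = b (σ.symm e) := fun e =>
    Classical.choose_spec (⟨e, rfl⟩ : ∃ e', b (σ.symm e') = b (σ.symm e))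
  have hβ' : ∀ e f, b (σ.symm e) = b (σ.symm f) → β e = β f := fun e f h => by
    simp only [β, h]
  refine ⟨U, (EuclideanSpace.basisFun E ℂ).toMatrix_orthonormalBasis_mem_unitary w, β, ?_, ?_⟩
  · intro e f hef
    obtain ⟨h1, h2⟩ := hb (σ.symm e) (σ.symm f) (fun h => hef (hβ' e f h))
    rw [key]
    have h3 : Matrix.toEuclideanLin (J * R) (w f) =
        Matrix.toEuclideanLin J (Matrix.toEuclideanLin R (w f)) := by
      simp [Matrix.toLpLin_apply]
    rw [map_add, map_smul, map_smul, LinearMap.add_apply, LinearMap.smul_apply,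
      LinearMap.smul_apply, h3, inner_add_right, inner_smul_right, inner_smul_right]
    simp only [w, OrthonormalBasis.reindex_apply]
    rw [h1, h2]
    simp
  · intro x
    refine le_trans ?_ (hb2 (b (σ.symm x)))
    rw [Finset.sum_boole, Nat.cast_id, ← Fintype.card_subtype, ← Nat.card_eq_fintype_card]
    refine Nat.card_le_card_of_injective
      (fun e => ⟨σ.symm e.1, by rw [← hβ, e.2]⟩) ?_
    intro e f h
    exact Subtype.ext (σ.symm.injective (congrArg Subtype.val h))

/-- **2-normality of the non-backtracking digraph** (Lubetzky–Peres): the non-backtracking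
matrix `B` of a finite connected `k`-regular graph (`k ≥ 3`) is unitarily equivalent to a
block-diagonal matrix all of whose diagonal blocks have size at most `2 × 2` (the blocks
being the fibers of the map `b`). -/
theorem nonbacktracking_two_normal
    {V : Type*} [Fintype V] [DecidableEq V]
    (G : SimpleGraph V) [DecidableRel G.Adj]
    (k : ℕ) (hk : 3 ≤ k)
    (hconn : G.Connected) (hreg : G.IsRegularOfDegree k)
    (B : Matrix {e : V × V // G.Adj e.1 e.2} {e : V × V // G.Adj e.1 e.2} ℂ)
    (hB : ∀ e f : {e : V × V // G.Adj e.1 e.2},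
      B e f = if e.1.2 = f.1.1 ∧ f.1.2 ≠ e.1.1 then 1 else 0) :
    ∃ U ∈ Matrix.unitaryGroup {e : V × V // G.Adj e.1 e.2} ℂ,
      ∃ b : {e : V × V // G.Adj e.1 e.2} → {e : V × V // G.Adj e.1 e.2},
        (∀ e f : {e : V × V // G.Adj e.1 e.2}, b e ≠ b f → (star U * B * U) e f = 0) ∧
        ∀ x : {e : V × V // G.Adj e.1 e.2}, Nat.card {e // b e = x} ≤ 2 := by
  have hk0 : (k : ℂ) ≠ 0 := by
    rw [Nat.cast_ne_zero]
    omega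
  let E := {e : V × V // G.Adj e.1 e.2}
  let s : E → E := fun e => ⟨e.1.swap, e.2.symm⟩
  have hs : ∀ e, s (s e) = e := fun e => rfl
  have hs' : ∀ e f, e = s f ↔ f = s e := fun e f =>
    ⟨fun h => by rw [h, hs], fun h => by rw [h, hs]⟩
  let J : Matrix E E ℂ := Matrix.of fun e f => if f = s e then 1 else 0
  let Q : Matrix E E ℂ := Matrix.of fun e f => if e.1.1 = f.1.1 then 1 else 0
  have hJ : J.IsHermitian := by
    ext e f
    simp only [J, Matrix.conjTranspose_apply, Matrix.of_apply, hs' e f]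
    split_ifs <;> simp
  have hQ : Q.IsHermitian := by
    ext e f
    simp only [Q, Matrix.conjTranspose_apply, Matrix.of_apply, eq_comm (a := e.1.1)]
    split_ifs <;> simp
  have hJmul : ∀ (M : Matrix E E ℂ) e f, (J * M) e f = M (s e) f := fun M e f => by
    simp [J, Matrix.mul_apply]
  have hJ2 : J * J = 1 := by
    ext e f
    rw [hJmul]
    simp [J, Matrix.one_apply, hs, eq_comm]
  have hdeg : ∀ u : V, (Finset.univ.filter fun e : E => e.1.1 = u).card = k := by
    intro u
    rw [← hreg u, ← SimpleGraph.card_neighborFinset_eq_degree]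
    refine Finset.card_bij (fun e _ => e.1.2) ?_ ?_ ?_
    · rintro ⟨⟨a, c⟩, h⟩ he
      simp only [Finset.mem_filter, Finset.mem_univ, true_and] at he
      subst he
      simpa using h
    · rintro ⟨⟨a, c⟩, h⟩ he ⟨⟨a', c'⟩, h'⟩ he' hcc
      simp_all
    · intro c hc
      exact ⟨⟨(u, c), by simpa using hc⟩, by simp, rfl⟩
  have hQ2 : Q * Q = (k : ℂ) • Q := by
    ext e f
    simp only [Q, Matrix.mul_apply, Matrix.of_apply, Matrix.smul_apply, smul_eq_mul]
    by_cases h : e.1.1 = f.1.1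
    · rw [if_pos h, mul_one, ← hdeg f.1.1, ← Finset.sum_boole]
      refine Finset.sum_congr rfl fun g _ => ?_
      simp [h, eq_comm]
    · rw [if_neg h, mul_zero]
      refine Finset.sum_eq_zero fun g _ => ?_
      split_ifs <;> simp_all
  let R : Matrix E E ℂ := (2 / k : ℂ) • Q - 1
  have hR : R.IsHermitian := by
    refine Matrix.IsHermitian.sub ?_ Matrix.isHermitian_one
    rw [Matrix.IsHermitian, Matrix.conjTranspose_smul, hQ.eq]
    simp
  have hR2 : R * R = 1 := by
    have h : R * R = ((2 / k : ℂ) * (2 / k) * k - 2 * (2 / k)) • Q + 1 := by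
      simp only [R, sub_mul, mul_sub, smul_mul_assoc, mul_smul_comm, hQ2, mul_one, one_mul]
      module
    rw [h, show (2 / k : ℂ) * (2 / k) * k - 2 * (2 / k) = 0 by field_simp; ring]
    simp
  have hBJ : B = (k / 2 : ℂ) • (J * R) + (k / 2 - 1 : ℂ) • J := by
    have h : (k / 2 : ℂ) • (J * R) + (k / 2 - 1 : ℂ) • J = J * (Q - 1) := by
      simp only [R, mul_sub, mul_smul_comm, smul_sub, smul_smul, mul_one]
      rw [show (k / 2 * (2 / k) : ℂ) = 1 by field_simp]
      module
    rw [h]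
    ext e f
    rw [hB, hJmul]
    obtain ⟨⟨a, c⟩, hac⟩ := e
    obtain ⟨⟨a', c'⟩, hac'⟩ := f
    simp only [Q, s, Matrix.sub_apply, Matrix.of_apply, Matrix.one_apply, Prod.swap_prod_mk,
      Subtype.mk.injEq, Prod.mk.injEq]
    by_cases h1 : c = a' <;> by_cases h2 : a = c' <;> simp [h1, h2, Ne.symm]
  rw [hBJ]
  exact Matrix.exists_unitary_blocks_le_two hJ hR hJ2 hR2 _ _
end

section
/- (de la Harpe) Let k ≥ 2, let F_k be the free group on generators g₁, …, g_k, and let T be the bounded operator on ℓ²(F_k) defined by (Tf)(x) = Σ_{i=1}^{k} f(g_i x). Then the spectrum of T equals the closed disk {z ∈ ℂ : |z| ≤ √k}. -/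
open scoped ENNReal NNReal

namespace FreeGroup

variable {α : Type*} [DecidableEq α]

theorem toWord_of_mul_of_head? {i : α} {x : FreeGroup α}
    (h : x.toWord.head? ≠ some (i, false)) : (of i * x).toWord = (i, true) :: x.toWord := by
  rw [toWord_mul, toWord_of, List.singleton_append, reduce.cons, reduce_toWord]
  cases hx : x.toWord with
  | nil => rfl
  | cons b l =>
    obtain ⟨j, b⟩ := b
    refine if_neg ?_
    rintro ⟨rfl, hb⟩
    simp_all

theorem toWord_eq_cons_of_head? {i : α} {x : FreeGroup α}
    (h : x.toWord.head? = some (i, false)) : x.toWord = (i, false) :: (of i * x).toWord := by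
  rw [toWord_mul, toWord_of, List.singleton_append, reduce.cons, reduce_toWord]
  cases hx : x.toWord with
  | nil => simp [hx] at h
  | cons b l =>
    obtain rfl : b = (i, false) := by simpa [hx] using h
    simp

theorem getLast?_toWord_of_inv {i j : α} :
    ((of j)⁻¹ : FreeGroup α).toWord.getLast? = some (i, false) ↔ j = i := by
  simp [toWord_inv, invRev]

theorem getLast?_toWord_of_mul {i j : α} {x : FreeGroup α} (hx : x ≠ (of j)⁻¹) :
    (of j * x).toWord.getLast? = some (i, false) ↔ x.toWord.getLast? = some (i, false) := by
  by_cases h : x.toWord.head? = some (j, false)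
  · have hne : (of j * x).toWord ≠ [] := by
      rw [Ne, toWord_eq_nil_iff]
      rintro h1
      exact hx (eq_inv_of_mul_eq_one_right h1)
    rw [toWord_eq_cons_of_head? h]
    obtain ⟨b, l, hb⟩ := List.exists_cons_of_ne_nil hne
    simp [hb, List.getLast?_cons_cons]
  · rw [toWord_of_mul_of_head? h]
    cases hw : x.toWord with
    | nil => simp
    | cons b l => simp [List.getLast?_cons_cons]

theorem getLast?_toWord_of_mul_of_ne {i : α} {x : FreeGroup α} (hx : x ≠ (of i)⁻¹) (j : α) :
    (of j * x).toWord.getLast? = some (i, false) ↔ x.toWord.getLast? = some (i, false) := by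
  by_cases hj : x = (of j)⁻¹
  · subst hj
    have hji : j ≠ i := by rintro rfl; exact hx rfl
    simp only [mul_inv_cancel, toWord_one, getLast?_toWord_of_inv, hji]
    simp
  · exact getLast?_toWord_of_mul hj

end FreeGroup

section SquareSummable

variable {G : Type*}

theorem memℓp_two_iff_tsum_enorm {f : G → ℂ} : Memℓp f 2 ↔ ∑' x, ‖f x‖ₑ ^ 2 ≠ ∞ := by
  rw [memℓp_gen_iff (by norm_num)]
  have h : ∀ x, ‖f x‖ₑ ^ 2 = ((‖f x‖₊ ^ 2 : ℝ≥0) : ℝ≥0∞) := fun x => by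
    simp [enorm_eq_nnnorm]
  simp_rw [h, ENNReal.tsum_coe_ne_top_iff_summable, ← NNReal.summable_coe]
  simp

theorem lp.ofReal_norm_sq (f : lp (fun _ : G => ℂ) 2) :
    ENNReal.ofReal (‖f‖ ^ 2) = ∑' x, ‖f x‖ₑ ^ 2 := by
  have h := lp.norm_rpow_eq_tsum (p := 2) (by norm_num) f
  have hs := (memℓp_gen_iff (p := 2) (by norm_num)).1 f.2
  simp only [ENNReal.toReal_ofNat, Real.rpow_ofNat] at h hs
  rw [h, ENNReal.ofReal_tsum_of_nonneg (fun _ => by positivity) hs]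
  refine tsum_congr fun x => ?_
  rw [ENNReal.ofReal_pow (norm_nonneg _), ofReal_norm]

theorem Memℓp.comp_injective_two {H : Type*} {f : G → ℂ} (hf : Memℓp f 2) {φ : H → G}
    (hφ : Function.Injective φ) : Memℓp (fun x => f (φ x)) 2 := by
  rw [memℓp_two_iff_tsum_enorm] at *
  exact ne_top_of_le_ne_top hf
    (ENNReal.tsum_comp_le_tsum_of_injective hφ fun x => ‖f x‖ₑ ^ 2)

theorem Memℓp.ite_zero_two {f : G → ℂ} (hf : Memℓp f 2) (p : G → Prop) [DecidablePred p] :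
    Memℓp (fun x => if p x then f x else 0) 2 := by
  rw [memℓp_two_iff_tsum_enorm] at *
  refine ne_top_of_le_ne_top hf (ENNReal.tsum_le_tsum fun x => ?_)
  split_ifs <;> simp

theorem LinearMap.exists_lp_two_continuousLinearMap (K : (G → ℂ) →ₗ[ℂ] (G → ℂ)) (k : ℕ)
    (h : ∀ f : G → ℂ, ∑' x, ‖K f x‖ₑ ^ 2 ≤ k * ∑' x, ‖f x‖ₑ ^ 2) :
    ∃ T : lp (fun _ : G => ℂ) 2 →L[ℂ] lp (fun _ : G => ℂ) 2,
      (∀ f x, T f x = K f x) ∧ ‖T‖ ≤ Real.sqrt k := by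
  have hmem : ∀ f : lp (fun _ : G => ℂ) 2, Memℓp (K f) 2 := fun f =>
    memℓp_two_iff_tsum_enorm.2 <| ne_top_of_le_ne_top
      (ENNReal.mul_ne_top (by simp) (memℓp_two_iff_tsum_enorm.1 f.2)) (h f)
  let L : lp (fun _ : G => ℂ) 2 →ₗ[ℂ] lp (fun _ : G => ℂ) 2 :=
    { toFun := fun f => ⟨K f, hmem f⟩
      map_add' := fun f g => by
        ext x
        exact congrFun (K.map_add f g) x
      map_smul' := fun c f => by
        ext x
        simp }
  have hL : ∀ f, ‖L f‖ ≤ Real.sqrt k * ‖f‖ := fun f => by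
    have h1 := h f
    have h2 := lp.ofReal_norm_sq (L f)
    change _ = ∑' x, ‖K f x‖ₑ ^ 2 at h2
    rw [← h2, ← lp.ofReal_norm_sq, ← ENNReal.ofReal_natCast,
      ← ENNReal.ofReal_mul (by positivity), ENNReal.ofReal_le_ofReal_iff (by positivity)] at h1
    refine le_of_sq_le_sq ?_ (by positivity)
    rwa [mul_pow, Real.sq_sqrt (by positivity)]
  exact ⟨L.mkContinuous _ hL, fun f x => rfl, L.mkContinuous_norm_le (by positivity) hL⟩

end SquareSummable

section Shift

variable {G ι : Type*} [Group G] [Fintype ι]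

/-- The operator `f ↦ (x ↦ ∑ i, f (gᵢ x))`, where the sum runs over the `i` with `S i x`. -/
def restrictedShift (g : ι → G) (S : ι → G → Prop) [∀ i x, Decidable (S i x)] :
    (G → ℂ) →ₗ[ℂ] (G → ℂ) where
  toFun f x := ∑ i, if S i x then f (g i * x) else 0
  map_add' f f' := by
    ext x
    simp only [Pi.add_apply, ← Finset.sum_add_distrib]
    exact Finset.sum_congr rfl fun i _ => by split_ifs <;> simp
  map_smul' c f := by
    ext x
    simp [Finset.mul_sum]

variable (g : ι → G) (S : ι → G → Prop) [∀ i x, Decidable (S i x)]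

theorem restrictedShift_apply (f : G → ℂ) (x : G) :
    restrictedShift g S f x = ∑ i, if S i x then f (g i * x) else 0 := rfl

theorem tsum_enorm_restrictedShift_le_of_source (hS : ∀ i j x, S i x → S j x → i = j)
    (f : G → ℂ) :
    ∑' x, ‖restrictedShift g S f x‖ₑ ^ 2 ≤ (Fintype.card ι : ℕ) * ∑' x, ‖f x‖ₑ ^ 2 := by
  have hpt : ∀ x, ‖restrictedShift g S f x‖ₑ ^ 2 ≤ ∑ i, ‖f (g i * x)‖ₑ ^ 2 := fun x => by
    rw [restrictedShift_apply]
    by_cases h : ∃ i, S i x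
    · obtain ⟨i, hi⟩ := h
      rw [Finset.sum_eq_single i (fun j _ hj => if_neg fun hjx => hj (hS _ _ _ hjx hi))
        (by simp), if_pos hi]
      exact Finset.single_le_sum (f := fun i => ‖f (g i * x)‖ₑ ^ 2) (by simp)
        (Finset.mem_univ i)
    · push Not at h
      simp [h]
  calc _ ≤ ∑' x, ∑ i, ‖f (g i * x)‖ₑ ^ 2 := ENNReal.tsum_le_tsum hpt
    _ = ∑ i, ∑' x, ‖f (g i * x)‖ₑ ^ 2 :=
      Summable.tsum_finsetSum fun _ _ => ENNReal.summable
    _ = ∑ _i : ι, ∑' x, ‖f x‖ₑ ^ 2 := Finset.sum_congr rfl fun i _ =>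
      (Equiv.mulLeft (g i)).tsum_eq fun x => ‖f x‖ₑ ^ 2
    _ = _ := by simp

theorem tsum_enorm_restrictedShift_le_of_target
    (hS : ∀ i j x, S i ((g i)⁻¹ * x) → S j ((g j)⁻¹ * x) → i = j) (f : G → ℂ) :
    ∑' x, ‖restrictedShift g S f x‖ₑ ^ 2 ≤ (Fintype.card ι : ℕ) * ∑' x, ‖f x‖ₑ ^ 2 := by
  have hpt : ∀ x, ‖restrictedShift g S f x‖ₑ ^ 2 ≤
      (Fintype.card ι : ℕ) * ∑ i, if S i x then ‖f (g i * x)‖ₑ ^ 2 else 0 := fun x => by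
    rw [restrictedShift_apply]
    have h1 : ‖∑ i, if S i x then f (g i * x) else 0‖₊ ^ 2 ≤
        (Fintype.card ι : ℕ) * ∑ i, ‖if S i x then f (g i * x) else 0‖₊ ^ 2 :=
      (pow_le_pow_left₀ zero_le (nnnorm_sum_le _ _) 2).trans sq_sum_le_card_mul_sum_sq
    have h2 : ∀ i, (if S i x then ‖f (g i * x)‖ₑ ^ 2 else 0) =
        ((‖if S i x then f (g i * x) else 0‖₊ ^ 2 : ℝ≥0) : ℝ≥0∞) := fun i => by
      split_ifs <;> simp [enorm_eq_nnnorm]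
    simp_rw [h2, enorm_eq_nnnorm]
    exact_mod_cast h1
  have hcol : ∀ x, (∑ i, if S i ((g i)⁻¹ * x) then ‖f x‖ₑ ^ 2 else 0) ≤ ‖f x‖ₑ ^ 2 := fun x => by
    by_cases h : ∃ i, S i ((g i)⁻¹ * x)
    · obtain ⟨i, hi⟩ := h
      rw [Finset.sum_eq_single i (fun j _ hj => if_neg fun hjx => hj (hS _ _ _ hjx hi))
        (by simp), if_pos hi]
    · push Not at h
      simp [h]
  calc _ ≤ ∑' x, (Fintype.card ι : ℕ) * ∑ i, (if S i x then ‖f (g i * x)‖ₑ ^ 2 else 0) :=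
      ENNReal.tsum_le_tsum hpt
    _ = (Fintype.card ι : ℕ) * ∑ i, ∑' x, (if S i x then ‖f (g i * x)‖ₑ ^ 2 else 0) := by
      rw [ENNReal.tsum_mul_left, Summable.tsum_finsetSum fun _ _ => ENNReal.summable]
    _ = (Fintype.card ι : ℕ) * ∑ i, ∑' x, (if S i ((g i)⁻¹ * x) then ‖f x‖ₑ ^ 2 else 0) := by
      congr 1
      refine Finset.sum_congr rfl fun i _ => ?_
      rw [← (Equiv.mulLeft (g i)).tsum_eq
        fun x => if S i ((g i)⁻¹ * x) then ‖f x‖ₑ ^ 2 else 0]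
      simp
    _ = (Fintype.card ι : ℕ) * ∑' x, ∑ i, (if S i ((g i)⁻¹ * x) then ‖f x‖ₑ ^ 2 else 0) := by
      rw [Summable.tsum_finsetSum fun _ _ => ENNReal.summable]
    _ ≤ _ := by
      gcongr with x
      exact hcol x

end Shift

namespace FreeGroup

section Resolvent

variable {α : Type*} [DecidableEq α] [Fintype α] {z : ℂ} {u : FreeGroup α → ℂ}

/-- The part of the column `u` of the resolvent supported on words ending in `i⁻¹`. -/
theorem resolvent_end_eq
    (hinj : ∀ v : FreeGroup α → ℂ, Memℓp v 2 → (∀ x, z * v x - ∑ j, v (of j * x) = 0) → v = 0)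
    (hu : Memℓp u 2) (hres : ∀ x, z * u x - ∑ j, u (of j * x) = if x = 1 then 1 else 0)
    (i : α) (x : FreeGroup α) :
    (if x.toWord.getLast? = some (i, false) then u x else 0) = u 1 * u (x * of i) := by
  have key := hinj
    (fun x => (if x.toWord.getLast? = some (i, false) then u x else 0) - u 1 * u (x * of i))
    ((hu.ite_zero_two _).sub
      ((hu.comp_injective_two (mul_left_injective (of i))).const_mul (u 1))) fun x => ?_
  · exact sub_eq_zero.1 (congrFun key x)
  simp only [Finset.sum_sub_distrib, ← Finset.mul_sum]
  have hR := hres (x * of i)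
  simp only [← mul_assoc] at hR
  have hL := hres x
  by_cases hx : x = (of i)⁻¹
  · subst hx
    have hs : ∑ j, (if (of j * (of i)⁻¹ : FreeGroup α).toWord.getLast? = some (i, false)
        then u (of j * (of i)⁻¹) else 0) = ∑ j, u (of j * (of i)⁻¹) - u 1 := by
      rw [← Finset.add_sum_erase _ _ (Finset.mem_univ i),
        ← Finset.add_sum_erase _ (fun j => u (of j * (of i)⁻¹)) (Finset.mem_univ i)]
      rw [Finset.sum_congr rfl fun j hj => if_pos ((getLast?_toWord_of_mul ?_).2 ?_)]
      · simp
      · simpa [of_injective.eq_iff, eq_comm] using hj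
      · exact getLast?_toWord_of_inv.2 rfl
    rw [hs, if_pos (getLast?_toWord_of_inv.2 rfl)]
    simp only [inv_mul_cancel, inv_mul_cancel_right, if_true] at hR ⊢
    simp at hL
    linear_combination hL - u 1 * hR
  · have hx1 : x * of i ≠ 1 := fun h => hx (eq_inv_of_mul_eq_one_left h)
    rw [if_neg hx1] at hR
    simp only [getLast?_toWord_of_mul_of_ne hx]
    by_cases hq : x.toWord.getLast? = some (i, false)
    · have hx0 : x ≠ 1 := by rintro rfl; simp at hq
      simp only [hq, if_true]
      rw [if_neg hx0] at hL
      linear_combination hL - u 1 * hR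
    · simp only [hq, if_false]
      simp only [Finset.sum_const_zero]
      linear_combination - u 1 * hR

/-- The part of the translated column supported on words not ending in `i⁻¹`. -/
theorem resolvent_not_end_eq
    (hinj : ∀ v : FreeGroup α → ℂ, Memℓp v 2 → (∀ x, z * v x - ∑ j, v (of j * x) = 0) → v = 0)
    (hu : Memℓp u 2) (hres : ∀ x, z * u x - ∑ j, u (of j * x) = if x = 1 then 1 else 0)
    (i : α) (x : FreeGroup α) :
    (if ¬ x.toWord.getLast? = some (i, false) then u (x * of i) else 0) =
      - u (of i) * u (x * of i) := by
  have hu' := hu.comp_injective_two (mul_left_injective (of i))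
  have key := hinj
    (fun x => (if ¬ x.toWord.getLast? = some (i, false) then u (x * of i) else 0)
      - (- u (of i)) * u (x * of i))
    ((hu'.ite_zero_two _).sub (hu'.const_mul (- u (of i)))) fun x => ?_
  · exact sub_eq_zero.1 (congrFun key x)
  simp only [Finset.sum_sub_distrib, ← Finset.mul_sum]
  have hR := hres (x * of i)
  simp only [← mul_assoc] at hR
  by_cases hx : x = (of i)⁻¹
  · subst hx
    have hs : ∑ j, (if ¬ (of j * (of i)⁻¹ : FreeGroup α).toWord.getLast? = some (i, false)
        then u (of j * (of i)⁻¹ * of i) else 0) = u (of i) := by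
      rw [Finset.sum_eq_single i]
      · simp
      · intro j _ hj
        refine if_neg (not_not.2 ((getLast?_toWord_of_mul ?_).2 ?_))
        · simpa [of_injective.eq_iff, eq_comm] using hj
        · exact getLast?_toWord_of_inv.2 rfl
      · simp
    rw [hs, if_neg (not_not.2 (getLast?_toWord_of_inv.2 rfl))]
    simp only [inv_mul_cancel, inv_mul_cancel_right, if_true] at hR ⊢
    linear_combination u (of i) * hR
  · have hx1 : x * of i ≠ 1 := fun h => hx (eq_inv_of_mul_eq_one_left h)
    rw [if_neg hx1] at hR
    simp only [getLast?_toWord_of_mul_of_ne hx]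
    by_cases hq : x.toWord.getLast? = some (i, false)
    · simp only [hq, not_true_eq_false, if_false, Finset.sum_const_zero]
      linear_combination u (of i) * hR
    · simp only [hq, not_false_eq_true, if_true]
      linear_combination (1 + u (of i)) * hR

theorem resolvent_comp_perm
    (hinj : ∀ v : FreeGroup α → ℂ, Memℓp v 2 → (∀ x, z * v x - ∑ j, v (of j * x) = 0) → v = 0)
    (hu : Memℓp u 2) (hres : ∀ x, z * u x - ∑ j, u (of j * x) = if x = 1 then 1 else 0)
    (σ : Equiv.Perm α) (x : FreeGroup α) : u (freeGroupCongr σ x) = u x := by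
  have key := hinj (fun x => u (freeGroupCongr σ x) - u x)
    ((hu.comp_injective_two (freeGroupCongr σ).injective).sub hu) fun x => ?_
  · exact sub_eq_zero.1 (congrFun key x)
  have h1 := hres (freeGroupCongr σ x)
  have h2 := hres x
  rw [← Equiv.sum_comp σ] at h1
  have h3 : ∀ j, of (σ j) * freeGroupCongr σ x = freeGroupCongr σ (of j * x) := fun j => by
    simp
  simp only [h3, EmbeddingLike.map_eq_one_iff] at h1
  rw [Finset.sum_sub_distrib]
  linear_combination h1 - h2

theorem mul_resolvent_one_eq_one [Nontrivial α]
    (hinj : ∀ v : FreeGroup α → ℂ, Memℓp v 2 → (∀ x, z * v x - ∑ j, v (of j * x) = 0) → v = 0)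
    (hu : Memℓp u 2) (hres : ∀ x, z * u x - ∑ j, u (of j * x) = if x = 1 then 1 else 0) :
    z * u 1 = 1 := by
  obtain ⟨i, -, -⟩ := exists_pair_ne α
  have hconst : ∀ j, u (of j) = u (of i) := fun j => by
    simpa using resolvent_comp_perm hinj hu hres (Equiv.swap i j) (of i)
  have hend : 0 = u 1 * u (of i) := by simpa using resolvent_end_eq hinj hu hres i 1
  have hnot : u (of i) = - u (of i) * u (of i) := by
    simpa using resolvent_not_end_eq hinj hu hres i 1
  have h1 : z * u 1 - Fintype.card α * u (of i) = 1 := by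
    simpa [hconst] using hres 1
  by_cases h0 : u (of i) = 0
  · simpa [h0] using h1
  · exfalso
    have hm : u (of i) = -1 := by
      apply mul_left_cancel₀ h0
      linear_combination hnot
    have ha : u 1 = 0 := by
      rcases mul_eq_zero.1 hend.symm with h | h
      exacts [h, absurd h h0]
    rw [hm, ha] at h1
    have h2 : (Fintype.card α : ℂ) = 1 := by linear_combination h1
    have h3 := Fintype.one_lt_card (α := α)
    have h4 : Fintype.card α = 1 := by exact_mod_cast h2
    omega

theorem card_lt_norm_sq_of_resolvent [Nontrivial α]
    (hinj : ∀ v : FreeGroup α → ℂ, Memℓp v 2 → (∀ x, z * v x - ∑ j, v (of j * x) = 0) → v = 0)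
    (hu : Memℓp u 2) (hres : ∀ x, z * u x - ∑ j, u (of j * x) = if x = 1 then 1 else 0) :
    (Fintype.card α : ℝ) < ‖z‖ ^ 2 := by
  have ha := mul_resolvent_one_eq_one hinj hu hres
  have ha0 : u 1 ≠ 0 := right_ne_zero_of_mul_eq_one ha
  set s := ∑' x, ‖u x‖ₑ ^ 2 with hs
  have hs_top : s ≠ ∞ := memℓp_two_iff_tsum_enorm.1 hu
  have hpt : ∀ x, (if x = 1 then ‖u x‖ₑ ^ 2 else 0) + ∑ i, ‖u 1 * u (x * of i)‖ₑ ^ 2 ≤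
      ‖u x‖ₑ ^ 2 := fun x => by
    simp_rw [← resolvent_end_eq hinj hu hres]
    by_cases h : ∃ i, x.toWord.getLast? = some (i, false)
    · obtain ⟨i, hi⟩ := h
      have hx : x ≠ 1 := by rintro rfl; simp at hi
      rw [if_neg hx, zero_add, Finset.sum_eq_single i _ (by simp), if_pos hi]
      intro j _ hj
      simp [hi, hj.symm]
    · push Not at h
      simp only [h, if_false]
      split_ifs <;> simp
  have hsum : ‖u 1‖ₑ ^ 2 + Fintype.card α * (‖u 1‖ₑ ^ 2 * s) ≤ s := by
    calc _ = ∑' x, ((if x = 1 then ‖u x‖ₑ ^ 2 else 0) + ∑ i, ‖u 1 * u (x * of i)‖ₑ ^ 2) := by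
          rw [ENNReal.tsum_add, tsum_ite_eq, Summable.tsum_finsetSum fun _ _ => ENNReal.summable]
          have : ∀ i : α, ∑' x, ‖u 1 * u (x * of i)‖ₑ ^ 2 = ‖u 1‖ₑ ^ 2 * s := fun i => by
            simp_rw [enorm_mul, mul_pow, ENNReal.tsum_mul_left]
            rw [hs, ← (Equiv.mulRight (of i)).tsum_eq fun x => ‖u x‖ₑ ^ 2]
            simp
          simp_rw [this]
          simp
      _ ≤ s := ENNReal.tsum_le_tsum hpt
  lift s to ℝ≥0 using hs_top with t
  rw [enorm_eq_nnnorm] at hsum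
  have hsum' : ‖u 1‖ ^ 2 + Fintype.card α * (‖u 1‖ ^ 2 * t) ≤ t := by exact_mod_cast hsum
  have hpos : 0 < ‖u 1‖ := norm_pos_iff.2 ha0
  have hz : ‖z‖ * ‖u 1‖ = 1 := by rw [← norm_mul, ha, NormOneClass.norm_one]
  have ht : (0 : ℝ) ≤ t := t.2
  by_contra! hle
  have h1 : 1 ≤ Fintype.card α * ‖u 1‖ ^ 2 := by
    calc 1 = ‖z‖ ^ 2 * ‖u 1‖ ^ 2 := by rw [← mul_pow, hz, one_pow]
      _ ≤ _ := by gcongr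
  nlinarith [mul_le_mul_of_nonneg_right h1 ht, pow_pos hpos 2]

end Resolvent

end FreeGroup

theorem isUnit_algebraMap_sub_of_norm_lt {E : Type*} [NormedAddCommGroup E] [NormedSpace ℂ E]
    [CompleteSpace E] {T : E →L[ℂ] E} {z : ℂ} (h : ‖T‖ < ‖z‖) :
    IsUnit (algebraMap ℂ (E →L[ℂ] E) z - T) := by
  by_contra hz
  refine h.not_ge ((spectrum.norm_le_norm_mul_of_mem (spectrum.mem_iff.2 hz)).trans ?_)
  exact mul_le_of_le_one_right (norm_nonneg _) ContinuousLinearMap.norm_id_le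

/-- **de la Harpe**: the operator `(Tf)(x) = ∑ᵢ f(gᵢx)` on `ℓ²(F_k)`, where `g₁, …, g_k`
are the free generators of the free group `F_k` (`k ≥ 2`), has spectrum equal to the
closed disk `{z ∈ ℂ : |z| ≤ √k}`. -/
theorem de_la_harpe_spectrum (k : ℕ) (hk : 2 ≤ k) :
    ∃ T : lp (fun _ : FreeGroup (Fin k) => ℂ) 2 →L[ℂ] lp (fun _ : FreeGroup (Fin k) => ℂ) 2,
      (∀ (f : lp (fun _ : FreeGroup (Fin k) => ℂ) 2) (x : FreeGroup (Fin k)),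
        (T f : ∀ _ : FreeGroup (Fin k), ℂ) x
          = ∑ i : Fin k, (f : ∀ _ : FreeGroup (Fin k), ℂ) (FreeGroup.of i * x)) ∧
      spectrum ℂ T = Metric.closedBall (0 : ℂ) (Real.sqrt k) := by
  have : Nontrivial (Fin k) := Fin.nontrivial_iff_two_le.2 hk
  obtain ⟨C, hC, hC_norm⟩ := (restrictedShift (FreeGroup.of (α := Fin k))
    fun i x => x.toWord.head? = some (i, false)).exists_lp_two_continuousLinearMap k <| by
      simpa using tsum_enorm_restrictedShift_le_of_source (FreeGroup.of (α := Fin k))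
        (fun i x => x.toWord.head? = some (i, false)) fun i j x hi hj => by simpa [hi] using hj
  obtain ⟨D, hD, hD_norm⟩ := (restrictedShift (FreeGroup.of (α := Fin k))
    fun i x => ¬ x.toWord.head? = some (i, false)).exists_lp_two_continuousLinearMap k <| by
      simpa using tsum_enorm_restrictedShift_le_of_target (FreeGroup.of (α := Fin k))
        (fun i x => ¬ x.toWord.head? = some (i, false)) fun i j x hi hj => by
          have h1 := FreeGroup.toWord_of_mul_of_head? hi
          have h2 := FreeGroup.toWord_of_mul_of_head? hj
          rw [mul_inv_cancel_left] at h1 h2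
          rw [h1] at h2
          simp_all
  have hT : ∀ (f : lp (fun _ : FreeGroup (Fin k) => ℂ) 2) (x : FreeGroup (Fin k)),
      (C + D) f x = ∑ i : Fin k, f (FreeGroup.of i * x) := fun f x => by
    change C f x + D f x = _
    rw [hC, hD, restrictedShift_apply, restrictedShift_apply, ← Finset.sum_add_distrib]
    exact Finset.sum_congr rfl fun i _ => by split_ifs <;> simp
  have hDC : D * C = 0 := by
    ext f x
    change D (C f) x = 0
    rw [hD, restrictedShift_apply]
    refine Finset.sum_eq_zero fun i _ => ?_
    split_ifs with hi
    · rfl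
    rw [hC, restrictedShift_apply, FreeGroup.toWord_of_mul_of_head? hi]
    simp
  refine ⟨C + D, hT, Set.ext fun z => ?_⟩
  rw [mem_closedBall_zero_iff, spectrum.mem_iff, not_iff_comm, not_le]
  constructor
  · intro hz
    have hz0 : z ≠ 0 := norm_pos_iff.1 ((Real.sqrt_nonneg _).trans_lt hz)
    have hprod := (isUnit_algebraMap_sub_of_norm_lt (hD_norm.trans_lt hz)).mul
      (isUnit_algebraMap_sub_of_norm_lt (hC_norm.trans_lt hz))
    have hfac : (algebraMap ℂ _ z - D) * (algebraMap ℂ _ z - C) =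
        Units.mk0 z hz0 • (algebraMap ℂ _ z - (C + D)) := by
      rw [Units.smul_def, Units.val_mk0, Algebra.smul_def, sub_mul, mul_sub, mul_sub, hDC,
        ← Algebra.commutes z D, mul_sub, mul_add]
      abel
    rwa [hfac, isUnit_smul_iff] at hprod
  · intro hunit
    have hbij := ContinuousLinearMap.isUnit_iff_bijective.1 hunit
    obtain ⟨u, hu⟩ := hbij.2 (lp.single 2 1 1)
    have happ : ∀ (v : lp (fun _ : FreeGroup (Fin k) => ℂ) 2) x,
        (algebraMap ℂ (lp (fun _ : FreeGroup (Fin k) => ℂ) 2 →L[ℂ]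
          lp (fun _ : FreeGroup (Fin k) => ℂ) 2) z - (C + D)) v x =
          z * v x - ∑ j, v (FreeGroup.of j * x) := fun v x => by
      rw [← hT]
      rfl
    have hlt := FreeGroup.card_lt_norm_sq_of_resolvent (z := z)
      (fun v hv h => by
        have h0 : (⟨v, hv⟩ : lp (fun _ : FreeGroup (Fin k) => ℂ) 2) = 0 := by
          refine hbij.1 ?_
          rw [map_zero]
          ext x
          rw [happ]
          exact h x
        exact congrArg (fun w : lp (fun _ : FreeGroup (Fin k) => ℂ) 2 => (w : _ → ℂ)) h0)
      (lp.memℓp u) fun x => by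
        rw [← happ, hu, lp.single_apply, Pi.single_apply]
    rw [Fintype.card_fin] at hlt
    exact Real.sqrt_lt_sqrt (Nat.cast_nonneg k) hlt |>.trans_eq (Real.sqrt_sq (norm_nonneg z))
end
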